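/- arXiv:math/0002034 — 3 statements merged into one kernel-verified Lean document; each statement's English description precedes it below -/
import Mathlib

section
/- For every M ≥ 1 there is a constant c > 0 depending only on M such that the following holds. Let G = (V,E) be a finite connected simple graph with n ≥ 2 vertices and maximal degree at most M which admits a circle packing (equivalently, is planar). Then for every vertex v ∈ V, the expected cover time of the simple random walk started at v satisfies E_v C ≥ c · n · (log n)². -/
open Finset
open scoped ENNReal

/-- Transition probability of the simple random walk on `G`:
from `x`, move to a uniformly chosen neighbor of `x`. -/
noncomputable def stepProb {V : Type*} [Fintype V] (G : SimpleGraph V)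
    [DecidableRel G.Adj] (x y : V) : ℝ :=
  if G.Adj x y then ((G.degree x : ℝ))⁻¹ else 0

/-- Probability that the walk follows the finite trajectory `f` (given it starts at `f 0`). -/
noncomputable def pathProb {V : Type*} [Fintype V] (G : SimpleGraph V)
    [DecidableRel G.Adj] {k : ℕ} (f : Fin (k + 1) → V) : ℝ :=
  ∏ i : Fin k, stepProb G (f i.castSucc) (f i.succ)

/-- `P_u(T_w > k)`: the probability that the walk started at `u` has not visited `w`
by time `k`.  (This is a cylinder event, so it is a finite sum over trajectories.) -/
noncomputable def hitSurvival {V : Type*} [Fintype V] [DecidableEq V] (G : SimpleGraph V)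
    [DecidableRel G.Adj] (u w : V) (k : ℕ) : ℝ :=
  ∑ f : Fin (k + 1) → V, if f 0 = u ∧ ∀ i, f i ≠ w then pathProb G f else 0

/-- `H(u,w) = E_u T_w`, the expected hitting time of `w` for the simple random walk
started at `u`, via `E[T] = ∑_{k≥0} P(T > k)`. -/
noncomputable def expHit {V : Type*} [Fintype V] [DecidableEq V] (G : SimpleGraph V)
    [DecidableRel G.Adj] (u w : V) : ℝ≥0∞ :=
  ∑' k : ℕ, ENNReal.ofReal (hitSurvival G u w k)

/-- `P_v(C > k)`: the probability that the walk started at `v` has not visited every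
vertex by time `k`, i.e. `max_w T_w > k`. -/
noncomputable def coverSurvival {V : Type*} [Fintype V] [DecidableEq V] (G : SimpleGraph V)
    [DecidableRel G.Adj] (v : V) (k : ℕ) : ℝ :=
  ∑ f : Fin (k + 1) → V, if f 0 = v ∧ ∃ w, ∀ i, f i ≠ w then pathProb G f else 0

/-- `E_v C`, the expected cover time of the simple random walk started at `v`,
via `E[C] = ∑_{k≥0} P(C > k)`. -/
noncomputable def expCover {V : Type*} [Fintype V] [DecidableEq V] (G : SimpleGraph V)
    [DecidableRel G.Adj] (v : V) : ℝ≥0∞ :=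
  ∑' k : ℕ, ENNReal.ofReal (coverSurvival G v k)

/-- `(z, rad)` is a circle packing for `G`: a family of closed round disks
(`C_v` has center `z v` and radius `rad v > 0`) with pairwise disjoint interiors,
such that for `u ≠ v`, `C_u ∩ C_v ≠ ∅` iff `{u,v}` is an edge of `G`. -/
def IsCirclePacking {V : Type*} (G : SimpleGraph V)
    (z : V → EuclideanSpace ℝ (Fin 2)) (rad : V → ℝ) : Prop :=
  (∀ v, 0 < rad v) ∧
  (∀ u v : V, u ≠ v →
    interior (Metric.closedBall (z u) (rad u)) ∩
      interior (Metric.closedBall (z v) (rad v)) = ∅) ∧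
  (∀ u v : V, u ≠ v →
    ((Metric.closedBall (z u) (rad u) ∩ Metric.closedBall (z v) (rad v)).Nonempty ↔ G.Adj u v))

/-- `G` admits a circle packing (equivalently, by Koebe's theorem, `G` is planar). -/
def HasCirclePacking {V : Type*} (G : SimpleGraph V) : Prop :=
  ∃ z rad, IsCirclePacking G z rad


set_option linter.unusedSectionVars false
set_option linter.unusedDecidableInType false

section CoverTime

variable {V : Type*} [Fintype V] [DecidableEq V] (G : SimpleGraph V) [DecidableRel G.Adj]

/-- adjacency weight -/
noncomputable def aw (x y : V) : ℝ := if G.Adj x y then 1 else 0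

/-- degree as a real -/
noncomputable def dg (x : V) : ℝ := ∑ y, aw G x y

/-- graph Laplacian -/
noncomputable def lap (f : V → ℝ) (x : V) : ℝ := ∑ y, aw G x y * (f x - f y)

/-- Dirichlet form -/
noncomputable def en (f g : V → ℝ) : ℝ := ∑ x, f x * lap G g x

lemma aw_symm (x y : V) : aw G x y = aw G y x := by
  simp [aw, G.adj_comm]

lemma aw_nonneg (x y : V) : 0 ≤ aw G x y := by
  unfold aw; split_ifs <;> norm_num

lemma dg_eq (x : V) : dg G x = G.degree x := by
  simp [dg, aw, ← G.card_neighborFinset_eq_degree, SimpleGraph.neighborFinset_eq_filter]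

lemma stepProb_eq (x y : V) : stepProb G x y = aw G x y * (dg G x)⁻¹ := by
  rw [dg_eq]; unfold stepProb aw; split_ifs <;> simp

lemma en_eq (f g : V → ℝ) :
    en G f g = (∑ x, ∑ y, aw G x y * ((f x - f y) * (g x - g y))) / 2 := by
  have h1 : en G f g = ∑ x, ∑ y, aw G x y * (f x * (g x - g y)) := by
    simp only [en, lap, Finset.mul_sum]
    refine Finset.sum_congr rfl fun x _ => Finset.sum_congr rfl fun y _ => by ring
  have h2 : en G f g = ∑ x, ∑ y, aw G x y * (f y * (g y - g x)) := by
    rw [h1, Finset.sum_comm]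
    refine Finset.sum_congr rfl fun x _ => Finset.sum_congr rfl fun y _ => by
      rw [aw_symm]
  have h3 : en G f g + en G f g = ∑ x, ∑ y, aw G x y * ((f x - f y) * (g x - g y)) := by
    nth_rewrite 1 [h1]; rw [h2]
    simp only [← Finset.sum_add_distrib]
    refine Finset.sum_congr rfl fun x _ => Finset.sum_congr rfl fun y _ => by ring
  linarith

lemma en_symm (f g : V → ℝ) : en G f g = en G g f := by
  rw [en_eq, en_eq]
  congr 1
  refine Finset.sum_congr rfl fun x _ => Finset.sum_congr rfl fun y _ => by ring

lemma lap_add (f g : V → ℝ) (x : V) : lap G (f + g) x = lap G f x + lap G g x := by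
  simp only [lap, ← Finset.sum_add_distrib, Pi.add_apply]
  refine Finset.sum_congr rfl fun y _ => by ring

lemma lap_smul (c : ℝ) (f : V → ℝ) (x : V) : lap G (c • f) x = c * lap G f x := by
  simp only [lap, Finset.mul_sum, Pi.smul_apply, smul_eq_mul]
  refine Finset.sum_congr rfl fun y _ => by ring

lemma lap_sub (f g : V → ℝ) (x : V) : lap G (f - g) x = lap G f x - lap G g x := by
  simp only [lap, ← Finset.sum_sub_distrib, Pi.sub_apply]
  refine Finset.sum_congr rfl fun y _ => by ring

lemma lap_const (c : ℝ) (x : V) : lap G (fun _ => c) x = 0 := by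
  simp [lap]

lemma lap_finsum {ι : Type*} (s : Finset ι) (f : ι → V → ℝ) (x : V) :
    lap G (fun z => ∑ i ∈ s, f i z) x = ∑ i ∈ s, lap G (f i) x := by
  simp only [lap, ← Finset.sum_sub_distrib, Finset.mul_sum]
  rw [Finset.sum_comm]

lemma lap_eq (f : V → ℝ) (x : V) : lap G f x = dg G x * f x - ∑ y, aw G x y * f y := by
  simp only [lap, dg, Finset.sum_mul, ← Finset.sum_sub_distrib]
  refine Finset.sum_congr rfl fun y _ => by ring

lemma sum_lap (f : V → ℝ) : ∑ x, lap G f x = 0 := by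
  have h := en_eq G (fun _ => 1) f
  simpa [en] using h

lemma const_of_adj (hG : G.Connected) (f : V → ℝ)
    (h : ∀ x y, G.Adj x y → f x = f y) (x y : V) : f x = f y := by
  obtain ⟨p⟩ := hG.preconnected x y
  induction p with
  | nil => rfl
  | cons hadj _ ih => exact (h _ _ hadj).trans ih

lemma const_of_sum (hG : G.Connected) (f : V → ℝ)
    (h : (∑ x, ∑ y, aw G x y * (f x - f y) ^ 2) ≤ 0) (x y : V) : f x = f y := by
  apply const_of_adj G hG f
  intro x y hxy
  have h0 : ∀ x y, 0 ≤ aw G x y * (f x - f y) ^ 2 := fun x y =>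
    mul_nonneg (aw_nonneg G x y) (sq_nonneg _)
  have h1 : aw G x y * (f x - f y) ^ 2 ≤ 0 := by
    refine le_trans ?_ h
    refine le_trans ?_ (Finset.single_le_sum (f := fun x => ∑ y, aw G x y * (f x - f y) ^ 2)
      (fun i _ => Finset.sum_nonneg fun j _ => h0 i j) (Finset.mem_univ x))
    exact Finset.single_le_sum (f := fun y => aw G x y * (f x - f y) ^ 2)
      (fun i _ => h0 x i) (Finset.mem_univ y)
  simp only [aw, hxy, if_true, one_mul] at h1
  have := pow_eq_zero_iff (two_ne_zero) |>.1 (le_antisymm h1 (sq_nonneg _))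
  linarith

lemma min_principle (hG : G.Connected) (S : Finset V) (hS : S.Nonempty) (f : V → ℝ)
    (hb : ∀ x ∈ S, 0 ≤ f x) (hl : ∀ x, x ∉ S → 0 ≤ lap G f x) (x : V) : 0 ≤ f x := by
  set g : V → ℝ := fun x => max (-f x) 0 with hg
  have hgS : ∀ x ∈ S, g x = 0 := fun x hx => by
    simp only [hg]; exact max_eq_right (by linarith [hb x hx])
  have h1 : 0 ≤ en G g f := by
    refine Finset.sum_nonneg fun x _ => ?_
    by_cases hx : x ∈ S
    · simp [hgS x hx]
    · exact mul_nonneg (le_max_right _ _) (hl x hx)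
  have h2 : en G g f ≤ -(∑ x, ∑ y, aw G x y * (g x - g y) ^ 2) / 2 := by
    rw [en_eq]
    have : (∑ x, ∑ y, aw G x y * ((g x - g y) * (f x - f y))) ≤
        ∑ x, ∑ y, -(aw G x y * (g x - g y) ^ 2) := by
      refine Finset.sum_le_sum fun x _ => Finset.sum_le_sum fun y _ => ?_
      have : (g x - g y) * (f x - f y) ≤ - (g x - g y) ^ 2 := by
        simp only [hg]
        rcases le_total (-f x) 0 with h | h <;> rcases le_total (-f y) 0 with h' | h' <;>
          simp only [max_eq_left, max_eq_right, h, h'] <;> nlinarith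
      have := mul_le_mul_of_nonneg_left this (aw_nonneg G x y)
      linarith
    simp only [Finset.sum_neg_distrib] at this
    linarith
  obtain ⟨s, hs⟩ := hS
  have h3 := const_of_sum G hG g (by linarith) x s
  rw [hgS s hs] at h3
  have : -f x ≤ g x := le_max_left _ _
  linarith

lemma dirichlet_unique (hG : G.Connected) (S : Finset V) (hS : S.Nonempty) (f g : V → ℝ)
    (hb : ∀ x ∈ S, f x = g x) (hl : ∀ x, x ∉ S → lap G f x = lap G g x) (x : V) :
    f x = g x := by
  have h1 := min_principle G hG S hS (f - g) (fun x hx => by simp [hb x hx])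
    (fun x hx => by rw [lap_sub, hl x hx]; simp) x
  have h2 := min_principle G hG S hS (g - f) (fun x hx => by simp [hb x hx])
    (fun x hx => by rw [lap_sub, hl x hx]; simp) x
  simp only [Pi.sub_apply] at h1 h2
  linarith

lemma dirichlet_exists (hG : G.Connected) (S : Finset V) (hS : S.Nonempty) (b : V → ℝ) :
    ∃ f : V → ℝ, (∀ x ∈ S, f x = b x) ∧ ∀ x, x ∉ S → lap G f x = b x := by
  let T : (V → ℝ) →ₗ[ℝ] (V → ℝ) :=
    { toFun := fun f x => if x ∈ S then f x else lap G f x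
      map_add' := fun f g => by
        ext x; simp only [Pi.add_apply]; split_ifs
        · rfl
        · exact lap_add G f g x
      map_smul' := fun c f => by
        ext x; simp only [Pi.smul_apply, RingHom.id_apply]; split_ifs
        · rfl
        · exact lap_smul G c f x }
  have hT : ∀ f x, T f x = if x ∈ S then f x else lap G f x := fun _ _ => rfl
  have hinj : Function.Injective T := by
    intro f g hfg
    ext x
    refine dirichlet_unique G hG S hS f g (fun x hx => ?_) (fun x hx => ?_) x
    · have := congrFun hfg x; simpa [hT, hx] using this
    · have := congrFun hfg x; simpa [hT, hx] using this
  obtain ⟨f, hf⟩ := LinearMap.injective_iff_surjective.1 hinj b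
  refine ⟨f, fun x hx => ?_, fun x hx => ?_⟩
  · have := congrFun hf x; simpa [hT, hx] using this
  · have := congrFun hf x; simpa [hT, hx] using this

open Classical in
/-- solution of the Dirichlet problem -/
noncomputable def dsol (S : Finset V) (b : V → ℝ) : V → ℝ :=
  if h : ∃ f : V → ℝ, (∀ x ∈ S, f x = b x) ∧ ∀ x, x ∉ S → lap G f x = b x then h.choose else 0

lemma dsol_on (hG : G.Connected) {S : Finset V} (b : V → ℝ) {x : V} (hx : x ∈ S) :
    dsol G S b x = b x := by
  have h := dirichlet_exists G hG S ⟨x, hx⟩ b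
  rw [dsol, dif_pos h]
  exact h.choose_spec.1 x hx

lemma dsol_off (hG : G.Connected) {S : Finset V} (hS : S.Nonempty) (b : V → ℝ) {x : V}
    (hx : x ∉ S) : lap G (dsol G S b) x = b x := by
  have h := dirichlet_exists G hG S hS b
  rw [dsol, dif_pos h]
  exact h.choose_spec.2 x hx

/-- expected hitting time of `w` as a function of the starting point -/
noncomputable def hit (w : V) : V → ℝ := dsol G {w} (fun x => if x = w then 0 else dg G x)

/-- total degree -/
noncomputable def tot : ℝ := ∑ x, dg G x

lemma dg_nonneg (x : V) : 0 ≤ dg G x := Finset.sum_nonneg fun y _ => aw_nonneg G x y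

lemma hit_self (hG : G.Connected) (w : V) : hit G w w = 0 := by
  rw [hit, dsol_on G hG _ (by simp)]; simp

lemma lap_hit_off (hG : G.Connected) {w x : V} (h : x ≠ w) : lap G (hit G w) x = dg G x := by
  rw [hit, dsol_off G hG (by simp) _ (by simpa using h)]; simp [h]

lemma lap_hit (hG : G.Connected) (w x : V) :
    lap G (hit G w) x = dg G x - if x = w then tot G else 0 := by
  split_ifs with h
  · subst h
    have h1 := sum_lap G (hit G x)
    rw [← Finset.add_sum_erase _ _ (Finset.mem_univ x)] at h1
    have h2 : tot G = dg G x + ∑ y ∈ Finset.univ.erase x, dg G y :=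
      (Finset.add_sum_erase _ _ (Finset.mem_univ x)).symm
    rw [Finset.sum_congr rfl (fun y hy => lap_hit_off G hG (Finset.ne_of_mem_erase hy))] at h1
    linarith
  · rw [lap_hit_off G hG h]; ring

lemma hit_nonneg (hG : G.Connected) (w x : V) : 0 ≤ hit G w x := by
  refine min_principle G hG {w} (by simp) _ (fun x hx => ?_) (fun x hx => ?_) x
  · rw [Finset.mem_singleton] at hx; subst hx; rw [hit_self G hG]
  · rw [lap_hit_off G hG (by simpa using hx)]; exact dg_nonneg G x

lemma en_hit (hG : G.Connected) (f : V → ℝ) (w : V) :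
    en G f (hit G w) = (∑ x, f x * dg G x) - tot G * f w := by
  simp only [en, lap_hit G hG, mul_sub, Finset.sum_sub_distrib]
  congr 1
  simp [mul_comm]

/-- `tot * φ`, weighted average hitting time -/
noncomputable def phi (w : V) : ℝ := (∑ x, hit G w x * dg G x) / tot G

lemma hit_sub (hG : G.Connected) (ht : 0 < tot G) (u v : V) :
    hit G v u - hit G u v = phi G v - phi G u := by
  have h := en_symm G (hit G u) (hit G v)
  rw [en_hit G hG, en_hit G hG] at h
  unfold phi
  field_simp
  linarith

/-- Kemeny constant -/
lemma kemeny (hG : G.Connected) (x y : V) :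
    ∑ w, dg G w * hit G w x = ∑ w, dg G w * hit G w y := by
  set g : V → ℝ := fun x => ∑ w, dg G w * hit G w x with hg
  have hl : ∀ x, lap G g x = 0 := by
    intro x
    have : g = fun z => ∑ w, (dg G w • hit G w) z := by ext z; simp [hg]
    rw [this, lap_finsum]
    simp only [lap_smul, lap_hit G hG, mul_sub, Finset.sum_sub_distrib]
    simp [← Finset.sum_mul, tot]
    ring
  have he : en G g g = 0 := by simp [en, hl]
  rw [en_eq] at he
  refine const_of_sum G hG g (le_of_eq ?_) x y
  simp only [pow_two]
  linarith

/-- Recursive Dirichlet problem for (cover time of `S`) minus half of `psi` at the last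
visited point of `S`. -/
noncomputable def covU (psi : V → ℝ) : ℕ → Finset V → V → ℝ
  | 0, _ => 0
  | n + 1, S => dsol G S (fun x => if x ∈ S then
      (if n = 0 then -psi x / 2 else covU psi n (S.erase x) x) else dg G x)

/-- `covU` at the right index -/
noncomputable def cu (psi : V → ℝ) (S : Finset V) : V → ℝ := covU G psi S.card S

lemma cu_off (hG : G.Connected) (psi : V → ℝ) {S : Finset V} (hS : S.Nonempty) {x : V}
    (hx : x ∉ S) : lap G (cu G psi S) x = dg G x := by
  obtain ⟨n, hn⟩ : ∃ n, S.card = n + 1 := ⟨S.card - 1, by have := hS.card_pos; omega⟩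
  rw [cu, hn, covU, dsol_off G hG hS _ hx]
  simp [hx]

lemma cu_single (hG : G.Connected) (psi : V → ℝ) (s : V) :
    cu G psi {s} s = -psi s / 2 := by
  rw [cu, Finset.card_singleton, covU, dsol_on G hG _ (by simp)]
  simp

lemma cu_on (hG : G.Connected) (psi : V → ℝ) {S : Finset V} (hS : 2 ≤ S.card) {x : V}
    (hx : x ∈ S) : cu G psi S x = cu G psi (S.erase x) x := by
  obtain ⟨n, hn⟩ : ∃ n, S.card = n + 1 := ⟨S.card - 1, by omega⟩
  have hn0 : n ≠ 0 := by omega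
  have h2 : (S.erase x).card = n := by rw [Finset.card_erase_of_mem hx]; omega
  rw [cu, hn, covU, dsol_on G hG _ hx, cu, h2]
  simp [hx, hn0]

lemma cu_single_eq (hG : G.Connected) (psi : V → ℝ) (s x : V) :
    cu G psi {s} x = hit G s x - psi s / 2 := by
  refine dirichlet_unique G hG {s} (by simp) _ (hit G s - fun _ => psi s / 2)
    (fun x hx => ?_) (fun x hx => ?_) x
  · rw [Finset.mem_singleton] at hx; subst hx
    rw [cu_single G hG]; simp [hit_self G hG]; ring
  · rw [cu_off G hG psi (by simp) hx, lap_sub, lap_const,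
      lap_hit_off G hG (by simpa using hx)]; ring

/-- The key step in Matthews' method. -/
lemma matthews_step (hG : G.Connected) (psi : V → ℝ) (r : ℝ) (k : ℕ) :
    ∀ S : Finset V, S.card = k + 2 →
    (∀ s ∈ S, ∀ x ∈ S, s ≠ x → r ≤ hit G s x - (psi s - psi x) / 2) →
    ∀ x, (∑ s ∈ S, cu G psi (S.erase s) x) + r ≤ (k + 2 : ℝ) * cu G psi S x := by
  induction k with
  | zero =>
    intro S hS hr x
    have hSne : S.Nonempty := by rw [← Finset.card_pos]; omega
    have key := min_principle G hG S hSne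
      (fun x => (2 : ℝ) * cu G psi S x - (∑ s ∈ S, cu G psi (S.erase s) x) - r) ?_ ?_ x
    · push_cast; linarith
    · intro x hx
      rw [cu_on G hG psi (by omega) hx]
      obtain ⟨a, b, hab, rfl⟩ := Finset.card_eq_two.1 hS
      have hS1 : ({a, b} : Finset V).erase a = {b} := by
        ext z; simp only [Finset.mem_erase, Finset.mem_insert, Finset.mem_singleton]; grind
      have hS2 : ({a, b} : Finset V).erase b = {a} := by
        ext z; simp only [Finset.mem_erase, Finset.mem_insert, Finset.mem_singleton]; grind
      rw [Finset.sum_pair hab, hS1, hS2]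
      simp only [cu_single_eq G hG]
      have h1 := hr a (by simp) b (by simp) hab
      have h2 := hr b (by simp) a (by simp) hab.symm
      simp only [Finset.mem_insert, Finset.mem_singleton] at hx
      rcases hx with rfl | rfl
      · rw [hS1, cu_single_eq G hG, hit_self G hG]; linarith
      · rw [hS2, cu_single_eq G hG, hit_self G hG]; linarith
    · intro x hx
      have : lap G (fun x => (2 : ℝ) * cu G psi S x - (∑ s ∈ S, cu G psi (S.erase s) x) - r) x
          = 2 * lap G (cu G psi S) x - (∑ s ∈ S, lap G (cu G psi (S.erase s)) x) - 0 := by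
        rw [← lap_const G r x, ← lap_finsum, ← lap_smul, ← lap_sub, ← lap_sub]; rfl
      rw [this, cu_off G hG psi hSne hx, Finset.sum_congr rfl (fun s hs => cu_off G hG psi
        (S := S.erase s) (by rw [← Finset.card_pos, Finset.card_erase_of_mem hs]; omega)
        (fun h => hx (Finset.mem_of_mem_erase h)))]
      simp [hS]
  | succ k ih =>
    intro S hS hr x
    have hSne : S.Nonempty := by rw [← Finset.card_pos]; omega
    have key := min_principle G hG S hSne
      (fun x => (k + 3 : ℝ) * cu G psi S x - (∑ s ∈ S, cu G psi (S.erase s) x) - r) ?_ ?_ x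
    · push_cast; linarith
    · intro x hx
      rw [cu_on G hG psi (by omega) hx]
      have hc : (S.erase x).card = k + 2 := by rw [Finset.card_erase_of_mem hx]; omega
      have h1 := ih (S.erase x) hc (fun s hs y hy => hr s (Finset.mem_of_mem_erase hs) y
        (Finset.mem_of_mem_erase hy)) x
      rw [← Finset.add_sum_erase _ _ hx]
      have h2 : ∑ s ∈ S.erase x, cu G psi (S.erase s) x
          = ∑ s ∈ S.erase x, cu G psi ((S.erase x).erase s) x := by
        refine Finset.sum_congr rfl fun s hs => ?_
        have hsS := Finset.mem_of_mem_erase hs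
        have hne := Finset.ne_of_mem_erase hs
        rw [cu_on G hG psi (S := S.erase s) (by rw [Finset.card_erase_of_mem hsS]; omega)
          (Finset.mem_erase.2 ⟨hne.symm, hx⟩), Finset.erase_right_comm]
      rw [h2]
      linarith
    · intro x hx
      have : lap G (fun x => (k + 3 : ℝ) * cu G psi S x
            - (∑ s ∈ S, cu G psi (S.erase s) x) - r) x
          = (k + 3 : ℝ) * lap G (cu G psi S) x
            - (∑ s ∈ S, lap G (cu G psi (S.erase s)) x) - 0 := by
        rw [← lap_const G r x, ← lap_finsum, ← lap_smul, ← lap_sub, ← lap_sub]; rfl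
      rw [this, cu_off G hG psi hSne hx, Finset.sum_congr rfl (fun s hs => cu_off G hG psi
        (S := S.erase s) (by rw [← Finset.card_pos, Finset.card_erase_of_mem hs]; omega)
        (fun h => hx (Finset.mem_of_mem_erase h)))]
      simp [hS]
      apply le_of_eq; ring

lemma matthews (hG : G.Connected) (psi : V → ℝ) (r T : ℝ) (k : ℕ) :
    ∀ S : Finset V, S.card = k + 1 → (∀ s ∈ S, psi s ≤ T) →
    (∀ s ∈ S, ∀ x ∈ S, s ≠ x → r ≤ hit G s x - (psi s - psi x) / 2) →
    ∀ x, r * ((harmonic (k + 1) : ℚ) - 1 : ℝ) - T / 2 ≤ cu G psi S x := by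
  induction k with
  | zero =>
    intro S hS hT hr x
    obtain ⟨s, rfl⟩ := Finset.card_eq_one.1 hS
    rw [cu_single_eq G hG]
    have := hit_nonneg G hG s x
    have := hT s (by simp)
    simp [harmonic]
    linarith
  | succ k ih =>
    intro S hS hT hr x
    have h1 := matthews_step G hG psi r k S hS hr x
    have h2 : ∀ s ∈ S, r * ((harmonic (k + 1) : ℚ) - 1 : ℝ) - T / 2
        ≤ cu G psi (S.erase s) x := fun s hs =>
      ih (S.erase s) (by rw [Finset.card_erase_of_mem hs]; omega)
        (fun s' hs' => hT s' (Finset.mem_of_mem_erase hs'))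
        (fun s' hs' y hy => hr s' (Finset.mem_of_mem_erase hs') y (Finset.mem_of_mem_erase hy)) x
    have h3 := Finset.sum_le_sum h2
    rw [Finset.sum_const, hS, nsmul_eq_mul] at h3
    rw [harmonic_succ]
    push_cast at h3 ⊢
    have hk : (0 : ℝ) < k + 2 := by positivity
    have h4 : (k + 2 : ℝ) * (r * ((harmonic (k + 1) : ℝ) - 1) - T / 2) + r
      ≤ (k + 2 : ℝ) * cu G psi S x := by
      have : ((k : ℝ) + 1 + 1) = k + 2 := by ring
      rw [this] at h3; linarith
    have h5 : (k + 2 : ℝ) * (r * ((harmonic (k + 1) : ℝ) + (k + 1 + 1 : ℝ)⁻¹ - 1) - T / 2)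
        = (k + 2 : ℝ) * (r * ((harmonic (k + 1) : ℝ) - 1) - T / 2) + r := by
      have : ((k : ℝ) + 1 + 1) = k + 2 := by ring
      rw [this]
      field_simp
      ring
    exact le_of_mul_le_mul_left (by linarith) hk

/-- survival probabilities of covering `S`, recursively -/
noncomputable def cov : ℕ → V → Finset V → ℝ
  | 0, x, S => if (S.erase x).Nonempty then 1 else 0
  | k + 1, x, S => ∑ y, stepProb G x y * cov k y (S.erase x)

lemma stepProb_nonneg (x y : V) : 0 ≤ stepProb G x y := by
  unfold stepProb; split_ifs <;> positivity

lemma pathProb_nonneg {k : ℕ} (f : Fin (k + 1) → V) : 0 ≤ pathProb G f :=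
  Finset.prod_nonneg fun _ _ => stepProb_nonneg G _ _

lemma cov_nonneg (k : ℕ) : ∀ x S, 0 ≤ cov G k x S := by
  induction k with
  | zero => intro x S; unfold cov; split_ifs <;> norm_num
  | succ k ih =>
    intro x S
    exact Finset.sum_nonneg fun y _ => mul_nonneg (stepProb_nonneg G x y) (ih _ _)

lemma pathProb_cons {k : ℕ} (x : V) (g : Fin (k + 1) → V) :
    pathProb G (Fin.cons x g : Fin (k + 2) → V) = stepProb G x (g 0) * pathProb G g := by
  unfold pathProb
  rw [Fin.prod_univ_succ]
  simp

lemma cov_eq (k : ℕ) : ∀ x (S : Finset V), cov G k x S =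
    ∑ f : Fin (k + 1) → V, if f 0 = x ∧ ∃ w ∈ S, ∀ i, f i ≠ w then pathProb G f else 0 := by
  induction k with
  | zero =>
    intro x S
    rw [Finset.sum_eq_single (fun _ => x)]
    · simp only [cov, pathProb, Finset.univ_eq_empty, Finset.prod_empty, true_and]
      refine if_congr ?_ rfl rfl
      constructor
      · rintro ⟨w, hw⟩
        exact ⟨w, Finset.mem_of_mem_erase hw, fun _ => (Finset.ne_of_mem_erase hw).symm⟩
      · rintro ⟨w, hw, h⟩
        exact ⟨w, Finset.mem_erase.2 ⟨(h 0).symm, hw⟩⟩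
    · intro f _ hf
      rw [if_neg]
      rintro ⟨h, -⟩
      exact hf (by
        ext i
        have hi : i = 0 := by apply Fin.ext; simp
        rw [hi]; exact h)
    · simp
  | succ k ih =>
    intro x S
    rw [cov, ← (Fin.consEquiv (fun _ : Fin (k + 2) => V)).sum_comp, Fintype.sum_prod_type]
    symm
    rw [Finset.sum_eq_single x]
    · symm
      simp only [ih, Finset.mul_sum]
      rw [Finset.sum_comm]
      refine Finset.sum_congr rfl fun g _ => ?_
      rw [Finset.sum_eq_single (g 0)]
      · simp only [Fin.consEquiv, Equiv.coe_fn_mk, Fin.cons_zero, true_and]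
        rw [pathProb_cons]
        have : (∃ w ∈ S.erase x, ∀ i, g i ≠ w) ↔
            ∃ w ∈ S, ∀ i, (Fin.cons x g : Fin (k + 2) → V) i ≠ w := by
          constructor
          · rintro ⟨w, hw, h⟩
            refine ⟨w, Finset.mem_of_mem_erase hw, fun i => ?_⟩
            refine Fin.cases ?_ (fun j => ?_) i
            · simpa using (Finset.ne_of_mem_erase hw).symm
            · simpa using h j
          · rintro ⟨w, hw, h⟩
            refine ⟨w, Finset.mem_erase.2 ⟨?_, hw⟩, fun i => ?_⟩
            · have := h 0; simpa using this.symm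
            · have := h i.succ; simpa using this
        by_cases h : ∃ w ∈ S.erase x, ∀ i, g i ≠ w
        · rw [if_pos h, if_pos (this.1 h)]
        · rw [if_neg h, if_neg (fun h' => h (this.2 h')), mul_zero]
      · intro y _ hy
        rw [if_neg (fun h => hy h.1.symm), mul_zero]
      · simp
    · intro y _ hy
      refine Finset.sum_eq_zero fun g _ => ?_
      rw [if_neg]
      rintro ⟨h, -⟩
      exact hy (by simpa [Fin.consEquiv] using h)
    · simp

lemma cov_le (k : ℕ) (x : V) (S : Finset V) : cov G k x S ≤ coverSurvival G x k := by
  rw [cov_eq, coverSurvival]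
  refine Finset.sum_le_sum fun f _ => ?_
  have := pathProb_nonneg G f
  by_cases h : f 0 = x ∧ ∃ w ∈ S, ∀ i, f i ≠ w
  · rw [if_pos h, if_pos ⟨h.1, h.2.choose, h.2.choose_spec.2⟩]
  · rw [if_neg h]; split_ifs <;> linarith

lemma coverSurvival_nonneg (k : ℕ) (x : V) : 0 ≤ coverSurvival G x k := by
  refine Finset.sum_nonneg fun f _ => ?_
  have := pathProb_nonneg G f
  split_ifs <;> linarith

lemma cu_rec (hG : G.Connected) (hd : ∀ x, 0 < dg G x) (psi : V → ℝ) {S : Finset V}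
    (hS : S.Nonempty) {x : V} (hx : x ∉ S) :
    cu G psi S x = 1 + ∑ y, stepProb G x y * cu G psi S y := by
  have h := cu_off G hG psi hS hx
  rw [lap_eq] at h
  have h1 : ∑ y, stepProb G x y * cu G psi S y = (∑ y, aw G x y * cu G psi S y) / dg G x := by
    rw [Finset.sum_div]
    refine Finset.sum_congr rfl fun y _ => by rw [stepProb_eq]; field_simp
  rw [h1]
  have := hd x
  field_simp
  linarith

lemma cu_le_cov (hG : G.Connected) (hd : ∀ x, 0 < dg G x) (psi : V → ℝ) (hpsi : ∀ x, 0 ≤ psi x)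
    (B : ℝ) (hB0 : 0 ≤ B) (hB : ∀ S x, cu G psi S x ≤ B) (K : ℕ) :
    ∀ (S : Finset V) (x : V), S.Nonempty →
      cu G psi S x ≤ (∑ k ∈ Finset.range K, cov G k x S) + B * cov G K x S := by
  have hsing : ∀ (S : Finset V) (x : V), S.Nonempty → ¬ (S.erase x).Nonempty →
      cu G psi S x ≤ 0 := by
    intro S x hS h
    rw [Finset.not_nonempty_iff_eq_empty, Finset.erase_eq_empty_iff] at h
    rcases h with h | h
    · exact absurd h hS.ne_empty
    · rw [h, cu_single G hG]; linarith [hpsi x]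
  induction K with
  | zero =>
    intro S x hS
    by_cases h : (S.erase x).Nonempty
    · simpa [cov, h] using hB S x
    · simpa [cov, h] using hsing S x hS h
  | succ K ih =>
    intro S x hS
    by_cases h : (S.erase x).Nonempty
    · have h1 : cu G psi S x = cu G psi (S.erase x) x := by
        by_cases hx : x ∈ S
        · refine cu_on G hG psi ?_ hx
          have := Finset.card_erase_of_mem hx
          have := h.card_pos
          omega
        · rw [Finset.erase_eq_of_notMem hx]
      rw [h1, cu_rec G hG hd psi h (by simp), Finset.sum_range_succ']
      have h2 : ∑ y, stepProb G x y * cu G psi (S.erase x) y ≤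
          ∑ y, stepProb G x y * ((∑ k ∈ Finset.range K, cov G k y (S.erase x))
            + B * cov G K y (S.erase x)) :=
        Finset.sum_le_sum fun y _ => mul_le_mul_of_nonneg_left (ih _ _ h) (stepProb_nonneg G x y)
      have h3 : ∑ y, stepProb G x y * ((∑ k ∈ Finset.range K, cov G k y (S.erase x))
            + B * cov G K y (S.erase x)) =
          (∑ k ∈ Finset.range K, cov G (k + 1) x S) + B * cov G (K + 1) x S := by
        simp only [cov, mul_add, Finset.sum_add_distrib, Finset.mul_sum]
        congr 1
        · rw [Finset.sum_comm]
        · refine Finset.sum_congr rfl fun y _ => by ring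
      have h4 : cov G 0 x S = 1 := by simp [cov, h]
      rw [h4]
      linarith
    · refine (hsing S x hS h).trans ?_
      exact add_nonneg (Finset.sum_nonneg fun k _ => cov_nonneg G k x S)
        (mul_nonneg hB0 (cov_nonneg G _ x S))

lemma cu_le_expCover (hG : G.Connected) (hd : ∀ x, 0 < dg G x) (psi : V → ℝ)
    (hpsi : ∀ x, 0 ≤ psi x) (S : Finset V) (hS : S.Nonempty) (x : V) :
    ENNReal.ofReal (cu G psi S x) ≤ expCover G x := by
  by_cases htop : expCover G x = ⊤
  · rw [htop]; exact le_top
  have hsum : Summable (fun k => coverSurvival G x k) := by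
    have h := ENNReal.summable_toReal htop
    refine h.congr fun k => ENNReal.toReal_ofReal (coverSurvival_nonneg G k x)
  have hexp : expCover G x = ENNReal.ofReal (∑' k, coverSurvival G x k) :=
    (ENNReal.ofReal_tsum_of_nonneg (fun k => coverSurvival_nonneg G k x) hsum).symm
  rw [hexp]
  apply ENNReal.ofReal_le_ofReal
  obtain ⟨B, hB⟩ : ∃ B : ℝ, ∀ p : Finset V × V, cu G psi p.1 p.2 ≤ B := by
    obtain ⟨B, hB⟩ := (Set.finite_range (fun p : Finset V × V => cu G psi p.1 p.2)).bddAbove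
    exact ⟨B, fun p => hB ⟨p, rfl⟩⟩
  have hlim := hsum.tendsto_atTop_zero
  have hlim2 : Filter.Tendsto (fun K => (∑' k, coverSurvival G x k)
      + max B 0 * coverSurvival G x K) Filter.atTop (nhds ((∑' k, coverSurvival G x k)
      + max B 0 * 0)) := (hlim.const_mul _).const_add _
  rw [mul_zero, add_zero] at hlim2
  refine ge_of_tendsto' hlim2 fun K => ?_
  refine (cu_le_cov G hG hd psi hpsi (max B 0) (le_max_right _ _)
    (fun S x => (hB (S, x)).trans (le_max_left _ _)) K S x hS).trans ?_
  refine add_le_add ?_ (mul_le_mul_of_nonneg_left (cov_le G K x S) (le_max_right _ _))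
  refine (Finset.sum_le_sum fun k _ => cov_le G k x S).trans ?_
  exact hsum.sum_le_tsum _ (fun k _ => coverSurvival_nonneg G k x)

lemma hit_le_expCover (hG : G.Connected) (hd : ∀ x, 0 < dg G x) (w x : V) :
    ENNReal.ofReal (hit G w x) ≤ expCover G x := by
  have := cu_le_expCover G hG hd (fun _ => 0) (fun _ => le_rfl) {w} (by simp) x
  rw [cu_single_eq G hG] at this
  simpa using this

lemma one_le_expCover (h2 : 2 ≤ Fintype.card V) (x : V) : 1 ≤ expCover G x := by
  have h1 : 1 ≤ coverSurvival G x 0 := by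
    refine le_trans ?_ (cov_le G 0 x Finset.univ)
    have : ((Finset.univ : Finset V).erase x).Nonempty := by
      rw [← Finset.card_pos, Finset.card_erase_of_mem (Finset.mem_univ x), Finset.card_univ]
      omega
    simp only [cov, this, if_true, le_refl]
  refine le_trans ?_ (ENNReal.le_tsum (f := fun k => ENNReal.ofReal (coverSurvival G x k)) 0)
  simpa using ENNReal.ofReal_le_ofReal h1

lemma en_quad (y f : V → ℝ) (s : ℝ) :
    en G (y + s • f) (y + s • f) = en G y y + 2 * s * en G f y + s ^ 2 * en G f f := by
  have h : ∀ g h k : V → ℝ, en G (g + h) k = en G g k + en G h k := fun g h k => by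
    simp only [en, Pi.add_apply, add_mul, Finset.sum_add_distrib]
  have h' : ∀ (c : ℝ) (g k : V → ℝ), en G (c • g) k = c * en G g k := fun c g k => by
    simp only [en, Pi.smul_apply, smul_eq_mul, mul_assoc, Finset.mul_sum]
  rw [h, h', en_symm G y, en_symm G f, h, h, h', h', en_symm G y f]
  ring

lemma en_self_nonneg (f : V → ℝ) : 0 ≤ en G f f := by
  rw [en_eq]
  refine div_nonneg (Finset.sum_nonneg fun x _ => Finset.sum_nonneg fun y _ =>
    mul_nonneg (aw_nonneg G x y) (mul_self_nonneg _)) (by norm_num)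

/-- If every large set can be split by a function of bounded energy, then sets of more than
`100 ^ j` points have large radius in the resistance metric. -/
lemma sep_radius (hG : G.Connected) (C : ℝ) (hC : 0 < C)
    (hsep : ∀ A : Finset V, 100 < A.card → ∃ f : V → ℝ, en G f f ≤ C ∧
      A.card ≤ 100 * (A.filter (fun x => f x = 0)).card ∧
      A.card ≤ 100 * (A.filter (fun x => f x = 1)).card) (j : ℕ) :
    ∀ (A : Finset V) (c : V → ℝ) (rho : ℝ), 100 ^ j < A.card →
      (∀ u ∈ A, en G (hit G u + c) (hit G u + c) ≤ rho) →
      j * (tot G ^ 2 / (4 * C)) ≤ rho := by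
  induction j with
  | zero =>
    intro A c rho hA h
    obtain ⟨u, hu⟩ : A.Nonempty := by rw [← Finset.card_pos]; omega
    have := h u hu
    have := en_self_nonneg G (hit G u + c)
    simp; linarith
  | succ j ih =>
    intro A c rho hA h
    have hp : 1 ≤ 100 ^ j := Nat.one_le_pow _ _ (by norm_num)
    rw [pow_succ] at hA
    obtain ⟨f, hfC, h0, h1⟩ := hsep A (by omega)
    set t : ℝ := (∑ x, f x * dg G x) + en G f c with ht
    have hen : ∀ u, en G f (hit G u + c) = t - tot G * f u := by
      intro u
      have : en G f (hit G u + c) = en G f (hit G u) + en G f c := by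
        simp only [en, lap_add, mul_add, Finset.sum_add_distrib]
      rw [this, en_hit G hG]; ring
    have htot : 0 ≤ tot G := Finset.sum_nonneg fun x _ => dg_nonneg G x
    set s : ℝ := tot G / (2 * C) with hs
    have hs0 : 0 ≤ s := by positivity
    have hid : s * tot G - s ^ 2 * C = tot G ^ 2 / (4 * C) := by
      rw [hs]; field_simp; ring
    have hsC : s ^ 2 * en G f f ≤ s ^ 2 * C := mul_le_mul_of_nonneg_left hfC (sq_nonneg _)
    have hfin : (j : ℝ) * (tot G ^ 2 / (4 * C)) ≤ rho - tot G ^ 2 / (4 * C) := by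
      rcases le_total (tot G / 2) t with hle | hle
      · refine ih (A.filter (fun x => f x = 0)) (c + (-s) • f) _ (by omega) ?_
        intro u hu
        rw [Finset.mem_filter] at hu
        have h2 := h u hu.1
        have h3 := hen u
        rw [← add_assoc, en_quad, h3, hu.2]
        nlinarith
      · refine ih (A.filter (fun x => f x = 1)) (c + s • f) _ (by omega) ?_
        intro u hu
        rw [Finset.mem_filter] at hu
        have h2 := h u hu.1
        have h3 := hen u
        rw [← add_assoc, en_quad, h3, hu.2]
        nlinarith
    push_cast
    linarith

/-- commute time -/
lemma en_hit_sub (hG : G.Connected) (u w : V) :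
    en G (hit G u + (-1 : ℝ) • hit G w) (hit G u + (-1 : ℝ) • hit G w)
      = tot G * (hit G u w + hit G w u) := by
  rw [en_quad, en_hit G hG, en_hit G hG, en_hit G hG, hit_self G hG, hit_self G hG]
  have h := en_symm G (hit G u) (hit G w)
  rw [en_hit G hG, en_hit G hG] at h
  linarith

lemma exists_separated (hG : G.Connected) (ht : 0 < tot G) (C : ℝ) (hC : 0 < C)
    (hsep : ∀ A : Finset V, 100 < A.card → ∃ f : V → ℝ, en G f f ≤ C ∧
      A.card ≤ 100 * (A.filter (fun x => f x = 0)).card ∧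
      A.card ≤ 100 * (A.filter (fun x => f x = 1)).card) (j : ℕ) (V0 : Finset V) :
    ∃ W ⊆ V0, V0.card ≤ 100 ^ j * W.card ∧
      ∀ u ∈ W, ∀ w ∈ W, u ≠ w → j * (tot G / (4 * C)) ≤ hit G u w + hit G w u := by
  classical
  set tau : ℝ := j * (tot G / (4 * C)) with htau
  -- balls are small
  have hball : ∀ w, (V0.filter (fun u => hit G u w + hit G w u < tau)).card ≤ 100 ^ j := by
    intro w
    by_contra hcon
    push Not at hcon
    set A := V0.filter (fun u => hit G u w + hit G w u < tau) with hA
    have hne : A.Nonempty := Finset.card_pos.1 (lt_of_le_of_lt (Nat.zero_le _) hcon)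
    obtain ⟨u0, hu0, hmax⟩ := Finset.exists_max_image A (fun u => hit G u w + hit G w u) hne
    have h1 := sep_radius G hG C hC hsep j A ((-1 : ℝ) • hit G w)
      (tot G * (hit G u0 w + hit G w u0)) hcon (fun u hu => by
        rw [en_hit_sub G hG]
        exact mul_le_mul_of_nonneg_left (hmax u hu) ht.le)
    have h2 : hit G u0 w + hit G w u0 < tau := (Finset.mem_filter.1 hu0).2
    have h3 : (j : ℝ) * (tot G ^ 2 / (4 * C)) = tot G * tau := by rw [htau]; ring
    rw [h3] at h1
    have := le_of_mul_le_mul_left h1 ht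
    linarith
  -- maximal separated set
  let F : Finset (Finset V) := V0.powerset.filter (fun W =>
    ∀ u ∈ W, ∀ w ∈ W, u ≠ w → tau ≤ hit G u w + hit G w u)
  have hF : F.Nonempty := ⟨∅, by simp [F]⟩
  obtain ⟨W, hW, hmax⟩ := Finset.exists_max_image F Finset.card hF
  simp only [F, Finset.mem_filter, Finset.mem_powerset] at hW hmax
  refine ⟨W, hW.1, ?_, hW.2⟩
  have hcov : V0 ⊆ W.biUnion (fun w => insert w
      (V0.filter (fun u => hit G u w + hit G w u < tau))) := by
    intro u hu
    by_contra hcon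
    simp only [Finset.mem_biUnion, Finset.mem_insert, Finset.mem_filter, not_exists, not_and,
      not_or, not_lt] at hcon
    have huW : u ∉ W := fun h => (hcon u h).1 rfl
    have := hmax (insert u W) ⟨Finset.insert_subset hu hW.1, by
      intro a ha b hb hab
      rw [Finset.mem_insert] at ha hb
      rcases ha with rfl | ha <;> rcases hb with rfl | hb
      · exact absurd rfl hab
      · exact (hcon b hb).2 hu
      · rw [add_comm]; exact (hcon a ha).2 hu
      · exact hW.2 a ha b hb hab⟩
    rw [Finset.card_insert_of_notMem huW] at this
    omega
  have hins : ∀ w ∈ W, (insert w (V0.filter (fun u => hit G u w + hit G w u < tau))).card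
      ≤ 100 ^ j := by
    intro w hw
    rcases Nat.eq_zero_or_pos j with hj | hj
    · have : tau = 0 := by simp [htau, hj]
      have he : V0.filter (fun u => hit G u w + hit G w u < tau) = ∅ := by
        rw [Finset.filter_eq_empty_iff]
        intro u _
        rw [this]
        have := hit_nonneg G hG u w
        have := hit_nonneg G hG w u
        linarith
      rw [he, hj]; simp
    · rw [Finset.insert_eq_of_mem]
      · exact hball w
      · rw [Finset.mem_filter]
        refine ⟨hW.1 hw, ?_⟩
        rw [hit_self G hG, htau]
        have : (0 : ℝ) < j := by exact_mod_cast hj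
        simp only [add_zero]
        positivity
  calc V0.card ≤ _ := Finset.card_le_card hcov
    _ ≤ W.card * 100 ^ j := Finset.card_biUnion_le_card_mul _ _ _ hins
    _ = _ := mul_comm _ _

open MeasureTheory in
lemma packing_sum {ι : Type*} (S : Finset ι) (z : ι → EuclideanSpace ℝ (Fin 2)) (rad : ι → ℝ)
    (hrad : ∀ x, 0 < rad x)
    (hdis : ∀ u v, u ≠ v → Disjoint (Metric.ball (z u) (rad u)) (Metric.ball (z v) (rad v)))
    (p : EuclideanSpace ℝ (Fin 2)) (r : ℝ) (hr : 0 < r)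
    (hS : ∀ x ∈ S, dist (z x) p ≤ 4 * r + rad x) :
    ∑ x ∈ S, (min r (rad x)) ^ 2 ≤ 36 * r ^ 2 := by
  have hw : ∀ x ∈ S, ∃ w, Metric.ball w (min r (rad x)) ⊆ Metric.ball (z x) (rad x) ∧
      Metric.ball w (min r (rad x)) ⊆ Metric.ball p (6 * r) := by
    intro x hx
    set s := min r (rad x) with hs
    have hsr : s ≤ r := min_le_left _ _
    have hsx : s ≤ rad x := min_le_right _ _
    rcases le_total (dist (z x) p) (rad x - s) with h | h
    · refine ⟨p, ?_, ?_⟩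
      · apply Metric.ball_subset_ball'
        rw [dist_comm]; linarith
      · apply Metric.ball_subset_ball; linarith
    · rcases eq_or_lt_of_le (dist_nonneg (x := z x) (y := p)) with h0 | h0
      · refine ⟨p, ?_, ?_⟩
        · apply Metric.ball_subset_ball'
          rw [dist_comm]; linarith
        · apply Metric.ball_subset_ball; linarith
      · set θ : ℝ := (rad x - s) / dist (z x) p with hθ
        have hθ0 : 0 ≤ θ := div_nonneg (by linarith) h0.le
        have hθ1 : θ ≤ 1 := by rw [hθ, div_le_one h0]; exact h
        have hθd : θ * dist (z x) p = rad x - s := by rw [hθ]; field_simp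
        refine ⟨AffineMap.lineMap (z x) p θ, ?_, ?_⟩
        · apply Metric.ball_subset_ball'
          rw [dist_lineMap_left, Real.norm_of_nonneg hθ0]
          linarith
        · apply Metric.ball_subset_ball'
          rw [dist_lineMap_right, Real.norm_of_nonneg (by linarith)]
          have := hS x hx
          nlinarith
  choose! w hw1 hw2 using hw
  have hdisj : Set.PairwiseDisjoint (S : Set ι) (fun x => Metric.ball (w x) (min r (rad x))) := by
    intro x hx y hy hxy
    exact (hdis x y hxy).mono (hw1 x hx) (hw1 y hy)
  have h1 := measure_biUnion_finset (μ := (volume : Measure (EuclideanSpace ℝ (Fin 2)))) hdisj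
    (fun x _ => measurableSet_ball)
  have h2 : volume (⋃ x ∈ S, Metric.ball (w x) (min r (rad x))) ≤ volume (Metric.ball p (6 * r)) :=
    measure_mono (Set.iUnion₂_subset hw2)
  have hmin : ∀ x, 0 ≤ min r (rad x) := fun x => le_min hr.le (hrad x).le
  rw [h1, Measure.addHaar_ball _ _ (by positivity)] at h2
  rw [Finset.sum_congr rfl (fun x _ => Measure.addHaar_ball volume (w x) (hmin x)),
    ← Finset.sum_mul, finrank_euclideanSpace_fin] at h2
  have hb : (volume (Metric.ball (0 : EuclideanSpace ℝ (Fin 2)) 1)) ≠ 0 :=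
    (Metric.measure_ball_pos _ _ one_pos).ne'
  have hb' : (volume (Metric.ball (0 : EuclideanSpace ℝ (Fin 2)) 1)) ≠ ⊤ :=
    measure_ball_lt_top.ne
  rw [ENNReal.mul_le_mul_iff_left hb hb',
    ← ENNReal.ofReal_sum_of_nonneg (fun x _ => by positivity),
    ENNReal.ofReal_le_ofReal_iff (by positivity)] at h2
  calc _ ≤ _ := h2
    _ = _ := by ring

lemma covering_count {ι : Type*} (B : Finset ι) (z : ι → EuclideanSpace ℝ (Fin 2))
    (p : EuclideanSpace ℝ (Fin 2)) (r : ℝ) (hr : 0 < r) (k : ℕ)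
    (hB : ∀ x ∈ B, dist (z x) p ≤ 2 * r)
    (hk : ∀ F ⊆ B, (∀ x ∈ F, ∀ y ∈ F, dist (z x) (z y) < r) → F.card ≤ k) :
    B.card ≤ k * 81 := by
  classical
  let g : ι → ℤ × ℤ := fun x => (⌊2 * (z x 0 - p 0) / r⌋, ⌊2 * (z x 1 - p 1) / r⌋)
  have h1 : B.card ≤ k * (B.image g).card := by
    refine Finset.card_le_mul_card_image B k fun a _ => ?_
    refine hk _ (Finset.filter_subset _ _) ?_
    intro x hx y hy
    rw [Finset.mem_filter] at hx hy
    have hxy : g x = g y := hx.2.trans hy.2.symm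
    have hc : ∀ a b : ℝ, ⌊2 * a / r⌋ = ⌊2 * b / r⌋ → (a - b) ^ 2 < r ^ 2 / 4 := by
      intro a b hab
      have h := Int.abs_sub_lt_one_of_floor_eq_floor hab
      have h' : |a - b| < r / 2 := by
        have : 2 * a / r - 2 * b / r = (a - b) * (2 / r) := by ring
        rw [this, abs_mul, abs_of_pos (show 0 < 2 / r by positivity)] at h
        have h3 : |a - b| * (2 / r) * (r / 2) < 1 * (r / 2) :=
          mul_lt_mul_of_pos_right h (by positivity)
        have h4 : |a - b| * (2 / r) * (r / 2) = |a - b| := by field_simp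
        linarith
      have := sq_lt_sq' (by linarith [neg_abs_le (a - b), abs_nonneg (a - b)]) h'
      rw [sq_abs] at this
      nlinarith
    have e0 := hc _ _ (congrArg Prod.fst hxy)
    have e1 := hc _ _ (congrArg Prod.snd hxy)
    have e0' : (z x 0 - z y 0) ^ 2 < r ^ 2 / 4 := by
      have : z x 0 - p 0 - (z y 0 - p 0) = z x 0 - z y 0 := by ring
      rwa [this] at e0
    have e1' : (z x 1 - z y 1) ^ 2 < r ^ 2 / 4 := by
      have : z x 1 - p 1 - (z y 1 - p 1) = z x 1 - z y 1 := by ring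
      rwa [this] at e1
    rw [EuclideanSpace.dist_eq, Real.sqrt_lt' hr]
    simp only [Fin.sum_univ_two, Real.dist_eq, sq_abs]
    nlinarith
  have h2 : B.image g ⊆ Finset.Icc (-4) 4 ×ˢ Finset.Icc (-4) 4 := by
    intro a ha
    obtain ⟨x, hx, rfl⟩ := Finset.mem_image.1 ha
    have hd := hB x hx
    have hc : ∀ i, |z x i - p i| ≤ 2 * r := by
      intro i
      refine le_trans ?_ hd
      rw [dist_eq_norm]
      exact PiLp.norm_apply_le (z x - p) i
    have hf : ∀ i, ⌊2 * (z x i - p i) / r⌋ ∈ Finset.Icc (-4 : ℤ) 4 := by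
      intro i
      have := abs_le.1 (hc i)
      rw [Finset.mem_Icc]
      constructor
      · rw [Int.le_floor, le_div_iff₀ hr]; push_cast; linarith
      · have h5 : 2 * (z x i - p i) / r ≤ 4 := by rw [div_le_iff₀ hr]; linarith
        have : (⌊2 * (z x i - p i) / r⌋ : ℝ) ≤ 4 := (Int.floor_le _).trans h5
        exact_mod_cast this
    exact Finset.mem_product.2 ⟨hf 0, hf 1⟩
  have h3 := Finset.card_le_card h2
  have h4 : (Finset.Icc (-4 : ℤ) 4 ×ˢ Finset.Icc (-4 : ℤ) 4).card = 81 := by decide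
  rw [h4] at h3
  exact h1.trans (Nat.mul_le_mul_left k h3)

lemma splitting (M : ℕ) (hM : ∀ v, G.degree v ≤ M) (z : V → EuclideanSpace ℝ (Fin 2))
    (rad : V → ℝ) (hP : IsCirclePacking G z rad) (A : Finset V) (hA : 100 < A.card) :
    ∃ f : V → ℝ, en G f f ≤ 72 * M ∧
      A.card ≤ 100 * (A.filter (fun x => f x = 0)).card ∧
      A.card ≤ 100 * (A.filter (fun x => f x = 1)).card := by
  classical
  obtain ⟨hrad, hintr, hadj⟩ := hP
  have hdis : ∀ u v, u ≠ v →
      Disjoint (Metric.ball (z u) (rad u)) (Metric.ball (z v) (rad v)) := by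
    intro u v huv
    have h := hintr u v huv
    rw [interior_closedBall _ (hrad u).ne', interior_closedBall _ (hrad v).ne'] at h
    exact Set.disjoint_iff_inter_eq_empty.2 h
  have hcen : ∀ u v, u ≠ v → rad u ≤ dist (z u) (z v) := by
    intro u v huv
    by_contra hcon
    push Not at hcon
    have h1 : z v ∈ Metric.ball (z u) (rad u) := by rw [Metric.mem_ball, dist_comm]; exact hcon
    exact Set.disjoint_left.1 (hdis u v huv) h1 (Metric.mem_ball_self (hrad v))
  set k := (A.card + 99) / 100 with hk
  have hk2 : 2 ≤ k := by omega
  have hk1 : A.card ≤ 100 * k := by omega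
  have hk3 : 100 * (k - 1) < A.card := by omega
  -- choice of the scale
  let Q : Finset (V × V) := (A ×ˢ A).filter (fun q =>
    k ≤ (A.filter (fun c => dist (z c) (z q.1) ≤ dist (z q.2) (z q.1))).card)
  have hfar : ∀ F ⊆ A, k ≤ F.card → ∀ a ∈ F, ∃ b ∈ F, (a, b) ∈ Q := by
    intro F hF hkF a ha
    obtain ⟨b, hb, hmax⟩ := Finset.exists_max_image F (fun c => dist (z c) (z a)) ⟨a, ha⟩
    refine ⟨b, hb, Finset.mem_filter.2 ⟨Finset.mem_product.2 ⟨hF ha, hF hb⟩, ?_⟩⟩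
    refine hkF.trans (Finset.card_le_card fun c hc => ?_)
    exact Finset.mem_filter.2 ⟨hF hc, hmax c hc⟩
  have hQ : Q.Nonempty := by
    obtain ⟨a, ha⟩ : A.Nonempty := by rw [← Finset.card_pos]; omega
    obtain ⟨b, _, hb⟩ := hfar A subset_rfl (by omega) a ha
    exact ⟨_, hb⟩
  obtain ⟨⟨a, b⟩, hab, hmin⟩ := Finset.exists_min_image Q (fun q => dist (z q.2) (z q.1)) hQ
  set p := z a with hp
  set r := dist (z b) p with hr
  have hcard : k ≤ (A.filter (fun c => dist (z c) p ≤ r)).card := (Finset.mem_filter.1 hab).2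
  have hra : rad a ≤ r := by
    obtain ⟨c, hc, hca⟩ := Finset.exists_mem_ne (lt_of_lt_of_le (by omega) hcard) a
    have h1 := (Finset.mem_filter.1 hc).2
    have h2 := hcen a c hca.symm
    rw [dist_comm] at h2
    exact h2.trans h1
  have hr0 : 0 < r := (hrad a).trans_le hra
  have hcount : (A.filter (fun c => dist (z c) p ≤ 2 * r)).card ≤ (k - 1) * 81 := by
    refine covering_count _ z p r hr0 (k - 1) (fun x hx => (Finset.mem_filter.1 hx).2) ?_
    intro F hF hFd
    by_contra hcon
    have hkF : k ≤ F.card := by omega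
    obtain ⟨a', ha'⟩ : F.Nonempty := by rw [← Finset.card_pos]; omega
    obtain ⟨b', hb', hq⟩ := hfar F (hF.trans (Finset.filter_subset _ _)) hkF a' ha'
    have h1 := hmin _ hq
    have h2 := hFd b' hb' a' ha'
    simp only at h1
    linarith
  -- the function
  set f : V → ℝ := fun x => max 0 (min 1 (dist (z x) p / r - 1)) with hf
  have hf0 : ∀ x, dist (z x) p ≤ r → f x = 0 := by
    intro x hx
    have : dist (z x) p / r ≤ 1 := by rw [div_le_one hr0]; exact hx
    simp only [hf]
    exact max_eq_left ((min_le_right _ _).trans (by linarith))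
  have hf1 : ∀ x, 2 * r ≤ dist (z x) p → f x = 1 := by
    intro x hx
    have : 2 ≤ dist (z x) p / r := by rw [le_div_iff₀ hr0]; exact hx
    simp only [hf]
    rw [min_eq_left (by linarith), max_eq_right (by norm_num)]
  have hlip : ∀ s t : ℝ, |max 0 (min 1 s) - max 0 (min 1 t)| ≤ min 1 |s - t| := by
    intro s t
    refine le_min ?_ ?_
    · have a1 : 0 ≤ max 0 (min 1 s) := le_max_left _ _
      have a2 : 0 ≤ max 0 (min 1 t) := le_max_left _ _
      have a3 : max 0 (min 1 s) ≤ 1 := max_le (by norm_num) (min_le_left _ _)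
      have a4 : max 0 (min 1 t) ≤ 1 := max_le (by norm_num) (min_le_left _ _)
      rw [abs_le]; constructor <;> linarith
    · have b1 := abs_max_sub_max_le_max 0 (min 1 s) 0 (min 1 t)
      have b2 := abs_min_sub_min_le_max 1 s 1 t
      simp only [sub_self, abs_zero, abs_nonneg, max_eq_right] at b1 b2
      exact b1.trans b2
  refine ⟨f, ?_, ?_, ?_⟩
  · set S : Finset V := Finset.univ.filter (fun x => dist (z x) p ≤ 4 * r + rad x) with hS
    set mm : V → ℝ := fun x => if x ∈ S then (min r (rad x) / r) ^ 2 else 0 with hmm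
    have hmm0 : ∀ x, 0 ≤ mm x := by
      intro x; simp only [hmm]; split_ifs <;> positivity
    have hsum : ∑ x, mm x ≤ 36 := by
      have h := packing_sum S z rad hrad hdis p r hr0 (fun x hx => (Finset.mem_filter.1 hx).2)
      have : ∑ x, mm x = (∑ x ∈ S, (min r (rad x)) ^ 2) / r ^ 2 := by
        rw [Finset.sum_div, hmm, Finset.sum_ite_mem, Finset.univ_inter]
        exact Finset.sum_congr rfl fun x _ => by rw [div_pow]
      rw [this, div_le_iff₀ (by positivity)]
      exact h
    have hedge0 : ∀ x y, G.Adj x y → dist (z y) p < 2 * r →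
        (f x - f y) ^ 2 ≤ 2 * (mm x + mm y) := by
      intro x y hxy hy
      have hry : rad y ≤ 2 * r := by
        by_cases hya : y = a
        · rw [hya]; linarith
        · exact (hcen y a hya).trans hy.le
      obtain ⟨q, hq1, hq2⟩ := (hadj x y hxy.ne).2 hxy
      rw [Metric.mem_closedBall] at hq1 hq2
      have hxy' : dist (z x) (z y) ≤ rad x + rad y := by
        have := dist_triangle_left (z x) (z y) q
        linarith
      have hxS : x ∈ S := by
        refine Finset.mem_filter.2 ⟨Finset.mem_univ _, ?_⟩
        have := dist_triangle (z x) (z y) p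
        linarith
      have hyS : y ∈ S := by
        refine Finset.mem_filter.2 ⟨Finset.mem_univ _, ?_⟩
        linarith [hrad y]
      have h1 : |f x - f y| ≤ min r (rad x) / r + min r (rad y) / r := by
        refine (hlip _ _).trans ?_
        have h2 : |dist (z x) p / r - 1 - (dist (z y) p / r - 1)| ≤ (rad x + rad y) / r := by
          have : dist (z x) p / r - 1 - (dist (z y) p / r - 1)
            = (dist (z x) p - dist (z y) p) / r := by ring
          rw [this, abs_div, abs_of_pos hr0]
          have := abs_dist_sub_le (z x) (z y) p
          gcongr
          linarith
        rw [← add_div, le_div_iff₀ hr0]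
        have hx0 := hrad x
        have hy0 := hrad y
        have h3 : min 1 |dist (z x) p / r - 1 - (dist (z y) p / r - 1)| * r ≤ r := by
          have := min_le_left 1 |dist (z x) p / r - 1 - (dist (z y) p / r - 1)|
          nlinarith
        have h4 : min 1 |dist (z x) p / r - 1 - (dist (z y) p / r - 1)| * r ≤ rad x + rad y := by
          have := (min_le_right 1 |dist (z x) p / r - 1 - (dist (z y) p / r - 1)|).trans h2
          rwa [le_div_iff₀ hr0] at this
        rcases le_total r (rad x) with h5 | h5 <;> rcases le_total r (rad y) with h6 | h6 <;>
          simp only [min_eq_left, min_eq_right, h5, h6] <;> linarith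
      simp only [hmm, hxS, hyS, if_true]
      have h7 : (f x - f y) ^ 2 ≤ (min r (rad x) / r + min r (rad y) / r) ^ 2 := by
        rw [← sq_abs]
        exact pow_le_pow_left₀ (abs_nonneg _) h1 2
      nlinarith [sq_nonneg (min r (rad x) / r - min r (rad y) / r)]
    have hedge : ∀ x y, aw G x y * ((f x - f y) * (f x - f y)) ≤
        aw G x y * (2 * mm x) + aw G x y * (2 * mm y) := by
      intro x y
      rw [← mul_add]
      by_cases hxy : G.Adj x y
      · refine mul_le_mul_of_nonneg_left ?_ (aw_nonneg G x y)
        rcases lt_or_ge (dist (z y) p) (2 * r) with h | h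
        · have := hedge0 x y hxy h
          nlinarith
        · rcases lt_or_ge (dist (z x) p) (2 * r) with h' | h'
          · have := hedge0 y x hxy.symm h'
            nlinarith
          · rw [hf1 x h', hf1 y h]
            have := hmm0 x
            have := hmm0 y
            norm_num
            linarith
      · simp [aw, hxy]
    have hd : ∀ x, dg G x ≤ M := fun x => by rw [dg_eq]; exact_mod_cast hM x
    have h1 : ∑ x, ∑ y, aw G x y * (2 * mm x) = 2 * ∑ x, dg G x * mm x := by
      rw [Finset.mul_sum]
      refine Finset.sum_congr rfl fun x _ => ?_
      rw [← Finset.sum_mul, dg]; ring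
    have h2 : ∑ x, ∑ y, aw G x y * (2 * mm y) = 2 * ∑ x, dg G x * mm x := by
      rw [← h1, Finset.sum_comm]
      refine Finset.sum_congr rfl fun x _ => Finset.sum_congr rfl fun y _ => by rw [aw_symm]
    have h3 : ∑ x, dg G x * mm x ≤ M * 36 := by
      calc ∑ x, dg G x * mm x ≤ ∑ x, (M : ℝ) * mm x :=
            Finset.sum_le_sum fun x _ => mul_le_mul_of_nonneg_right (hd x) (hmm0 x)
        _ = M * ∑ x, mm x := by rw [Finset.mul_sum]
        _ ≤ M * 36 := mul_le_mul_of_nonneg_left hsum (Nat.cast_nonneg M)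
    rw [en_eq]
    have h4 := Finset.sum_le_sum (fun x (_ : x ∈ Finset.univ) =>
      Finset.sum_le_sum (fun y (_ : y ∈ (Finset.univ : Finset V)) => hedge x y))
    simp only [Finset.sum_add_distrib] at h4
    rw [h1, h2] at h4
    linarith
  · refine hk1.trans (Nat.mul_le_mul_left _ (hcard.trans (Finset.card_le_card ?_)))
    intro x hx
    rw [Finset.mem_filter] at hx ⊢
    exact ⟨hx.1, hf0 x hx.2⟩
  · have h1 : (A.filter (fun c => ¬ dist (z c) p ≤ 2 * r)).card
        ≤ (A.filter (fun x => f x = 1)).card := by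
      refine Finset.card_le_card fun x hx => ?_
      rw [Finset.mem_filter] at hx ⊢
      exact ⟨hx.1, hf1 x (not_le.1 hx.2).le⟩
    have h2 := Finset.card_filter_add_card_filter_not (s := A) (fun c => dist (z c) p ≤ 2 * r)
    omega

lemma final_bound (M : ℕ) (hM1 : 1 ≤ M) (hG : G.Connected) (h2 : 2 ≤ Fintype.card V)
    (hM : ∀ v, G.degree v ≤ M) (hP : HasCirclePacking G) (v : V)
    (hlog : 20 ≤ Real.log (Fintype.card V)) :
    ENNReal.ofReal ((1 / (92160 * M ^ 2)) * (Fintype.card V : ℝ) *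
      Real.log (Fintype.card V) ^ 2) ≤ expCover G v := by
  classical
  obtain ⟨z, rad, hP⟩ := hP
  set n : ℝ := (Fintype.card V : ℝ) with hn
  set l : ℝ := Real.log n with hl
  have hn0 : 0 < n := by rw [hn]; exact_mod_cast (by omega : 0 < Fintype.card V)
  have hMpos : (1 : ℝ) ≤ M := by exact_mod_cast hM1
  have : Nontrivial V := Fintype.one_lt_card_iff_nontrivial.1 (by omega)
  have hd1 : ∀ x, 1 ≤ dg G x := by
    intro x
    rw [dg_eq]
    have := hG.preconnected.degree_pos_of_nontrivial x
    exact_mod_cast this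
  have hdM : ∀ x, dg G x ≤ M := fun x => by rw [dg_eq]; exact_mod_cast hM x
  have htn : n ≤ tot G := by
    have : ∑ _x : V, (1 : ℝ) ≤ tot G := Finset.sum_le_sum fun x _ => hd1 x
    simpa [hn] using this
  have htM : tot G ≤ M * n := by
    have : tot G ≤ ∑ _x : V, (M : ℝ) := Finset.sum_le_sum fun x _ => hdM x
    simpa [hn, mul_comm] using this
  have ht : 0 < tot G := hn0.trans_le htn
  have hdpos : ∀ x, 0 < dg G x := fun x => one_pos.trans_le (hd1 x)
  set c : ℝ := 1 / (92160 * M ^ 2) with hc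
  have hc0 : 0 < c := by positivity
  set X : ℝ := c * n * l ^ 2 with hX
  have hX0 : 0 < X := by positivity
  by_cases hcase : ∃ w, X ≤ hit G w v
  · obtain ⟨w, hw⟩ := hcase
    exact (ENNReal.ofReal_le_ofReal hw).trans (hit_le_expCover G hG hdpos w v)
  push Not at hcase
  have hK : ∀ x, ∑ w, dg G w * hit G w x ≤ tot G * X := by
    intro x
    rw [kemeny G hG x v, tot, Finset.sum_mul]
    exact Finset.sum_le_sum fun w _ => mul_le_mul_of_nonneg_left (hcase w).le (dg_nonneg G w)
  have hphi0 : ∀ w, 0 ≤ phi G w := fun w => div_nonneg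
    (Finset.sum_nonneg fun x _ => mul_nonneg (hit_nonneg G hG w x) (dg_nonneg G x)) ht.le
  have hphisum : ∑ w, phi G w ≤ M * n * X := by
    have e1 : ∑ w, phi G w ≤ ∑ w, dg G w * phi G w :=
      Finset.sum_le_sum fun w _ => le_mul_of_one_le_left (hphi0 w) (hd1 w)
    have e2 : ∑ w, dg G w * phi G w = (∑ x, dg G x * ∑ w, dg G w * hit G w x) / tot G := by
      simp only [phi, Finset.mul_sum, Finset.sum_div]
      rw [Finset.sum_comm]
      refine Finset.sum_congr rfl fun x _ => ?_
      refine Finset.sum_congr rfl fun w _ => by ring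
    have e3 : ∑ x, dg G x * ∑ w, dg G w * hit G w x ≤ tot G * (tot G * X) := by
      nth_rewrite 1 [tot]
      rw [Finset.sum_mul]
      exact Finset.sum_le_sum fun x _ => mul_le_mul_of_nonneg_left (hK x) (dg_nonneg G x)
    have e4 : (∑ x, dg G x * ∑ w, dg G w * hit G w x) / tot G ≤ tot G * X := by
      rw [div_le_iff₀ ht]; linarith
    have e5 : tot G * X ≤ M * n * X := mul_le_mul_of_nonneg_right htM hX0.le
    linarith
  set T : ℝ := 2 * M * X with hT
  have hT0 : 0 < T := by positivity
  set V0 : Finset V := Finset.univ.filter (fun w => phi G w ≤ T) with hV0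
  have hV0card : n / 2 ≤ V0.card := by
    have e1 : ((Finset.univ.filter (fun w => ¬ phi G w ≤ T)).card : ℝ) * T ≤ M * n * X := by
      refine le_trans ?_ hphisum
      rw [← nsmul_eq_mul, ← Finset.sum_const]
      refine le_trans (Finset.sum_le_sum fun w hw => (not_le.1 (Finset.mem_filter.1 hw).2).le) ?_
      exact Finset.sum_le_sum_of_subset_of_nonneg (Finset.subset_univ _) fun w _ _ => hphi0 w
    have e2 := Finset.card_filter_add_card_filter_not (s := (Finset.univ : Finset V))
      (fun w => phi G w ≤ T)
    rw [Finset.card_univ] at e2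
    have e3 : (V0.card : ℝ) + (Finset.univ.filter (fun w => ¬ phi G w ≤ T)).card = n := by
      rw [hn, ← e2]; push_cast; rfl
    have e4 : M * n * X = (n / 2) * T := by rw [hT]; ring
    rw [e4] at e1
    have := le_of_mul_le_mul_right e1 hT0
    linarith
  -- choice of the number of scales
  set j : ℕ := ⌊l / 10⌋₊ with hj
  have hj1 : (j : ℝ) ≤ l / 10 := Nat.floor_le (by linarith)
  have hj2 : l / 20 ≤ j := by
    have := Nat.lt_floor_add_one (l / 10)
    linarith
  have hlog100 : Real.log 100 ≤ 5 := by
    rw [Real.log_le_iff_le_exp (by norm_num)]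
    have h := Real.exp_one_gt_d9
    have : Real.exp 5 = Real.exp 1 ^ 5 := by rw [← Real.exp_nat_mul]; norm_num
    rw [this]
    calc (100 : ℝ) ≤ 2.7 ^ 5 := by norm_num
      _ ≤ _ := pow_le_pow_left₀ (by norm_num) (by linarith) 5
  obtain ⟨W, hWV, hWcard, hWsep⟩ := exists_separated G hG ht (72 * M) (by positivity)
    (splitting G M hM z rad hP) j V0
  have hWcard' : n / 2 ≤ (100 : ℝ) ^ j * W.card := by
    refine hV0card.trans ?_
    exact_mod_cast hWcard
  have hWpos : 0 < W.card := by
    by_contra hcon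
    have : W.card = 0 := by omega
    rw [this] at hWcard'
    simp at hWcard'
    linarith
  have hWlog : l / 2 - 1 ≤ Real.log W.card := by
    have hWp : (0 : ℝ) < W.card := by exact_mod_cast hWpos
    have e1 := Real.log_le_log (by positivity) hWcard'
    rw [Real.log_mul (by positivity) hWp.ne', Real.log_pow, Real.log_div hn0.ne' (by norm_num)]
      at e1
    have e2 : (j : ℝ) * Real.log 100 ≤ l / 10 * 5 :=
      mul_le_mul hj1 hlog100 (Real.log_nonneg (by norm_num)) (by linarith)
    have e3 : Real.log 2 ≤ 1 := by linarith [Real.log_two_lt_d9]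
    linarith
  obtain ⟨k, hk⟩ : ∃ k, W.card = k + 1 := ⟨W.card - 1, by omega⟩
  have hharm : l / 4 ≤ ((harmonic (k + 1) : ℚ) : ℝ) - 1 := by
    have e1 := log_add_one_le_harmonic (k + 1)
    have e2 : Real.log W.card ≤ Real.log (((k + 1 : ℕ) : ℝ) + 1) := by
      rw [hk]
      exact Real.log_le_log (by positivity) (by linarith)
    have e3 : Real.log (((k + 1 : ℕ) : ℝ) + 1) ≤ (harmonic (k + 1) : ℝ) := by
      simpa using e1
    linarith
  set r : ℝ := j * (tot G / (4 * (72 * M))) / 2 with hr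
  have hmat := matthews G hG (phi G) r T k W hk
    (fun s hs => (Finset.mem_filter.1 (hWV hs)).2) (fun s hs x hx hsx => by
      have e1 := hWsep s hs x hx hsx
      have e2 := hit_sub G hG ht x s
      rw [hr]; linarith) v
  refine le_trans (ENNReal.ofReal_le_ofReal ?_)
    (cu_le_expCover G hG hdpos (phi G) hphi0 W (Finset.card_pos.1 hWpos) v)
  refine le_trans ?_ hmat
  have hr1 : l / 20 * (n / (4 * (72 * M))) / 2 ≤ r := by
    rw [hr]
    have : n / (4 * (72 * M)) ≤ tot G / (4 * (72 * (M : ℝ))) := by gcongr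
    gcongr
  have hr2 : l / 20 * (n / (4 * (72 * M))) / 2 * (l / 4)
      ≤ r * (((harmonic (k + 1) : ℚ) : ℝ) - 1) := by
    refine mul_le_mul hr1 hharm (by linarith) ?_
    rw [hr]; positivity
  have hfin : l / 20 * (n / (4 * (72 * M))) / 2 * (l / 4) = 2 * M * X := by
    rw [hX, hc]; field_simp; norm_num
  have hMX : X ≤ M * X := le_mul_of_one_le_left hX0.le hMpos
  have : T / 2 = M * X := by rw [hT]; ring
  linarith

end CoverTime

/-- For every `M ≥ 1` there is `c > 0` (depending only on `M`) such that
for every finite connected simple graph `G` with `n ≥ 2` vertices, maximal degree at most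
`M`, admitting a circle packing (i.e. planar), and every vertex `v`, the expected cover
time of the simple random walk started at `v` is at least `c · n · (log n)²`. -/
theorem cover_time_lower_bound_planar :
    ∀ M : ℕ, 1 ≤ M → ∃ c : ℝ, 0 < c ∧
      ∀ (V : Type) (_ : Fintype V) (_ : DecidableEq V) (G : SimpleGraph V)
        (_ : DecidableRel G.Adj),
        G.Connected → 2 ≤ Fintype.card V → (∀ v : V, G.degree v ≤ M) →
        HasCirclePacking G →
        ∀ v : V,
          ENNReal.ofReal (c * (Fintype.card V : ℝ) * Real.log (Fintype.card V) ^ 2)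
            ≤ expCover G v := by
  intro M hM1
  have hMpos : (1 : ℝ) ≤ M := by exact_mod_cast hM1
  refine ⟨min (1 / (92160 * M ^ 2)) (1 / (Real.exp 20 * 400)), by positivity, ?_⟩
  intro V _ _ G _ hG h2 hM hP v
  have hn : (2 : ℝ) ≤ (Fintype.card V : ℝ) := by exact_mod_cast h2
  have hl0 : 0 ≤ Real.log (Fintype.card V) := Real.log_nonneg (by linarith)
  rcases le_total 20 (Real.log (Fintype.card V)) with hlog | hlog
  · refine le_trans (ENNReal.ofReal_le_ofReal ?_) (final_bound G M hM1 hG h2 hM hP v hlog)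
    gcongr
    exact min_le_left _ _
  · refine le_trans ?_ (one_le_expCover G h2 v)
    rw [← ENNReal.ofReal_one]
    apply ENNReal.ofReal_le_ofReal
    have h1 : (Fintype.card V : ℝ) ≤ Real.exp 20 := by
      rwa [Real.log_le_iff_le_exp (by linarith)] at hlog
    have h3 : Real.log (Fintype.card V) ^ 2 ≤ 400 := by nlinarith
    calc min (1 / (92160 * (M : ℝ) ^ 2)) (1 / (Real.exp 20 * 400)) * (Fintype.card V : ℝ)
          * Real.log (Fintype.card V) ^ 2
        ≤ 1 / (Real.exp 20 * 400) * Real.exp 20 * 400 := by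
          gcongr
          exact min_le_right _ _
      _ = 1 := by field_simp
end

section
/- Let G = (V,E) be a finite connected simple graph with n ≥ 2 vertices which admits a circle packing (equivalently, is planar). Then for every vertex v ∈ V, the expected cover time of the simple random walk started at v satisfies E_v C < 6 n². -/
open Finset
open scoped ENNReal

/-! ### Part 1: cover time bound by a potential function -/

namespace CoverPlanar

noncomputable def cs {V : Type*} [Fintype V] [DecidableEq V] (G : SimpleGraph V)
    [DecidableRel G.Adj] (k : ℕ) (x : V) (A : Finset V) : ℝ :=
  ∑ f : Fin (k + 1) → V, if f 0 = x ∧ ∃ w, w ∉ A ∧ ∀ i, f i ≠ w then pathProb G f else 0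

lemma stepProb_nonneg {V : Type*} [Fintype V] (G : SimpleGraph V)
    [DecidableRel G.Adj] (x y : V) : 0 ≤ stepProb G x y := by
  unfold stepProb
  split_ifs <;> positivity

lemma pathProb_cons {V : Type*} [Fintype V] (G : SimpleGraph V)
    [DecidableRel G.Adj] {k : ℕ} (a : V) (g : Fin (k + 1) → V) :
    pathProb G (Fin.cons a g : Fin (k + 1 + 1) → V) = stepProb G a (g 0) * pathProb G g := by
  unfold pathProb
  rw [Fin.prod_univ_succ]
  rfl

lemma cs_succ {V : Type*} [Fintype V] [DecidableEq V] (G : SimpleGraph V)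
    [DecidableRel G.Adj] (k : ℕ) (x : V) (A : Finset V) :
    cs G (k + 1) x A = ∑ y, stepProb G x y * cs G k y (insert x A) := by
  unfold cs
  rw [← Equiv.sum_comp (Fin.consEquiv (fun _ : Fin (k + 1 + 1) => V)), Fintype.sum_prod_type]
  simp only [Fin.consEquiv_apply, Finset.mul_sum]
  rw [Finset.sum_eq_single x]
  · rw [Finset.sum_comm]
    refine Finset.sum_congr rfl fun g _ => ?_
    rw [Finset.sum_eq_single (g 0)]
    · rw [show pathProb G ((Fin.consEquiv (fun _ : Fin (k + 1 + 1) => V)) (x, g)) = _ from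
        pathProb_cons G x g]
      simp only [Fin.cons_zero, true_and, Finset.mem_insert, not_or, Fin.forall_fin_succ (n := k + 1),
        Fin.cons_succ, mul_ite, mul_zero]
      refine if_congr ?_ rfl rfl
      constructor
      · rintro ⟨w, h1, h2, h3⟩
        exact ⟨w, ⟨fun h => h2 h.symm, h1⟩, h3⟩
      · rintro ⟨w, ⟨h1, h2⟩, h3⟩
        exact ⟨w, h2, fun h => h1 h.symm, h3⟩
    · intro b _ hb
      rw [if_neg, mul_zero]
      rintro ⟨h, _⟩
      exact hb h.symm
    · simp
  · intro b _ hb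
    refine Finset.sum_eq_zero fun g _ => ?_
    rw [if_neg]
    rintro ⟨h, _⟩
    exact hb (by simpa using h)
  · simp

lemma cs_zero_le {V : Type*} [Fintype V] [DecidableEq V] (G : SimpleGraph V)
    [DecidableRel G.Adj] (x : V) (A : Finset V) : cs G 0 x A ≤ 1 := by
  unfold cs
  calc _ ≤ ∑ f : Fin 1 → V, if f = fun _ => x then (1 : ℝ) else 0 := by
        refine Finset.sum_le_sum fun f _ => ?_
        simp only [pathProb, Finset.univ_eq_empty, Finset.prod_empty]
        by_cases h : f = fun _ => x
        · rw [if_pos h]; split_ifs <;> norm_num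
        · rw [if_neg h, if_neg]
          rintro ⟨h0, _⟩
          apply h
          funext i
          rw [show i = 0 from Subsingleton.elim (α := Fin 1) i 0]; exact h0
    _ = 1 := by simp

/-- potential: cost of visiting the list of targets successively -/
def pot {V : Type*} (h : V → V → ℝ) : V → List V → ℝ
  | _, [] => 0
  | x, w :: L => h w x + pot h w L

lemma pot_nonneg {V : Type*} (h : V → V → ℝ) (h0 : ∀ w x, 0 ≤ h w x) (x : V) (L : List V) :
    0 ≤ pot h x L := by
  induction L generalizing x with
  | nil => exact le_rfl
  | cons w L ih => exact add_nonneg (h0 _ _) (ih _)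

lemma sum_cs_le {V : Type*} [Fintype V] [DecidableEq V] (G : SimpleGraph V)
    [DecidableRel G.Adj] (h : V → V → ℝ) (h0 : ∀ w x, 0 ≤ h w x) (hw : ∀ w, h w w = 0)
    (hs : ∀ x, ∑ y, stepProb G x y = 1)
    (hh : ∀ w x, x ≠ w → 1 + ∑ y, stepProb G x y * h w y ≤ h w x)
    (N : ℕ) (x : V) (A : Finset V) (R : List V) (hR : ∀ w, w ∉ A → w = x ∨ w ∈ R) :
    ∑ k ∈ Finset.range N, cs G k x A ≤ pot h x R := by
  induction N generalizing x A R with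
  | zero => simpa using pot_nonneg h h0 x R
  | succ N ihN =>
    induction R with
    | nil =>
      refine (Finset.sum_eq_zero fun k _ => ?_).le
      unfold cs
      refine Finset.sum_eq_zero fun f _ => ?_
      rw [if_neg]
      rintro ⟨hf, w, hA, hi⟩
      rcases hR w hA with rfl | h
      · exact hi 0 hf
      · simp at h
    | cons w L ih =>
      by_cases hxw : x = w
      · subst hxw
        simp only [pot, hw, zero_add]
        apply ih
        intro w hA
        rcases hR w hA with rfl | h
        · exact Or.inl rfl
        · simpa using h
      · rw [Finset.sum_range_succ']
        simp only [cs_succ]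
        rw [Finset.sum_comm]
        simp only [← Finset.mul_sum]
        have h1 : ∀ y, stepProb G x y * ∑ k ∈ Finset.range N, cs G k y (insert x A) ≤
            stepProb G x y * (h w y + pot h w L) := by
          intro y
          refine mul_le_mul_of_nonneg_left ?_ (stepProb_nonneg G x y)
          refine ihN y (insert x A) (w :: L) ?_
          intro u hu
          rw [Finset.mem_insert, not_or] at hu
          rcases hR u hu.2 with h | h
          · exact absurd h hu.1
          · exact Or.inr h
        calc _ ≤ ∑ y, stepProb G x y * (h w y + pot h w L) + 1 :=
              add_le_add (Finset.sum_le_sum fun y _ => h1 y) (cs_zero_le G x A)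
          _ = 1 + ∑ y, stepProb G x y * h w y + pot h w L := by
              simp only [mul_add, Finset.sum_add_distrib, ← Finset.sum_mul, hs]; ring
          _ ≤ _ := by
              have := hh w x hxw
              simp only [pot]; linarith

lemma pathProb_nonneg {V : Type*} [Fintype V] (G : SimpleGraph V)
    [DecidableRel G.Adj] {k : ℕ} (f : Fin (k + 1) → V) : 0 ≤ pathProb G f :=
  Finset.prod_nonneg fun _ _ => stepProb_nonneg _ _ _

lemma expCover_le {V : Type*} [Fintype V] [DecidableEq V] (G : SimpleGraph V)
    [DecidableRel G.Adj] (h : V → V → ℝ) (h0 : ∀ w x, 0 ≤ h w x) (hw : ∀ w, h w w = 0)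
    (hs : ∀ x, ∑ y, stepProb G x y = 1)
    (hh : ∀ w x, x ≠ w → 1 + ∑ y, stepProb G x y * h w y ≤ h w x)
    (x : V) (R : List V) (hR : ∀ w, w = x ∨ w ∈ R) :
    expCover G x ≤ ENNReal.ofReal (pot h x R) := by
  unfold expCover
  rw [ENNReal.tsum_eq_iSup_nat]
  refine iSup_le fun N => ?_
  rw [← ENNReal.ofReal_sum_of_nonneg]
  · apply ENNReal.ofReal_le_ofReal
    refine le_trans (le_of_eq ?_) (sum_cs_le G h h0 hw hs hh N x ∅ R (fun w _ => hR w))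
    simp [cs, coverSurvival]
  · intro k _
    refine Finset.sum_nonneg fun f _ => ?_
    split_ifs
    · exact pathProb_nonneg G f
    · exact le_rfl

end CoverPlanar

/-! ### Part 2: hitting time potentials from the graph Laplacian -/

namespace CoverPlanar

lemma lap_solve {V : Type*} [Fintype V] [DecidableEq V] (G : SimpleGraph V)
    [DecidableRel G.Adj] (hG : G.Connected) (b : V → ℝ) (hb : ∑ x, b x = 0) :
    ∃ g : V → ℝ, (G.lapMatrix ℝ).mulVec g = b := by
  classical
  have := hG.nonempty
  have hsum : ∀ g : V → ℝ, ∑ x, (G.lapMatrix ℝ).mulVec g x = 0 := by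
    intro g
    have h1 : (fun _ => (1 : ℝ)) ⬝ᵥ (G.lapMatrix ℝ).mulVec g = 0 := by
      rw [Matrix.dotProduct_mulVec, ← Matrix.mulVec_transpose, (G.isSymm_lapMatrix (R := ℝ)).eq,
        SimpleGraph.lapMatrix_mulVec_const_eq_zero, zero_dotProduct]
    simpa [dotProduct] using h1
  have hn : (0 : ℝ) < Fintype.card V := by exact_mod_cast Fintype.card_pos
  let T : (V → ℝ) →ₗ[ℝ] (V → ℝ) :=
    { toFun := fun g => (G.lapMatrix ℝ).mulVec g + fun _ => ∑ x, g x
      map_add' := by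
        intro f g
        ext x
        simp [Matrix.mulVec_add, Finset.sum_add_distrib]; ring
      map_smul' := by
        intro c g
        ext x
        simp [Matrix.mulVec_smul, Finset.mul_sum, mul_add] }
  have key : ∀ g : V → ℝ, ∑ x, T g x = Fintype.card V * ∑ x, g x := by
    intro g
    have : ∀ x, T g x = (G.lapMatrix ℝ).mulVec g x + ∑ x, g x := fun x => rfl
    simp only [this, Finset.sum_add_distrib, hsum]
    simp
  have inj : Function.Injective T := by
    rw [← LinearMap.ker_eq_bot, LinearMap.ker_eq_bot']
    intro g hg
    have h1 : ∑ x, g x = 0 := by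
      have := key g
      rw [hg] at this
      simp only [Pi.zero_apply, Finset.sum_const_zero] at this
      rcases mul_eq_zero.mp this.symm with h | h
      · exact absurd h hn.ne'
      · exact h
    have h2 : (G.lapMatrix ℝ).mulVec g = 0 := by
      have : T g = (G.lapMatrix ℝ).mulVec g + fun _ => ∑ x, g x := rfl
      rw [hg, h1] at this
      ext x
      have := congrFun this x
      simpa using this.symm
    rw [SimpleGraph.lapMatrix_mulVec_eq_zero_iff_forall_reachable] at h2
    ext x
    have h3 : ∀ y, g y = g x := fun y => h2 y x (hG.preconnected y x)
    simp only [h3, Finset.sum_const, Finset.card_univ, nsmul_eq_mul] at h1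
    rcases mul_eq_zero.mp h1 with h | h
    · exact absurd h hn.ne'
    · exact h
  obtain ⟨g, hg⟩ := (LinearMap.injective_iff_surjective.mp inj) b
  refine ⟨g, ?_⟩
  have h1 : ∑ x, g x = 0 := by
    have := key g
    rw [hg, hb] at this
    rcases mul_eq_zero.mp this.symm with h | h
    · exact absurd h hn.ne'
    · exact h
  have : T g = (G.lapMatrix ℝ).mulVec g + fun _ => ∑ x, g x := rfl
  rw [hg, h1] at this
  ext x
  have := congrFun this x
  simpa using this.symm

lemma exists_hit {V : Type*} [Fintype V] [DecidableEq V] (G : SimpleGraph V)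
    [DecidableRel G.Adj] (hG : G.Connected) (hd : ∀ x, 0 < G.degree x) :
    ∃ h : V → V → ℝ, (∀ w x, 0 ≤ h w x) ∧ (∀ w, h w w = 0) ∧
      (∀ w x, x ≠ w → 1 + ∑ y, stepProb G x y * h w y ≤ h w x) ∧
      ∀ u v, G.Adj u v → h v u + h u v ≤ ∑ x, (G.degree x : ℝ) := by
  classical
  set D : ℝ := ∑ x, (G.degree x : ℝ) with hD
  have h1 : ∀ w : V, ∃ g : V → ℝ, (G.lapMatrix ℝ).mulVec g =
      fun x => (G.degree x : ℝ) - if x = w then D else 0 := by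
    intro w
    apply lap_solve G hG
    rw [Finset.sum_sub_distrib]
    simp [hD]
  choose g hg using h1
  have hlap : ∀ w x, (G.degree x : ℝ) * g w x - ∑ u ∈ G.neighborFinset x, g w u =
      (G.degree x : ℝ) - if x = w then D else 0 := by
    intro w x
    rw [← SimpleGraph.lapMatrix_mulVec_apply, hg]
  have hdp : ∀ x, (0 : ℝ) < G.degree x := fun x => by exact_mod_cast hd x
  have hstep : ∀ (f : V → ℝ) x, ∑ y, stepProb G x y * f y =
      (G.degree x : ℝ)⁻¹ * ∑ u ∈ G.neighborFinset x, f u := by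
    intro f x
    rw [Finset.mul_sum, SimpleGraph.neighborFinset_eq_filter, Finset.sum_filter]
    refine Finset.sum_congr rfl fun y _ => ?_
    unfold stepProb
    split_ifs <;> simp
  refine ⟨fun w x => g w x - g w w, ?_, ?_, ?_, ?_⟩
  · intro w x
    have := hG.nonempty
    obtain ⟨x0, -, hx0⟩ := Finset.exists_min_image Finset.univ (g w) Finset.univ_nonempty
    have hx0' : x0 = w := by
      by_contra hne
      have h2 := hlap w x0
      rw [if_neg hne] at h2
      have h3 : (G.degree x0 : ℝ) * g w x0 ≤ ∑ u ∈ G.neighborFinset x0, g w u := by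
        have := Finset.card_nsmul_le_sum (G.neighborFinset x0) (g w) (g w x0)
          (fun u _ => hx0 u (Finset.mem_univ _))
        simpa using this
      have := hdp x0
      linarith
    have := hx0 x (Finset.mem_univ _)
    rw [hx0'] at this
    show 0 ≤ g w x - g w w
    linarith
  · intro w; simp
  · intro w x hx
    have h2 := hlap w x
    rw [if_neg hx] at h2
    show 1 + ∑ y, stepProb G x y * (g w y - g w w) ≤ g w x - g w w
    rw [hstep]
    rw [Finset.sum_sub_distrib]
    simp only [Finset.sum_const, SimpleGraph.card_neighborFinset_eq_degree, nsmul_eq_mul]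
    have h3 : ∑ u ∈ G.neighborFinset x, g w u = (G.degree x : ℝ) * g w x - G.degree x := by linarith
    rw [h3]
    have := (hdp x).ne'
    apply le_of_eq
    field_simp
    ring
  · intro u v huv
    have hne : u ≠ v := huv.ne
    show g v u - g v v + (g u v - g u u) ≤ D
    set q : V → ℝ := g v - g u with hq
    set c : ℝ := g v u - g v v + (g u v - g u u) with hc
    have hcq : c = q u - q v := by simp only [hq, hc, Pi.sub_apply]; ring
    have e1 : Matrix.toLinearMap₂' ℝ (G.lapMatrix ℝ) q q = D * c := by
      rw [Matrix.toLinearMap₂'_apply', hcq]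
      have : (G.lapMatrix ℝ).mulVec q = fun x => (if x = u then D else 0) - if x = v then D else 0 := by
        rw [hq, Matrix.mulVec_sub, hg, hg]
        ext x
        simp
      rw [this]
      simp [dotProduct, mul_sub, Finset.sum_sub_distrib]
      ring
    have e2 : c ^ 2 ≤ Matrix.toLinearMap₂' ℝ (G.lapMatrix ℝ) q q := by
      rw [SimpleGraph.lapMatrix_toLinearMap₂']
      have hnn : ∀ i j, 0 ≤ (if G.Adj i j then (q i - q j) ^ 2 else 0) := by
        intro i j; split_ifs <;> positivity
      have a1 : ∀ i j, G.Adj i j → (q i - q j) ^ 2 ≤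
          ∑ j, if G.Adj i j then (q i - q j) ^ 2 else 0 := by
        intro i j hij
        have := Finset.single_le_sum (f := fun j => if G.Adj i j then (q i - q j) ^ 2 else 0)
          (fun j _ => hnn i j) (Finset.mem_univ j)
        simpa [hij] using this
      have a2 : (q u - q v) ^ 2 + (q v - q u) ^ 2 ≤
          ∑ i, ∑ j, if G.Adj i j then (q i - q j) ^ 2 else 0 := by
        calc _ ≤ ∑ i ∈ {u, v}, ∑ j, (if G.Adj i j then (q i - q j) ^ 2 else 0) := by
              rw [Finset.sum_pair hne]
              exact add_le_add (a1 u v huv) (a1 v u huv.symm)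
          _ ≤ _ := Finset.sum_le_sum_of_subset_of_nonneg (Finset.subset_univ _)
              (fun i _ _ => Finset.sum_nonneg fun j _ => hnn i j)
      rw [hcq]
      have : (q v - q u) ^ 2 = (q u - q v) ^ 2 := by ring
      linarith
    have hDpos : 0 < D := by
      have := Finset.single_le_sum (f := fun x => (G.degree x : ℝ))
          (fun j _ => (hdp j).le) (Finset.mem_univ u)
      have h2 := hdp u
      linarith
    by_contra hlt
    push Not at hlt
    rw [e1] at e2
    nlinarith

end CoverPlanar

/-! ### Part 3: the tour along a spanning tree -/

namespace CoverPlanar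

lemma tour_insert {V : Type*} [DecidableEq V] (h : V → V → ℝ) (a b v : V) (R : List V)
    (ha : a ∈ v :: R) : ∃ R' : List V, pot h v R' = pot h v R + (h b a + h a b) ∧
      (v :: R').toFinset = insert b (v :: R).toFinset := by
  induction R generalizing v with
  | nil =>
    have : a = v := by simpa using ha
    subst this
    refine ⟨[b, a], by simp [pot], ?_⟩
    ext x; simp
  | cons w L ih =>
    by_cases hav : a = v
    · subst hav
      refine ⟨b :: a :: w :: L, by simp only [pot]; ring, ?_⟩
      ext x; simp
    · have ha' : a ∈ w :: L := by
        rcases List.mem_cons.mp ha with h | h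
        · exact absurd h hav
        · exact h
      obtain ⟨L', h1, h2⟩ := ih w ha'
      refine ⟨w :: L', by simp only [pot]; rw [h1]; ring, ?_⟩
      rw [List.toFinset_cons, h2, List.toFinset_cons (a := v), Finset.insert_comm]

lemma exists_tour {V : Type*} [Fintype V] [DecidableEq V] (G : SimpleGraph V)
    (hG : G.Connected) (h : V → V → ℝ) (D : ℝ)
    (hD : ∀ u v, G.Adj u v → h v u + h u v ≤ D) (v : V) (m : ℕ) (hm : m < Fintype.card V) :
    ∃ R : List V, pot h v R ≤ m * D ∧ (v :: R).toFinset.card = m + 1 := by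
  induction m with
  | zero => exact ⟨[], by simp [pot], by simp⟩
  | succ m ih =>
    obtain ⟨R, h1, h2⟩ := ih (by omega)
    have hne : ∃ w, w ∉ (v :: R).toFinset := by
      by_contra hcon
      push Not at hcon
      have : (v :: R).toFinset = Finset.univ := Finset.eq_univ_iff_forall.mpr hcon
      rw [this, Finset.card_univ] at h2
      omega
    obtain ⟨w, hw⟩ := hne
    obtain ⟨p⟩ := hG.preconnected v w
    obtain ⟨d, -, hd1, hd2⟩ := p.exists_boundary_dart (↑(v :: R).toFinset : Set V)
      (by simp) (by simpa using hw)
    have hd1' : d.fst ∈ (v :: R).toFinset := by exact_mod_cast hd1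
    have hd2' : d.snd ∉ (v :: R).toFinset := by exact_mod_cast hd2
    obtain ⟨R', h3, h4⟩ := tour_insert h d.fst d.snd v R (List.mem_toFinset.mp hd1')
    refine ⟨R', ?_, ?_⟩
    · have := hD _ _ d.adj
      push_cast
      linarith
    · rw [h4, Finset.card_insert_of_notMem hd2', h2]

lemma expCover_le_tour {V : Type*} [Fintype V] [DecidableEq V] (G : SimpleGraph V)
    [DecidableRel G.Adj] (hG : G.Connected) (hn : 2 ≤ Fintype.card V) (v : V) :
    expCover G v ≤ ENNReal.ofReal (((Fintype.card V : ℝ) - 1) * ∑ x, (G.degree x : ℝ)) := by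
  have : Nontrivial V := Fintype.one_lt_card_iff_nontrivial.mp hn
  have hd : ∀ x, 0 < G.degree x := fun x => hG.preconnected.degree_pos_of_nontrivial x
  obtain ⟨h, h0, hw, hh, hD⟩ := exists_hit G hG hd
  obtain ⟨R, h1, h2⟩ := exists_tour G hG h _ hD v (Fintype.card V - 1) (by omega)
  have h3 : (v :: R).toFinset = Finset.univ := by
    rw [← Finset.card_eq_iff_eq_univ]; omega
  refine (expCover_le G h h0 hw ?_ hh v R ?_).trans (ENNReal.ofReal_le_ofReal ?_)
  · intro x
    have : (G.degree x : ℝ) ≠ 0 := by exact_mod_cast (hd x).ne'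
    simp only [stepProb]
    rw [← Finset.sum_filter, ← SimpleGraph.neighborFinset_eq_filter]
    simp [this]
  · intro w
    have : w ∈ (v :: R).toFinset := by rw [h3]; exact Finset.mem_univ _
    simpa using this
  · rw [Nat.cast_sub (by omega)] at h1
    simpa using h1

end CoverPlanar

/-! ### Part 4: a straight line drawing has at most `3 n` edges (sweep argument) -/

namespace CoverPlanar

/-- a straight line drawing with distinct abscissas and no crossings -/
structure Drawing {V : Type*} (G : SimpleGraph V) where
  X : V → ℝ
  Y : V → ℝ
  sl : V → V → ℝ
  ht : V → V → ℝ → ℝ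
  E : V → V → Prop
  hE : ∀ a b, E a b ↔ G.Adj a b ∧ X a < X b
  Xinj : Function.Injective X
  ht_left : ∀ a b x, E a b → ht a b x = Y a + sl a b * (x - X a)
  ht_right : ∀ a b x, E a b → ht a b x = Y b + sl a b * (x - X b)
  nc : ∀ a b c d x, E a b → E c d → X a < x → x < X b → X c < x → x < X d →
    ht a b x = ht c d x → a = c ∧ b = d
  nv : ∀ a b c, E a b → X a < X c → X c < X b → ht a b (X c) ≠ Y c

namespace Drawing

variable {V : Type*} {G : SimpleGraph V} (P : Drawing G)

/-- edge `ab` is below edge `cd` -/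
def below (a b c d : V) : Prop :=
  ∃ x, P.X a < x ∧ x < P.X b ∧ P.X c < x ∧ x < P.X d ∧ P.ht a b x < P.ht c d x

lemma lt {a b : V} (h : P.E a b) : P.X a < P.X b := ((P.hE a b).1 h).2

lemma htl {a b : V} (h : P.E a b) : P.ht a b (P.X a) = P.Y a := by
  rw [P.ht_left a b _ h]; ring

lemma htr {a b : V} (h : P.E a b) : P.ht a b (P.X b) = P.Y b := by
  rw [P.ht_right a b _ h]; ring

lemma sign {a b c d : V} (h1 : P.E a b) (h2 : P.E c d) (hb : P.below a b c d) (x : ℝ)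
    (xa : P.X a ≤ x) (xb : x ≤ P.X b) (xc : P.X c ≤ x) (xd : x ≤ P.X d) :
    P.ht a b x ≤ P.ht c d x := by
  obtain ⟨y, ya, yb, yc, yd, hy⟩ := hb
  by_contra hlt
  push Not at hlt
  set p := P.ht c d y - P.ht a b y with hp
  set q := P.ht a b x - P.ht c d x with hq
  have hp0 : 0 < p := by linarith
  have hq0 : 0 < q := by linarith
  set l := p / (p + q) with hl
  have l0 : 0 < l := by positivity
  have l1 : l < 1 := by rw [hl, div_lt_one (by positivity)]; linarith
  have hlpq : l * (p + q) = p := by rw [hl]; field_simp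
  have e : P.ht a b (y + l * (x - y)) = P.ht c d (y + l * (x - y)) := by
    rw [P.ht_left a b _ h1, P.ht_left c d _ h2]
    rw [P.ht_left a b _ h1, P.ht_left c d _ h2] at hp hq
    rw [hp, hq] at hlpq
    linarith
  have k : ∀ s, s ≤ x → s < y → s < y + l * (x - y) := by
    intro s hs hs'
    nlinarith [mul_nonneg l0.le (sub_nonneg.2 hs), mul_pos (sub_pos.2 l1) (sub_pos.2 hs')]
  have k' : ∀ s, x ≤ s → y < s → y + l * (x - y) < s := by
    intro s hs hs'
    nlinarith [mul_nonneg l0.le (sub_nonneg.2 hs), mul_pos (sub_pos.2 l1) (sub_pos.2 hs')]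
  obtain ⟨rfl, rfl⟩ := P.nc a b c d _ h1 h2 (k _ xa ya) (k' _ xb yb) (k _ xc yc) (k' _ xd yd) e
  exact lt_irrefl _ hy

lemma below_of_lt {a b c d : V} (h1 : P.E a b) (h2 : P.E c d) (had : P.X a < P.X d)
    (hcb : P.X c < P.X b) (x : ℝ)
    (xa : P.X a ≤ x) (xb : x ≤ P.X b) (xc : P.X c ≤ x) (xd : x ≤ P.X d)
    (hx : P.ht a b x < P.ht c d x) : P.below a b c d := by
  have hm : max (P.X a) (P.X c) < min (P.X b) (P.X d) :=
    max_lt (lt_min (P.lt h1) had) (lt_min hcb (P.lt h2))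
  obtain ⟨m, m1, m2⟩ := exists_between hm
  obtain ⟨ma, mc⟩ := max_lt_iff.1 m1
  obtain ⟨mb, md⟩ := lt_min_iff.1 m2
  rcases lt_trichotomy (P.ht a b m) (P.ht c d m) with h | h | h
  · exact ⟨m, ma, mb, mc, md, h⟩
  · obtain ⟨rfl, rfl⟩ := P.nc a b c d _ h1 h2 ma mb mc md h
    exact absurd hx (lt_irrefl _)
  · have := P.sign h2 h1 ⟨m, mc, md, ma, mb, h⟩ x xc xd xa xb
    exact absurd hx (not_lt.2 this)

lemma left_unique {v b d : V} (h1 : P.E v b) (h2 : P.E v d) (h : P.sl v b = P.sl v d) : b = d := by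
  obtain ⟨m, m1, m2⟩ := exists_between (lt_min (P.lt h1) (P.lt h2))
  obtain ⟨mb, md⟩ := lt_min_iff.1 m2
  refine (P.nc v b v d m h1 h2 m1 mb m1 md ?_).2
  rw [P.ht_left _ _ _ h1, P.ht_left _ _ _ h2, h]

lemma right_unique {u a c : V} (h1 : P.E a u) (h2 : P.E c u) (h : P.sl a u = P.sl c u) : a = c := by
  obtain ⟨m, m1, m2⟩ := exists_between (max_lt (P.lt h1) (P.lt h2))
  obtain ⟨ma, mc⟩ := max_lt_iff.1 m1
  refine (P.nc a u c u m h1 h2 ma m2 mc m2 ?_).1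
  rw [P.ht_right _ _ _ h1, P.ht_right _ _ _ h2, h]

lemma sl_of_below {v b d : V} (h1 : P.E v b) (h2 : P.E v d) (h : P.below v b v d) :
    P.sl v b < P.sl v d := by
  obtain ⟨x, xa, -, -, -, hx⟩ := h
  rw [P.ht_left _ _ _ h1, P.ht_left _ _ _ h2] at hx
  by_contra hc
  push Not at hc
  nlinarith [mul_nonneg (sub_nonneg.2 hc) (sub_pos.2 xa).le]

lemma ht_lt_left {v b d : V} (h1 : P.E v b) (h2 : P.E v d) (h : P.sl v b < P.sl v d) (x : ℝ)
    (hx : P.X v < x) : P.ht v b x < P.ht v d x := by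
  rw [P.ht_left _ _ _ h1, P.ht_left _ _ _ h2]
  nlinarith [mul_pos (sub_pos.2 h) (sub_pos.2 hx)]

lemma below_right {a c u : V} (h1 : P.E a u) (h2 : P.E c u) (h : P.sl c u < P.sl a u) :
    P.below a u c u := by
  obtain ⟨m, m1, m2⟩ := exists_between (max_lt (P.lt h1) (P.lt h2))
  obtain ⟨ma, mc⟩ := max_lt_iff.1 m1
  refine ⟨m, ma, m2, mc, m2, ?_⟩
  rw [P.ht_right _ _ _ h1, P.ht_right _ _ _ h2]
  nlinarith [mul_pos (sub_pos.2 h) (sub_pos.2 m2)]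

lemma wedge {v u w z a b : V} (he : P.E v u) (hf : P.E v w)
    (hnext : ∀ c, P.E v c → P.sl v c < P.sl v u → P.sl v c ≤ P.sl v w)
    (hvz : P.X v < P.X z) (hzu : P.X z ≤ P.X u) (hzw : P.X z ≤ P.X w)
    (hmin : ∀ c, P.X v < P.X c → P.X c < P.X z →
      P.ht v w (P.X c) ≤ P.Y c → P.Y c ≤ P.ht v u (P.X c) → False)
    (hg : P.E a b) (haz : P.X a < P.X z) (hzb : P.X z ≤ P.X b)
    (h1 : P.below v w a b) (h2 : P.below a b v u) : False := by
  rcases lt_trichotomy (P.X a) (P.X v) with h | h | h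
  · have e1 := P.sign hf hg h1 (P.X v) le_rfl (P.lt hf).le h.le (hvz.le.trans hzb)
    have e2 := P.sign hg he h2 (P.X v) h.le (hvz.le.trans hzb) le_rfl (P.lt he).le
    rw [P.htl hf] at e1
    rw [P.htl he] at e2
    exact P.nv a b v hg h (hvz.trans_le hzb) (le_antisymm e2 e1)
  · have := P.Xinj h
    subst this
    have s1 := P.sl_of_below hf hg h1
    have s2 := P.sl_of_below hg he h2
    exact absurd (hnext b hg s2) (not_le.2 s1)
  · have e1 := P.sign hf hg h1 (P.X a) h.le (haz.le.trans hzw) le_rfl (P.lt hg).le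
    have e2 := P.sign hg he h2 (P.X a) le_rfl (P.lt hg).le h.le (haz.le.trans hzu)
    rw [P.htl hg] at e1 e2
    exact hmin a h haz e1 e2

/-- the charging relation -/
def Rel (e : V × V) (t : V × Fin 3) : Prop :=
  (t.2 = 0 ∧ e.1 = t.1 ∧ ∀ c, P.E e.1 c → P.sl e.1 e.2 ≤ P.sl e.1 c) ∨
  (t.2 = 1 ∧ e.2 = t.1 ∧ ∀ c, P.E c e.2 → P.sl c e.2 ≤ P.sl e.1 e.2) ∨
  (t.2 = 2 ∧ ((P.E e.1 t.1 ∧ (∀ c, P.E c t.1 → P.sl e.1 t.1 ≤ P.sl c t.1) ∧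
      P.sl e.1 t.1 < P.sl e.1 e.2 ∧
      ∀ c, P.E e.1 c → P.sl e.1 t.1 < P.sl e.1 c → P.sl e.1 e.2 ≤ P.sl e.1 c) ∨
    ((∀ c, ¬ P.E c t.1) ∧ P.X e.1 < P.X t.1 ∧ P.X t.1 < P.X e.2 ∧
      P.Y t.1 < P.ht e.1 e.2 (P.X t.1) ∧
      ∀ c d, P.E c d → P.X c < P.X t.1 → P.X t.1 < P.X d → P.Y t.1 < P.ht c d (P.X t.1) →
        P.ht e.1 e.2 (P.X t.1) ≤ P.ht c d (P.X t.1))))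

lemma rel_unique (e e' : V × V) (t : V × Fin 3) (he : P.E e.1 e.2) (he' : P.E e'.1 e'.2)
    (h : P.Rel e t) (h' : P.Rel e' t) : e = e' := by
  obtain ⟨a, b⟩ := e
  obtain ⟨a', b'⟩ := e'
  obtain ⟨z, i⟩ := t
  simp only [Rel] at h h' he he'
  rcases h with ⟨hi, h⟩ | ⟨hi, h⟩ | ⟨hi, h⟩ <;> rcases h' with ⟨hi', h'⟩ | ⟨hi', h'⟩ | ⟨hi', h'⟩ <;>
    first
    | (exfalso; rw [hi] at hi'; revert hi'; decide)
    | skip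
  · obtain ⟨rfl, h⟩ := h
    obtain ⟨rfl, h'⟩ := h'
    rw [P.left_unique he he' (le_antisymm (h _ he') (h' _ he))]
  · obtain ⟨rfl, h⟩ := h
    obtain ⟨rfl, h'⟩ := h'
    rw [P.right_unique he he' (le_antisymm (h' _ he) (h _ he'))]
  · rcases h with ⟨g, h1, h2, h3⟩ | ⟨h1, h2, h3, h4, h5⟩
    · rcases h' with ⟨g', h1', h2', h3'⟩ | ⟨h1', -⟩
      · have := P.right_unique g g' (le_antisymm (h1 _ g') (h1' _ g))
        subst this
        rw [P.left_unique he he' (le_antisymm (h3 _ he' h2') (h3' _ he h2))]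
      · exact absurd g (h1' _)
    · rcases h' with ⟨g', h1', h2', h3'⟩ | ⟨h1', h2', h3', h4', h5'⟩
      · exact absurd g' (h1 _)
      · obtain ⟨rfl, rfl⟩ := P.nc a b a' b' (P.X z) he he' h2 h3 h2' h3'
          (le_antisymm (h5 _ _ he' h2' h3' h4') (h5' _ _ he h2 h3 h4))
        rfl

lemma rel_exists [Fintype V] (v u : V) (he : P.E v u) : ∃ t, P.Rel (v, u) t := by
  classical
  by_cases h0 : ∀ c, P.E v c → P.sl v u ≤ P.sl v c
  · exact ⟨(v, 0), Or.inl ⟨rfl, rfl, h0⟩⟩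
  push Not at h0
  obtain ⟨c, hc1, hc2⟩ := h0
  obtain ⟨w, hw, hwmax⟩ := Finset.exists_max_image
    (Finset.univ.filter fun c => P.E v c ∧ P.sl v c < P.sl v u) (P.sl v) ⟨c, by simp [hc1, hc2]⟩
  simp only [Finset.mem_filter, Finset.mem_univ, true_and] at hw hwmax
  obtain ⟨hf, hsl⟩ := hw
  have hnext : ∀ c, P.E v c → P.sl v c < P.sl v u → P.sl v c ≤ P.sl v w :=
    fun c h1 h2 => hwmax c ⟨h1, h2⟩
  have hZ : ∃ c, P.X v < P.X c ∧ P.X c ≤ P.X u ∧ P.X c ≤ P.X w ∧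
      P.ht v w (P.X c) ≤ P.Y c ∧ P.Y c ≤ P.ht v u (P.X c) := by
    rcases le_total (P.X u) (P.X w) with h | h
    · refine ⟨u, P.lt he, le_rfl, h, ?_, ?_⟩
      · rw [← P.htr he]; exact (P.ht_lt_left hf he hsl _ (P.lt he)).le
      · rw [P.htr he]
    · refine ⟨w, P.lt hf, h, le_rfl, ?_, ?_⟩
      · rw [P.htr hf]
      · rw [← P.htr hf]; exact (P.ht_lt_left hf he hsl _ (P.lt hf)).le
  obtain ⟨c0, hc0⟩ := hZ
  obtain ⟨z, hz, hzmin⟩ := Finset.exists_min_image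
    (Finset.univ.filter fun c => P.X v < P.X c ∧ P.X c ≤ P.X u ∧ P.X c ≤ P.X w ∧
      P.ht v w (P.X c) ≤ P.Y c ∧ P.Y c ≤ P.ht v u (P.X c)) P.X ⟨c0, by simp [hc0]⟩
  simp only [Finset.mem_filter, Finset.mem_univ, true_and] at hz hzmin
  obtain ⟨hvz, hzu, hzw, hfz, hze⟩ := hz
  have hmin : ∀ c, P.X v < P.X c → P.X c < P.X z →
      P.ht v w (P.X c) ≤ P.Y c → P.Y c ≤ P.ht v u (P.X c) → False := by
    intro c h1 h2 h3 h4
    exact absurd h2 (not_lt.2 (hzmin c ⟨h1, h2.le.trans hzu, h2.le.trans hzw, h3, h4⟩))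
  have W : ∀ a b, P.E a b → P.X a < P.X z → P.X z ≤ P.X b → P.below v w a b → P.below a b v u →
      False := fun a b hg haz hzb h1 h2 => P.wedge he hf hnext hvz hzu hzw hmin hg haz hzb h1 h2
  have hef := P.ht_lt_left hf he hsl _ hvz
  by_cases zu : z = u
  · subst zu
    refine ⟨(z, 1), Or.inr (Or.inl ⟨rfl, rfl, ?_⟩)⟩
    intro c hc
    by_contra hlt
    push Not at hlt
    simp only at hlt hc
    refine W c z hc (P.lt hc) le_rfl ?_ (P.below_right hc he hlt)
    refine P.below_of_lt hf hc hvz ((P.lt hc).trans_le hzw) (P.X z) hvz.le hzw (P.lt hc).le le_rfl ?_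
    rw [P.htr hc]
    rwa [P.htr he] at hef
  by_cases zw : z = w
  · subst zw
    refine ⟨(z, 2), Or.inr (Or.inr ⟨rfl, Or.inl ⟨hf, ?_, hsl, ?_⟩⟩)⟩
    · intro c hc
      by_contra hlt
      push Not at hlt
      simp only at hlt hc
      refine W c z hc (P.lt hc) le_rfl (P.below_right hf hc hlt) ?_
      refine P.below_of_lt hc he ((P.lt hc).trans_le hzu) hvz (P.X z) (P.lt hc).le le_rfl hvz.le hzu ?_
      rw [P.htr hc]
      rwa [P.htr hf] at hef
    · intro c hc h1
      by_contra hlt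
      push Not at hlt
      exact absurd (hnext c hc hlt) (not_le.2 h1)
  · have hzu' : P.X z < P.X u := lt_of_le_of_ne hzu (fun h => zu (P.Xinj h))
    have hzw' : P.X z < P.X w := lt_of_le_of_ne hzw (fun h => zw (P.Xinj h))
    have hfz' : P.ht v w (P.X z) < P.Y z := lt_of_le_of_ne hfz (P.nv v w z hf hvz hzw')
    have hze' : P.Y z < P.ht v u (P.X z) := lt_of_le_of_ne hze (P.nv v u z he hvz hzu').symm
    refine ⟨(z, 2), Or.inr (Or.inr ⟨rfl, Or.inr ⟨?_, hvz, hzu', hze', ?_⟩⟩)⟩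
    · intro c hc
      simp only at hc
      refine W c z hc (P.lt hc) le_rfl ?_ ?_
      · refine P.below_of_lt hf hc hvz ((P.lt hc).trans_le hzw) (P.X z) hvz.le hzw
          (P.lt hc).le le_rfl ?_
        rwa [P.htr hc]
      · refine P.below_of_lt hc he ((P.lt hc).trans_le hzu) hvz (P.X z) (P.lt hc).le le_rfl
          hvz.le hzu ?_
        rwa [P.htr hc]
    · intro c d hcd h1 h2 h3
      simp only at h1 h2 h3 hcd
      by_contra hlt
      push Not at hlt
      simp only at hlt
      refine W c d hcd h1 h2.le ?_ ?_
      · exact P.below_of_lt hf hcd (hvz.trans h2) (h1.trans hzw') (P.X z) hvz.le hzw h1.le h2.le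
          (hfz'.trans h3)
      · exact P.below_of_lt hcd he (h1.trans hzu') (hvz.trans h2) (P.X z) h1.le h2.le hvz.le hzu hlt

lemma sum_degree_le {V : Type*} {G : SimpleGraph V} (P : Drawing G) [Fintype V] [DecidableEq V]
    [DecidableRel G.Adj] :
    ∑ x, G.degree x ≤ 6 * Fintype.card V := by
  classical
  have hcard : (Finset.univ.filter fun e : V × V => P.E e.1 e.2).card ≤ 3 * Fintype.card V := by
    have h1 : ∀ e : V × V, ∃ t, P.E e.1 e.2 → P.Rel e t := by
      intro e
      by_cases h : P.E e.1 e.2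
      · obtain ⟨t, ht⟩ := P.rel_exists e.1 e.2 h
        exact ⟨t, fun _ => ht⟩
      · exact ⟨(e.1, 0), fun h' => absurd h' h⟩
    choose F hF using h1
    have := Finset.card_le_card_of_injOn (s := Finset.univ.filter fun e : V × V => P.E e.1 e.2)
      (t := (Finset.univ : Finset (V × Fin 3))) F (fun _ _ => Finset.mem_coe.2 (Finset.mem_univ _)) (by
        intro e he e' he' heq
        simp only [Finset.coe_filter, Finset.mem_univ, true_and, Set.mem_ofPred_eq] at he he'
        exact P.rel_unique e e' (F e) he he' (hF e he) (heq ▸ hF e' he'))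
    rw [Finset.card_univ, Fintype.card_prod, Fintype.card_fin] at this
    omega
  have h2 : ∑ x, G.degree x = ∑ x, ∑ y, ((if P.E x y then 1 else 0) + if P.E y x then 1 else 0) := by
    refine Finset.sum_congr rfl fun x _ => ?_
    rw [← SimpleGraph.card_neighborFinset_eq_degree, SimpleGraph.neighborFinset_eq_filter,
      Finset.card_filter]
    refine Finset.sum_congr rfl fun y _ => ?_
    simp only [P.hE, G.adj_comm y x]
    by_cases hxy : G.Adj x y
    · have hne : P.X x ≠ P.X y := fun h => hxy.ne (P.Xinj h)
      rcases lt_or_gt_of_ne hne with h | h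
      · simp [hxy, h, h.not_gt]
      · simp [hxy, h, h.not_gt]
    · simp [hxy]
  rw [h2]
  simp only [Finset.sum_add_distrib]
  rw [Finset.sum_comm (f := fun x y => if P.E y x then 1 else 0)]
  have h3 : ∑ x, ∑ y, (if P.E x y then 1 else 0) =
      (Finset.univ.filter fun e : V × V => P.E e.1 e.2).card := by
    rw [Finset.card_filter, Fintype.sum_prod_type]
  rw [h3]
  omega

end Drawing

end CoverPlanar

/-! ### Part 5: the centers of a circle packing give a straight line drawing -/

namespace CoverPlanar

lemma inner_of_norm_sub {F : Type*} [NormedAddCommGroup F] [InnerProductSpace ℝ F] (x y : F)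
    (h : ‖x - y‖ = ‖x‖ + ‖y‖) : inner ℝ x y = -(‖x‖ * ‖y‖) := by
  have := norm_sub_sq_real x y
  rw [h] at this
  nlinarith

lemma seg_norm_left {F : Type*} [NormedAddCommGroup F] [InnerProductSpace ℝ F] (a b p : F) (l : ℝ)
    (h0 : 0 < l) (hp : p = (1 - l) • a + l • b) : ‖a - p‖ = l * ‖a - b‖ := by
  have : a - p = l • (a - b) := by rw [hp]; module
  rw [this, norm_smul, Real.norm_of_nonneg h0.le]

lemma seg_norm_right {F : Type*} [NormedAddCommGroup F] [InnerProductSpace ℝ F] (a b p : F) (l : ℝ)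
    (h1 : l < 1) (hp : p = (1 - l) • a + l • b) : ‖b - p‖ = (1 - l) * ‖a - b‖ := by
  have : b - p = (1 - l) • (b - a) := by rw [hp]; module
  rw [this, norm_smul, Real.norm_of_nonneg (by linarith), norm_sub_rev]

lemma cross_four {F : Type*} [NormedAddCommGroup F] [InnerProductSpace ℝ F] (a b c d p : F)
    (ra rb rc rd l m : ℝ) (ha : 0 < ra) (hb : 0 < rb) (hc : 0 < rc) (hd : 0 < rd)
    (l0 : 0 < l) (l1 : l < 1) (m0 : 0 < m) (m1 : m < 1)
    (hp : p = (1 - l) • a + l • b) (hq : p = (1 - m) • c + m • d)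
    (hab : ‖a - b‖ = ra + rb) (hcd : ‖c - d‖ = rc + rd)
    (hac : ra + rc ≤ ‖a - c‖) (had : ra + rd ≤ ‖a - d‖)
    (hbc : rb + rc ≤ ‖b - c‖) (hbd : rb + rd ≤ ‖b - d‖) : False := by
  have A := seg_norm_left a b p l l0 hp
  have B := seg_norm_right a b p l l1 hp
  have C := seg_norm_left c d p m m0 hq
  have D := seg_norm_right c d p m m1 hq
  have tri : ∀ x y : F, ‖x - y‖ ≤ ‖x - p‖ + ‖y - p‖ := by
    intro x y
    have : x - y = (x - p) - (y - p) := by abel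
    rw [this]; exact norm_sub_le _ _
  have hAB : ‖a - p‖ + ‖b - p‖ = ra + rb := by rw [A, B, hab]; ring
  have hCD : ‖c - p‖ + ‖d - p‖ = rc + rd := by rw [C, D, hcd]; ring
  have tac := tri a c
  have tad := tri a d
  have tbc := tri b c
  have tbd := tri b d
  have i1 := inner_of_norm_sub (a - p) (c - p)
    (by rw [show a - p - (c - p) = a - c by abel]; linarith)
  have i2 := inner_of_norm_sub (a - p) (d - p)
    (by rw [show a - p - (d - p) = a - d by abel]; linarith)
  have hz : (1 - m) • (c - p) + m • (d - p) = 0 := by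
    rw [hq]; module
  have i3 : inner ℝ (a - p) ((1 - m) • (c - p) + m • (d - p)) = 0 := by rw [hz, inner_zero_right]
  rw [inner_add_right, inner_smul_right, inner_smul_right, i1, i2] at i3
  have pA : 0 < ‖a - p‖ := by rw [A, hab]; positivity
  have pC : 0 < ‖c - p‖ := by rw [C, hcd]; positivity
  have pD : 0 < ‖d - p‖ := by rw [D, hcd]; exact mul_pos (by linarith) (by linarith)
  have q1 : 0 < (1 - m) * (‖a - p‖ * ‖c - p‖) := mul_pos (by linarith) (by positivity)
  have q2 : 0 < m * (‖a - p‖ * ‖d - p‖) := by positivity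
  linarith

lemma cross_shared {F : Type*} [NormedAddCommGroup F] [InnerProductSpace ℝ F] (o b d p : F)
    (ro rb rd l m : ℝ) (hb : 0 < rb) (hd : 0 < rd)
    (l0 : 0 < l) (m0 : 0 < m)
    (hp : p = (1 - l) • o + l • b) (hq : p = (1 - m) • o + m • d)
    (hob : ‖o - b‖ = ro + rb) (hod : ‖o - d‖ = ro + rd)
    (hbd : rb + rd ≤ ‖b - d‖) : False := by
  have A := seg_norm_left o b p l l0 hp
  have B := seg_norm_left o d p m m0 hq
  have h1 : l • (o - b) = m • (o - d) := by
    have e1 : o - p = l • (o - b) := by rw [hp]; module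
    have e2 : o - p = m • (o - d) := by rw [hq]; module
    rw [← e1, e2]
  have h2 : o - d = (l / m) • (o - b) := by
    rw [div_eq_inv_mul, mul_smul, h1, smul_smul, inv_mul_cancel₀ m0.ne', one_smul]
  have h3 : b - d = (l / m - 1) • (o - b) := by
    rw [show b - d = (o - d) - (o - b) by abel, h2]; module
  have h4 : l * (ro + rb) = m * (ro + rd) := by rw [← hob, ← hod, ← A, ← B]
  rw [h3, norm_smul, Real.norm_eq_abs, ← abs_of_nonneg (norm_nonneg (o - b)), ← abs_mul, hob] at hbd
  have h5 : (l / m - 1) * (ro + rb) = rd - rb := by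
    field_simp
    linarith
  rw [h5] at hbd
  have : |rd - rb| < rb + rd := abs_lt.2 ⟨by linarith, by linarith⟩
  linarith

lemma exists_shear {V : Type*} [Fintype V] (x y : V → ℝ)
    (hinj : ∀ u v, x u = x v → y u = y v → u = v) :
    ∃ t : ℝ, Function.Injective fun v => x v + t * y v := by
  classical
  obtain ⟨t, ht⟩ := Infinite.exists_notMem_finset
    ((Finset.univ : Finset (V × V)).image fun e => -(x e.1 - x e.2) / (y e.1 - y e.2))
  refine ⟨t, fun u v huv => ?_⟩
  simp only at huv
  by_cases hy : y u = y v
  · refine hinj u v ?_ hy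
    rw [hy] at huv
    linarith
  · exfalso
    apply ht
    rw [Finset.mem_image]
    refine ⟨(u, v), Finset.mem_univ _, ?_⟩
    have : y u - y v ≠ 0 := sub_ne_zero.2 hy
    simp only
    rw [div_eq_iff this]
    linarith

lemma exists_drawing {V : Type*} [Fintype V] (G : SimpleGraph V) (hP : HasCirclePacking G) :
    Nonempty (Drawing G) := by
  obtain ⟨z, r, hr, hdisj, hadj⟩ := hP
  have hsep : ∀ u v, u ≠ v → r u + r v ≤ ‖z u - z v‖ := by
    intro u v huv
    have := hdisj u v huv
    rw [interior_closedBall _ (hr u).ne', interior_closedBall _ (hr v).ne',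
      ← Set.disjoint_iff_inter_eq_empty, disjoint_ball_ball_iff (hr u) (hr v), dist_eq_norm] at this
    exact this
  have heq : ∀ u v, G.Adj u v → ‖z u - z v‖ = r u + r v := by
    intro u v huv
    refine le_antisymm ?_ (hsep u v huv.ne)
    obtain ⟨q, hq1, hq2⟩ := (hadj u v huv.ne).2 huv
    rw [Metric.mem_closedBall] at hq1 hq2
    rw [← dist_eq_norm]
    calc dist (z u) (z v) ≤ dist (z u) q + dist q (z v) := dist_triangle _ _ _
      _ ≤ _ := by rw [dist_comm (z u)]; exact add_le_add hq1 hq2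
  obtain ⟨t, ht⟩ := exists_shear (fun v => z v 0) (fun v => z v 1) (by
    intro u v h1 h2
    by_contra hne
    have h3 := hsep u v hne
    have : z u = z v := by
      ext i
      fin_cases i
      · exact h1
      · exact h2
    rw [this, sub_self, norm_zero] at h3
    have := hr u
    have := hr v
    linarith)
  set X : V → ℝ := fun v => z v 0 + t * z v 1 with hX
  set Y : V → ℝ := fun v => z v 1 with hY
  have pt : ∀ a b s, X a < X b → X a < s → s < X b → ∃ l : ℝ, 0 < l ∧ l < 1 ∧
      ((1 - l) • z a + l • z b) 1 = Y a + (Y b - Y a) / (X b - X a) * (s - X a) ∧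
      ((1 - l) • z a + l • z b) 0 + t * ((1 - l) • z a + l • z b) 1 = s := by
    intro a b s hab has hsb
    have hpos : 0 < X b - X a := by linarith
    refine ⟨(s - X a) / (X b - X a), div_pos (by linarith) hpos,
      (div_lt_one hpos).2 (by linarith), ?_, ?_⟩
    · simp only [PiLp.add_apply, PiLp.smul_apply, smul_eq_mul, hY]
      field_simp
      ring
    · have e : ∀ l : ℝ, ((1 - l) • z a + l • z b) 0 + t * ((1 - l) • z a + l • z b) 1 =
          X a + l * (X b - X a) := by
        intro l
        simp only [PiLp.add_apply, PiLp.smul_apply, smul_eq_mul, hX]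
        ring
      rw [e, div_mul_cancel₀ _ hpos.ne']
      ring
  refine ⟨{ X := X, Y := Y, sl := fun a b => (Y b - Y a) / (X b - X a),
            ht := fun a b s => Y a + (Y b - Y a) / (X b - X a) * (s - X a),
            E := fun a b => G.Adj a b ∧ X a < X b, hE := fun a b => Iff.rfl, Xinj := ht,
            ht_left := fun a b x _ => rfl, ht_right := ?_, nc := ?_, nv := ?_ }⟩
  · rintro a b x ⟨-, h⟩
    have : X b - X a ≠ 0 := by linarith
    field_simp
    ring
  · rintro a b c d s ⟨hab, hab'⟩ ⟨hcd, hcd'⟩ sa sb sc sd heqs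
    obtain ⟨l, l0, l1, hl1, hl2⟩ := pt a b s hab' sa sb
    obtain ⟨m, m0, m1, hm1, hm2⟩ := pt c d s hcd' sc sd
    rw [← hl1, ← hm1] at heqs
    have hpq : (1 - l) • z a + l • z b = (1 - m) • z c + m • z d := by
      ext i
      fin_cases i
      · show ((1 - l) • z a + l • z b) 0 = ((1 - m) • z c + m • z d) 0
        rw [heqs] at hl2
        linarith
      · exact heqs
    have comm1 : (1 - l) • z a + l • z b = (1 - (1 - l)) • z b + (1 - l) • z a := by module
    have comm2 : (1 - m) • z c + m • z d = (1 - (1 - m)) • z d + (1 - m) • z c := by module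
    by_cases hac : a = c
    · subst hac
      refine ⟨rfl, ?_⟩
      by_contra hbd
      exact cross_shared (z a) (z b) (z d) _ (r a) (r b) (r d) l m (hr b) (hr d) l0 m0 rfl hpq
        (heq _ _ hab) (heq _ _ hcd) (hsep _ _ hbd)
    · exfalso
      by_cases hbd : b = d
      · subst hbd
        exact cross_shared (z b) (z a) (z c) _ (r b) (r a) (r c) (1 - l) (1 - m) (hr a) (hr c)
          (by linarith) (by linarith) comm1 (hpq.trans comm2)
          (heq _ _ hab.symm) (heq _ _ hcd.symm) (hsep _ _ hac)
      by_cases had : a = d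
      · subst had
        have hbc : b ≠ c := by rintro rfl; linarith
        exact cross_shared (z a) (z b) (z c) _ (r a) (r b) (r c) l (1 - m) (hr b) (hr c)
          l0 (by linarith) rfl (hpq.trans comm2)
          (heq _ _ hab) (heq _ _ hcd.symm) (hsep _ _ hbc)
      by_cases hbc : b = c
      · subst hbc
        exact cross_shared (z b) (z a) (z d) _ (r b) (r a) (r d) (1 - l) m (hr a) (hr d)
          (by linarith) m0 comm1 hpq
          (heq _ _ hab.symm) (heq _ _ hcd) (hsep _ _ had)
      exact cross_four (z a) (z b) (z c) (z d) _ (r a) (r b) (r c) (r d) l m (hr a) (hr b) (hr c)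
        (hr d) l0 l1 m0 m1 rfl hpq (heq _ _ hab) (heq _ _ hcd) (hsep _ _ hac) (hsep _ _ had)
        (hsep _ _ hbc) (hsep _ _ hbd)
  · rintro a b c ⟨hab, hab'⟩ ac cb heqs
    obtain ⟨l, l0, l1, hl1, hl2⟩ := pt a b (X c) hab' ac cb
    rw [← hl1] at heqs
    have hp : z c = (1 - l) • z a + l • z b := by
      ext i
      fin_cases i
      · show z c 0 = ((1 - l) • z a + l • z b) 0
        rw [heqs] at hl2
        simp only [hX, hY] at hl2
        linarith
      · exact heqs.symm
    have A := seg_norm_left _ _ _ l l0 hp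
    have B := seg_norm_right _ _ _ l l1 hp
    have hac : a ≠ c := by rintro rfl; exact lt_irrefl _ ac
    have hbc : b ≠ c := by rintro rfl; exact lt_irrefl _ cb
    have h1 := hsep _ _ hac
    have h2 := hsep _ _ hbc
    rw [A] at h1
    rw [B] at h2
    have h3 := heq _ _ hab
    have := hr c
    nlinarith

end CoverPlanar

/-- For every finite connected simple graph `G` with `n ≥ 2` vertices
admitting a circle packing (i.e. planar), and every vertex `v`, the expected cover time
of the simple random walk started at `v` is less than `6 n²`. -/
theorem cover_time_upper_bound_planar :
    ∀ (V : Type) (_ : Fintype V) (_ : DecidableEq V) (G : SimpleGraph V)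
      (_ : DecidableRel G.Adj),
      G.Connected → 2 ≤ Fintype.card V → HasCirclePacking G →
      ∀ v : V, expCover G v < 6 * (Fintype.card V : ℝ≥0∞) ^ 2 := by
  intro V _ _ G _ hG hn hP v
  obtain ⟨P⟩ := CoverPlanar.exists_drawing G hP
  have h1 := P.sum_degree_le
  refine (CoverPlanar.expCover_le_tour G hG hn v).trans_lt ?_
  have h2 : (∑ x, (G.degree x : ℝ)) ≤ 6 * Fintype.card V := by exact_mod_cast h1
  have hn' : (2 : ℝ) ≤ Fintype.card V := by exact_mod_cast hn
  have h3 : ((Fintype.card V : ℝ) - 1) * ∑ x, (G.degree x : ℝ) < 6 * (Fintype.card V : ℝ) ^ 2 := by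
    nlinarith
  have h4 : (6 * (Fintype.card V : ℝ≥0∞) ^ 2) = ENNReal.ofReal (6 * (Fintype.card V : ℝ) ^ 2) := by
    rw [ENNReal.ofReal_mul (by norm_num), ENNReal.ofReal_pow (by positivity), ENNReal.ofReal_natCast]
    norm_num
  rw [h4]
  exact (ENNReal.ofReal_lt_ofReal_iff (by positivity)).2 h3
end

section
/- For every M ≥ 1 there exist positive constants c = c(M) and r = r(M) such that the following holds. Let G = (V,E) be a finite connected simple graph with maximal degree at most M which admits a circle packing (equivalently, is planar), and let W ⊆ V with |W| ≥ 2. Then there is a subset V' ⊆ W with |V'| ≥ |W|^c such that the effective resistance satisfies R(u,v) ≥ r · log|W| for every pair of distinct vertices u, v ∈ V'. -/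
open Finset
open scoped ENNReal

/-- The Dirichlet energy `D(f) = ∑_{{a,b} ∈ E} (f a - f b)²`. -/
noncomputable def dirichlet {V : Type*} [Fintype V] [DecidableEq V] (G : SimpleGraph V)
    [DecidableRel G.Adj] (f : V → ℝ) : ℝ :=
  ∑ e ∈ G.edgeFinset, Sym2.lift ⟨fun a b => (f a - f b) ^ 2, fun a b => by ring⟩ e

/-- The effective resistance
`R(u,v) = sup { (f v - f u)² / D(f) : f : V → ℝ, D(f) > 0 }`, as a value in `[0,∞]`. -/
noncomputable def effRes {V : Type*} [Fintype V] [DecidableEq V] (G : SimpleGraph V)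
    [DecidableRel G.Adj] (u v : V) : ℝ≥0∞ :=
  ⨆ (f : V → ℝ) (_ : 0 < dirichlet G f), ENNReal.ofReal ((f v - f u) ^ 2 / dirichlet G f)

abbrev E2 := EuclideanSpace ℝ (Fin 2)

set_option linter.unusedSectionVars false

section energy
variable {V : Type*} [Fintype V] [DecidableEq V] (G : SimpleGraph V) [DecidableRel G.Adj]

/-- oriented difference along an edge -/
noncomputable def edgeDiff (e : Sym2 V) (f : V → ℝ) : ℝ := f e.out.1 - f e.out.2

/-- the Dirichlet bilinear form -/
noncomputable def dform (f g : V → ℝ) : ℝ := ∑ e ∈ G.edgeFinset, edgeDiff e f * edgeDiff e g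

lemma out_eq (e : Sym2 V) : s(e.out.1, e.out.2) = e := by
  have := Quot.out_eq e
  exact this

lemma dirichlet_eq (f : V → ℝ) : dirichlet G f = ∑ e ∈ G.edgeFinset, (edgeDiff e f) ^ 2 := by
  unfold dirichlet
  refine Finset.sum_congr rfl fun e _ => ?_
  conv_lhs => rw [← out_eq e]
  rfl

lemma dirichlet_eq_dform (f : V → ℝ) : dirichlet G f = dform G f f := by
  rw [dirichlet_eq]; unfold dform
  exact Finset.sum_congr rfl fun e _ => by ring

lemma dirichlet_nonneg (f : V → ℝ) : 0 ≤ dirichlet G f := by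
  rw [dirichlet_eq]; positivity

lemma edge_out_adj {e : Sym2 V} (he : e ∈ G.edgeFinset) : G.Adj e.out.1 e.out.2 := by
  rw [SimpleGraph.mem_edgeFinset, ← out_eq e] at he
  exact he

lemma edgeDiff_sum {ι : Type*} (s : Finset ι) (a : ι → ℝ) (g : ι → V → ℝ) (e : Sym2 V) :
    edgeDiff e (fun v => ∑ i ∈ s, a i * g i v) = ∑ i ∈ s, a i * edgeDiff e (g i) := by
  unfold edgeDiff
  rw [← Finset.sum_sub_distrib]
  exact Finset.sum_congr rfl fun i _ => by ring

lemma dirichlet_le_charge (M : ℕ) (hM : ∀ v, G.degree v ≤ M) (f q : V → ℝ) (hq : ∀ v, 0 ≤ q v)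
    (h : ∀ a b, G.Adj a b → (f a - f b) ^ 2 ≤ q a + q b) :
    dirichlet G f ≤ M * ∑ v, q v := by
  rw [dirichlet_eq]
  calc ∑ e ∈ G.edgeFinset, (edgeDiff e f) ^ 2
      ≤ ∑ e ∈ G.edgeFinset, ∑ v, if v ∈ e then q v else 0 := by
        refine Finset.sum_le_sum fun e he => ?_
        have hadj := edge_out_adj G he
        refine (h _ _ hadj).trans ?_
        have h1 : q e.out.1 + q e.out.2 = ∑ v ∈ {e.out.1, e.out.2}, if v ∈ e then q v else 0 := by
          rw [Finset.sum_pair hadj.ne, if_pos (Sym2.out_fst_mem e), if_pos (Sym2.out_snd_mem e)]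
        rw [h1]
        refine Finset.sum_le_sum_of_subset_of_nonneg (Finset.subset_univ _) fun v _ _ => ?_
        split_ifs
        · exact hq v
        · exact le_rfl
    _ = ∑ v, ∑ e ∈ G.edgeFinset, if v ∈ e then q v else 0 := Finset.sum_comm
    _ ≤ ∑ v, M * q v := by
        refine Finset.sum_le_sum fun v _ => ?_
        rw [← Finset.sum_filter, Finset.sum_const, nsmul_eq_mul]
        refine mul_le_mul_of_nonneg_right ?_ (hq v)
        rw [← SimpleGraph.incidenceFinset_eq_filter, SimpleGraph.card_incidenceFinset_eq_degree]
        exact_mod_cast hM v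
    _ = M * ∑ v, q v := by rw [Finset.mul_sum]

end energy

lemma sum_sq_le_of_disjoint {ι : Type*} (A : Finset ι) (y : ι → E2) (t : ι → ℝ) (x : E2) (R : ℝ)
    (hR : 0 ≤ R) (ht : ∀ i ∈ A, 0 ≤ t i)
    (hd : ∀ i ∈ A, ∀ j ∈ A, i ≠ j → Disjoint (Metric.ball (y i) (t i)) (Metric.ball (y j) (t j)))
    (hs : ∀ i ∈ A, Metric.ball (y i) (t i) ⊆ Metric.ball x R) :
    ∑ i ∈ A, t i ^ 2 ≤ R ^ 2 := by
  have h1 : MeasureTheory.volume (⋃ i ∈ A, Metric.ball (y i) (t i))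
      = ∑ i ∈ A, MeasureTheory.volume (Metric.ball (y i) (t i)) := by
    refine MeasureTheory.measure_biUnion_finset ?_ fun i _ => measurableSet_ball
    intro i hi j hj hij
    exact hd i hi j hj hij
  have h2 : MeasureTheory.volume (⋃ i ∈ A, Metric.ball (y i) (t i))
      ≤ MeasureTheory.volume (Metric.ball x R) :=
    MeasureTheory.measure_mono (Set.iUnion₂_subset hs)
  rw [h1] at h2
  simp only [EuclideanSpace.volume_ball_fin_two] at h2
  rw [← Finset.sum_mul] at h2
  have hpi : ENNReal.ofReal Real.pi ≠ 0 := by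
    simpa using Real.pi_pos
  have h3 : ∑ i ∈ A, ENNReal.ofReal (t i) ^ 2 ≤ ENNReal.ofReal R ^ 2 := by
    refine (ENNReal.mul_le_mul_iff_left hpi ENNReal.ofReal_ne_top).1 h2
  have h4 : ∑ i ∈ A, ENNReal.ofReal (t i) ^ 2 = ENNReal.ofReal (∑ i ∈ A, t i ^ 2) := by
    rw [ENNReal.ofReal_sum_of_nonneg (fun i hi => by positivity)]
    exact Finset.sum_congr rfl fun i hi => by rw [ENNReal.ofReal_pow (ht i hi)]
  rw [h4, ← ENNReal.ofReal_pow hR, ENNReal.ofReal_le_ofReal_iff (by positivity)] at h3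
  exact h3

/-- cutoff function: `1` within distance `s`, `0` beyond distance `2 s` -/
noncomputable def bump (d s : ℝ) : ℝ := max 0 (min 1 (2 - d / s))

lemma bump_nonneg (d s : ℝ) : 0 ≤ bump d s := le_max_left _ _
lemma bump_le_one (d s : ℝ) : bump d s ≤ 1 := max_le zero_le_one (min_le_left _ _)
lemma bump_eq_one {d s : ℝ} (hs : 0 < s) (h : d ≤ s) : bump d s = 1 := by
  have : d / s ≤ 1 := (div_le_one hs).2 h
  unfold bump
  rw [min_eq_left (by linarith), max_eq_right zero_le_one]
lemma bump_eq_zero {d s : ℝ} (hs : 0 < s) (h : 2 * s ≤ d) : bump d s = 0 := by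
  have : 2 ≤ d / s := (le_div_iff₀ hs).2 h
  unfold bump
  exact max_eq_left ((min_le_right _ _).trans (by linarith))
lemma bump_lip {d d' s : ℝ} (hs : 0 < s) : |bump d s - bump d' s| ≤ |d - d'| / s := by
  unfold bump
  refine (abs_max_sub_max_le_max _ _ _ _).trans ?_
  rw [sub_self, abs_zero]
  refine max_le (by positivity) ?_
  refine (abs_min_sub_min_le_max _ _ _ _).trans ?_
  rw [sub_self, abs_zero]
  refine max_le (by positivity) ?_
  have : 2 - d / s - (2 - d' / s) = - ((d - d') / s) := by ring
  rw [this, abs_neg, abs_div, abs_of_pos hs]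

lemma bump_energy {V : Type*} [Fintype V] [DecidableEq V] (G : SimpleGraph V) [DecidableRel G.Adj]
    (M : ℕ) (hM : ∀ v, G.degree v ≤ M) (z : V → E2) (rad : V → ℝ) (hp : IsCirclePacking G z rad)
    (x : E2) (s : ℝ) (hs : 0 < s) :
    dirichlet G (fun v => bump (dist (z v) x) s) ≤ 100 * M := by
  classical
  obtain ⟨hr, hdis, hadj⟩ := hp
  have hdis' : ∀ u v, u ≠ v → Disjoint (Metric.ball (z u) (rad u)) (Metric.ball (z v) (rad v)) := by
    intro u v huv
    have := hdis u v huv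
    rw [interior_closedBall _ (hr u).ne', interior_closedBall _ (hr v).ne'] at this
    exact Set.disjoint_iff_inter_eq_empty.2 this
  set A : Finset V := Finset.univ.filter fun v => dist (z v) x ≤ 3 * s + rad v with hA
  set t : V → ℝ := fun v => min (rad v) s with ht
  have htpos : ∀ v, 0 < t v := fun v => lt_min (hr v) hs
  set q : V → ℝ := fun v => if v ∈ A then 4 * (t v / s) ^ 2 else 0 with hq
  have hq0 : ∀ v, 0 ≤ q v := by
    intro v; simp only [hq]; split_ifs <;> positivity
  -- total charge
  have hsum : ∑ v ∈ A, t v ^ 2 ≤ (5 * s) ^ 2 := by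
    have hy : ∀ v ∈ A, ∃ y : E2, dist y x ≤ 4 * s ∧ dist y (z v) ≤ rad v - t v := by
      intro v hv
      have hv : dist (z v) x ≤ 3 * s + rad v := (Finset.mem_filter.1 hv).2
      by_cases h : rad v ≤ s
      · refine ⟨z v, by linarith, ?_⟩
        simp [ht, min_eq_left h]
      · push Not at h
        have h0 : 0 < 3 * s + rad v := by have := hr v; positivity
        set l : ℝ := 4 * s / (3 * s + rad v) with hl
        have hl0 : 0 ≤ l := by positivity
        have hl1 : l ≤ 1 := (div_le_one h0).2 (by linarith)
        have hle : l * (3 * s + rad v) = 4 * s := by exact div_mul_cancel₀ _ h0.ne'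
        refine ⟨AffineMap.lineMap x (z v) l, ?_, ?_⟩
        · rw [dist_lineMap_left, Real.norm_of_nonneg hl0, dist_comm]
          nlinarith
        · rw [dist_lineMap_right, Real.norm_of_nonneg (by linarith), dist_comm]
          simp only [ht, min_eq_right h.le]
          nlinarith
    choose! y hy1 hy2 using hy
    refine sum_sq_le_of_disjoint A y t x _ (by positivity) (fun i _ => (htpos i).le) ?_ ?_
    · intro i hi j hj hij
      refine (hdis' i j hij).mono ?_ ?_
      · exact Metric.ball_subset_ball' (by linarith [hy2 i hi])
      · exact Metric.ball_subset_ball' (by linarith [hy2 j hj])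
    · intro i hi
      exact Metric.ball_subset_ball' (by linarith [hy1 i hi, min_le_right (rad i) s])
  have hqsum : ∑ v, q v ≤ 100 := by
    have : ∑ v, q v = 4 / s ^ 2 * ∑ v ∈ A, t v ^ 2 := by
      simp only [hq]
      rw [← Finset.sum_filter, Finset.filter_mem_eq_inter, Finset.univ_inter, Finset.mul_sum]
      exact Finset.sum_congr rfl fun v _ => by field_simp
    rw [this]
    calc 4 / s ^ 2 * ∑ v ∈ A, t v ^ 2 ≤ 4 / s ^ 2 * (5 * s) ^ 2 := by gcongr
      _ = 100 := by field_simp; norm_num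
  -- edge estimate, one orientation
  have key : ∀ a b, G.Adj a b → dist (z a) x < 2 * s →
      (bump (dist (z a) x) s - bump (dist (z b) x) s) ^ 2 ≤ q a + q b := by
    intro a b hab ha
    have hab' : dist (z a) (z b) ≤ rad a + rad b := by
      obtain ⟨p, hp1, hp2⟩ := (hadj a b hab.ne).2 hab
      rw [Metric.mem_closedBall] at hp1 hp2
      have := dist_triangle_left (z a) (z b) p
      linarith
    have hL1 : |bump (dist (z a) x) s - bump (dist (z b) x) s| ≤ 1 := by
      rw [abs_le]
      constructor <;> linarith [bump_nonneg (dist (z a) x) s, bump_nonneg (dist (z b) x) s,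
        bump_le_one (dist (z a) x) s, bump_le_one (dist (z b) x) s]
    have hL2 : |bump (dist (z a) x) s - bump (dist (z b) x) s| ≤ (rad a + rad b) / s := by
      refine (bump_lip hs).trans ?_
      gcongr
      exact (abs_dist_sub_le _ _ _).trans hab'
    have hfin : ∀ v, v ∈ A → rad a ≤ rad v ∧ rad b ≤ rad v ∨ s ≤ rad v →
        (bump (dist (z a) x) s - bump (dist (z b) x) s) ^ 2 ≤ q v := by
      intro v hv h
      have : |bump (dist (z a) x) s - bump (dist (z b) x) s| ≤ 2 * (t v / s) := by
        by_cases h' : s ≤ rad v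
        · simp only [ht, min_eq_right h']
          rw [div_self hs.ne']; linarith
        · rcases h with h | h
          · push Not at h'
            simp only [ht, min_eq_left h'.le]
            refine hL2.trans ?_
            rw [← mul_div_assoc]
            gcongr
            linarith
          · exact absurd h h'
      simp only [hq, if_pos hv]
      rw [← sq_abs]
      calc _ ≤ (2 * (t v / s)) ^ 2 := by gcongr
        _ = _ := by ring
    have haA : a ∈ A := by
      simp only [hA, Finset.mem_filter, Finset.mem_univ, true_and]
      linarith [hr a]
    by_cases h1 : s ≤ rad a ∨ rad b ≤ rad a
    · have := hfin a haA (h1.elim Or.inr fun h => Or.inl ⟨le_rfl, h⟩)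
      linarith [hq0 b]
    · push Not at h1
      have hbA : b ∈ A := by
        simp only [hA, Finset.mem_filter, Finset.mem_univ, true_and]
        have := dist_triangle_left (z b) x (z a)
        linarith
      have := hfin b hbA (Or.inl ⟨h1.2.le, le_rfl⟩)
      linarith [hq0 a]
  have := dirichlet_le_charge G M hM (fun v => bump (dist (z v) x) s) q hq0 (by
    intro a b hab
    by_cases ha : dist (z a) x < 2 * s
    · exact key a b hab ha
    · by_cases hb : dist (z b) x < 2 * s
      · have := key b a hab.symm hb
        rw [← neg_sub, neg_sq]; linarith
      · push Not at ha hb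
        simp only [bump_eq_zero hs ha, bump_eq_zero hs hb]
        have := hq0 a; have := hq0 b
        nlinarith)
  have hM0 : (0:ℝ) ≤ M := by positivity
  nlinarith

lemma grid_count {ι : Type*} (S : Finset ι) (p : ι → E2) (c : E2) (s : ℝ) (hs : 0 < s)
    (K m : ℕ) (hK : ∀ i ∈ S, dist (p i) c ≤ K * s)
    (hT : ∀ T ⊆ S, (∀ i ∈ T, ∀ j ∈ T, dist (p i) (p j) < s) → T.card ≤ m) :
    S.card ≤ m * (4 * K + 1) ^ 2 := by
  classical
  set F : ι → ℤ × ℤ := fun i => (⌊2 * (p i 0 - c 0) / s⌋, ⌊2 * (p i 1 - c 1) / s⌋) with hF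
  set B : Finset (ℤ × ℤ) := Finset.Icc (-(2 * K : ℤ)) (2 * K) ×ˢ Finset.Icc (-(2 * K : ℤ)) (2 * K)
  have hB : B.card = (4 * K + 1) ^ 2 := by
    simp only [B, Finset.card_product, Int.card_Icc]
    have : (2 * (K:ℤ) + 1 - -(2 * K)).toNat = 4 * K + 1 := by omega
    rw [this]; ring
  have hcoord : ∀ (a b : E2) (l : Fin 2), |a l - b l| ≤ dist a b := by
    intro a b l
    have := PiLp.norm_apply_le (a - b) l
    rw [dist_eq_norm]
    simpa using this
  have hmem : ∀ (i : ι), i ∈ S → ∀ l : Fin 2,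
      ⌊2 * (p i l - c l) / s⌋ ∈ Finset.Icc (-(2 * K : ℤ)) (2 * K) := by
    intro i hi l
    have h1 := (hcoord (p i) c l).trans (hK i hi)
    rw [abs_le] at h1
    rw [Finset.mem_Icc]
    constructor
    · rw [Int.le_floor, le_div_iff₀ hs]; push_cast; linarith
    · have : ⌊2 * (p i l - c l) / s⌋ < (2 * K : ℤ) + 1 := by
        rw [Int.floor_lt, div_lt_iff₀ hs]; push_cast; linarith
      omega
  rw [← hB]
  refine Finset.card_le_mul_card_image_of_maps_to (f := F) (t := B) ?_ m ?_
  · intro i hi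
    exact Finset.mem_product.2 ⟨hmem i hi 0, hmem i hi 1⟩
  · intro b _
    refine hT _ (Finset.filter_subset _ _) ?_
    intro i hi j hj
    have hij : F i = F j := (Finset.mem_filter.1 hi).2.trans (Finset.mem_filter.1 hj).2.symm
    have hc : ∀ l : Fin 2, ⌊2 * (p i l - c l) / s⌋ = ⌊2 * (p j l - c l) / s⌋ →
        (p i l - p j l) ^ 2 < (s / 2) ^ 2 := by
      intro l h
      have h1 := Int.abs_sub_lt_one_of_floor_eq_floor h
      have h2 : 2 * (p i l - c l) / s - 2 * (p j l - c l) / s = (p i l - p j l) / (s / 2) := by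
        field_simp; ring
      rw [h2, abs_div, abs_of_pos (by positivity : 0 < s / 2), div_lt_one (by positivity)] at h1
      rw [← sq_abs]
      exact pow_lt_pow_left₀ h1 (abs_nonneg _) (by norm_num)
    have h0 := hc 0 (congrArg Prod.fst hij)
    have h1 := hc 1 (congrArg Prod.snd hij)
    rw [EuclideanSpace.dist_eq, Real.sqrt_lt' hs, Fin.sum_univ_two, Real.dist_eq, Real.dist_eq,
      sq_abs, sq_abs]
    nlinarith

section greedy
variable {V : Type*} [Fintype V] [DecidableEq V] (z : V → E2)

lemma greedy_step (hz : Function.Injective z) (m : ℕ) (hm : 2 ≤ m) (U : Finset V)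
    (hU : m ≤ U.card) :
    ∃ x ∈ U, ∃ s : ℝ, 0 < s ∧ m ≤ (U.filter fun v => dist (z v) (z x) ≤ s).card ∧
      ∀ y ∈ U, (U.filter fun v => dist (z v) (z y) < s).card < m := by
  set P : Finset (V × V) := (U ×ˢ U).filter fun p =>
    m ≤ (U.filter fun v => dist (z v) (z p.1) ≤ dist (z p.2) (z p.1)).card with hP
  have far : ∀ y ∈ U, ∀ T ⊆ U, m ≤ T.card → ∃ w ∈ T, (y, w) ∈ P := by
    intro y hy T hT hTm
    have hne : T.Nonempty := Finset.card_pos.1 (by omega)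
    obtain ⟨w, hw, hmax⟩ := Finset.exists_max_image T (fun v => dist (z v) (z y)) hne
    refine ⟨w, hw, ?_⟩
    simp only [hP, Finset.mem_filter, Finset.mem_product]
    refine ⟨⟨hy, hT hw⟩, hTm.trans (Finset.card_le_card ?_)⟩
    intro v hv
    exact Finset.mem_filter.2 ⟨hT hv, hmax v hv⟩
  have hPne : P.Nonempty := by
    have hne : U.Nonempty := Finset.card_pos.1 (by omega)
    obtain ⟨y, hy⟩ := hne
    obtain ⟨w, _, hw⟩ := far y hy U le_rfl hU
    exact ⟨_, hw⟩
  obtain ⟨⟨x, w⟩, hxw, hmin⟩ := Finset.exists_min_image P (fun p => dist (z p.2) (z p.1)) hPne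
  simp only [hP, Finset.mem_filter, Finset.mem_product] at hxw
  refine ⟨x, hxw.1.1, dist (z w) (z x), ?_, hxw.2, ?_⟩
  · by_contra h0
    have h0 : dist (z w) (z x) = 0 := le_antisymm (not_lt.1 h0) dist_nonneg
    have : (U.filter fun v => dist (z v) (z x) ≤ dist (z w) (z x)) ⊆ {x} := by
      intro v hv
      have := (Finset.mem_filter.1 hv).2
      rw [h0] at this
      exact Finset.mem_singleton.2 (hz (dist_le_zero.1 this))
    have := Finset.card_le_card this
    have := hxw.2
    simp at *
    omega
  · intro y hy
    by_contra hlt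
    push Not at hlt
    obtain ⟨v, hv, hvP⟩ := far y hy _ (Finset.filter_subset _ _) hlt
    have h1 := hmin _ hvP
    have h2 := (Finset.mem_filter.1 hv).2
    simp only at h1
    linarith

lemma greedy_seq [Nonempty V] (hz : Function.Injective z) (m : ℕ) (hm : 2 ≤ m) (W : Finset V) :
    ∃ (x : ℕ → V) (s : ℕ → ℝ) (U : ℕ → Finset V),
      U 0 = W ∧ (∀ j, U (j + 1) = (U j).filter fun v => 8 * s j ≤ dist (z v) (z (x j))) ∧
      ∀ j, m ≤ (U j).card → x j ∈ U j ∧ 0 < s j ∧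
        m ≤ ((U j).filter fun v => dist (z v) (z (x j)) ≤ s j).card ∧
        ∀ y ∈ U j, ((U j).filter fun v => dist (z v) (z y) < s j).card < m := by
  have h : ∀ U : Finset V, ∃ (x : V) (s : ℝ), m ≤ U.card → x ∈ U ∧ 0 < s ∧
      m ≤ (U.filter fun v => dist (z v) (z x) ≤ s).card ∧
      ∀ y ∈ U, (U.filter fun v => dist (z v) (z y) < s).card < m := by
    intro U
    by_cases hU : m ≤ U.card
    · obtain ⟨x, hx, s, h⟩ := greedy_step z hz m hm U hU
      exact ⟨x, s, fun _ => ⟨hx, h⟩⟩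
    · exact ⟨Classical.arbitrary V, 0, fun h => absurd h hU⟩
  choose X S hXS using h
  let U : ℕ → Finset V := fun j => Nat.rec W
    (fun _ U => U.filter fun v => 8 * S U ≤ dist (z v) (z (X U))) j
  exact ⟨fun j => X (U j), fun j => S (U j), U, rfl, fun j => rfl, fun j hj => hXS (U j) hj⟩

/-- The annuli lemma, combinatorial data. -/
lemma greedy_data [Nonempty V] (hz : Function.Injective z) (m J : ℕ) (hm : 2 ≤ m) (W : Finset V)
    (hJ : J * (m * 1089) ≤ W.card) :
    ∃ (x : ℕ → V) (s : ℕ → ℝ) (U : ℕ → Finset V),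
      (∀ j < J, U j ⊆ W ∧ 0 < s j ∧ m ≤ ((U j).filter fun v => dist (z v) (z (x j)) ≤ s j).card ∧
        x j ∈ U j) ∧
      (∀ i j, i < j → j < J → s i ≤ s j) ∧
      (∀ i j, i < j → j < J → ∀ v ∈ U j, 8 * s i ≤ dist (z v) (z (x i))) := by
  obtain ⟨x, s, U, hU0, hUs, h⟩ := greedy_seq z hz m hm W
  have hanti : Antitone U := antitone_nat_of_succ_le fun j => by
    rw [hUs]; exact Finset.filter_subset _ _
  have hcard : ∀ j ≤ J, W.card ≤ (U j).card + j * (m * 1089) ∧ ∀ i < j, m ≤ (U i).card := by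
    intro j
    induction j with
    | zero => intro _; simp [hU0]
    | succ j ih =>
      intro hj
      obtain ⟨ih1, ih2⟩ := ih (by omega)
      have hmj : m ≤ (U j).card := by
        have : (j + 1) * (m * 1089) ≤ J * (m * 1089) := Nat.mul_le_mul_right _ hj
        have h2 : (j + 1) * (m * 1089) = j * (m * 1089) + m * 1089 := by ring
        omega
      refine ⟨?_, fun i hi => (Nat.lt_succ_iff_lt_or_eq.1 hi).elim (ih2 i) fun h => h ▸ hmj⟩
      obtain ⟨hx, hs, h1, h2⟩ := h j hmj
      have hrem : ((U j).filter fun v => ¬ 8 * s j ≤ dist (z v) (z (x j))).card ≤ m * 1089 := by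
        have := grid_count ((U j).filter fun v => ¬ 8 * s j ≤ dist (z v) (z (x j))) z (z (x j))
          (s j) hs 8 m (by
            intro i hi
            have := (Finset.mem_filter.1 hi).2
            push Not at this
            push_cast; exact this.le) (by
            intro T hT hTd
            rcases T.eq_empty_or_nonempty with rfl | ⟨y, hy⟩
            · simp
            · have hTU : T ⊆ U j := hT.trans (Finset.filter_subset _ _)
              refine le_trans (Finset.card_le_card ?_) (h2 y (hTU hy)).le
              intro v hv
              exact Finset.mem_filter.2 ⟨hTU hv, hTd v hv y hy⟩)
        simpa using this
      have := Finset.card_filter_add_card_filter_not (s := U j)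
        (fun v => 8 * s j ≤ dist (z v) (z (x j)))
      rw [← hUs] at this
      have h2 : (j + 1) * (m * 1089) = j * (m * 1089) + m * 1089 := by ring
      omega
  have hmU : ∀ j < J, m ≤ (U j).card := (hcard J le_rfl).2
  refine ⟨x, s, U, ?_, ?_, ?_⟩
  · intro j hj
    obtain ⟨hx, hs, h1, h2⟩ := h j (hmU j hj)
    refine ⟨?_, hs, h1, hx⟩
    rw [← hU0]; exact hanti (Nat.zero_le j)
  · intro i j hij hj
    obtain ⟨hx, hs, h1, h2⟩ := h j (hmU j hj)
    obtain ⟨hx', hs', h1', h2'⟩ := h i (hmU i (hij.trans hj))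
    by_contra hlt
    push Not at hlt
    have hsub := hanti hij.le
    have h3 := h2' (x j) (hsub hx)
    have h4 : ((U j).filter fun v => dist (z v) (z (x j)) ≤ s j) ⊆
        ((U i).filter fun v => dist (z v) (z (x j)) < s i) := by
      intro v hv
      rw [Finset.mem_filter] at hv ⊢
      exact ⟨hsub hv.1, hv.2.trans_lt hlt⟩
    have := Finset.card_le_card h4
    omega
  · intro i j hij hj v hv
    have : v ∈ U (i + 1) := hanti hij hv
    rw [hUs] at this
    exact (Finset.mem_filter.1 this).2

end greedy

lemma cs_aux (a S Q : ℝ) (h : S ^ 2 ≤ 3364 * Q) : (a + S) ^ 2 ≤ 3365 * (a ^ 2 + Q) := by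
  have h1 := sq_nonneg (3364 * a - S)
  have h2 : (3364 * a - S) ^ 2 = 3364 ^ 2 * a ^ 2 - 2 * 3364 * (a * S) + S ^ 2 := by ring
  have h3 : (a + S) ^ 2 = a ^ 2 + 2 * (a * S) + S ^ 2 := by ring
  rw [h3]
  rw [h2] at h1
  linarith

set_option maxHeartbeats 1000000 in
lemma annuli {V : Type*} [Fintype V] [DecidableEq V] [Nonempty V] (G : SimpleGraph V)
    [DecidableRel G.Adj]
    (M : ℕ) (hM : ∀ v, G.degree v ≤ M) (z : V → E2) (rad : V → ℝ) (hp : IsCirclePacking G z rad)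
    (W : Finset V) (k m : ℕ) (hm : 2 ≤ m) (hk : 2 * k * (m * 1089) ≤ W.card) :
    ∃ g : Fin k → V → ℝ, (∀ i j, i ≠ j → ∀ v, g i v = 0 ∨ g j v = 0) ∧
      (∀ i, dirichlet G (g i) ≤ 3365 ^ 2 * (100 * M)) ∧
      (∀ i, m ≤ (W.filter fun v => g i v = 1).card) := by
  classical
  have hz : Function.Injective z := by
    intro u v huv
    by_contra hne
    have h1 := hp.2.1 u v hne
    rw [interior_closedBall _ (hp.1 u).ne', interior_closedBall _ (hp.1 v).ne', huv] at h1
    have : z v ∈ Metric.ball (z v) (rad u) ∩ Metric.ball (z v) (rad v) :=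
      ⟨Metric.mem_ball_self (hp.1 u), Metric.mem_ball_self (hp.1 v)⟩
    rw [h1] at this
    exact this
  set J := 2 * k with hJ
  obtain ⟨x, s, U, hU, hmono, hsep⟩ := greedy_data z hz m J hm W hk
  have hs : ∀ j < J, 0 < s j := fun j hj => (hU j hj).2.1
  set d : ℕ → ℕ → ℝ := fun i j => dist (z (x i)) (z (x j)) with hd
  set Act : ℕ → Finset ℕ := fun j => (Finset.range j).filter fun i =>
    d i j < 2 * s j + 8 * s i ∧ ¬ ∃ i', i < i' ∧ i' < j ∧ d i i' + 8 * s i ≤ 4 * s i' with hAct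
  set chi : ℕ → V → ℝ := fun j v => bump (dist (z v) (z (x j))) (s j) with hchi
  set eta : ℕ → V → ℝ := fun i v => bump (dist (z v) (z (x i))) (4 * s i) with heta
  set g : ℕ → V → ℝ := fun j v => max 0 (chi j v - ∑ i ∈ Act j, eta i v) with hg
  have hgchi : ∀ j v, chi j v = 0 → g j v = 0 := by
    intro j v h
    have : 0 ≤ ∑ i ∈ Act j, eta i v := Finset.sum_nonneg fun i _ => bump_nonneg _ _
    simp only [hg, h]
    exact max_eq_left (by linarith)
  -- vanishing on earlier balls
  have hvan : ∀ j < J, ∀ v, ∀ n i, j - i = n → i < j → dist (z v) (z (x i)) ≤ 4 * s i → g j v = 0 := by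
    intro j hj v n
    induction n using Nat.strong_induction_on with
    | _ n ih =>
      intro i hn hij hv
      have hsi := hs i (hij.trans hj)
      by_cases hA : i ∈ Act j
      · have h1 : eta i v = 1 := bump_eq_one (by positivity) hv
        have h2 : eta i v ≤ ∑ i ∈ Act j, eta i v :=
          Finset.single_le_sum (f := fun i => eta i v) (fun i _ => bump_nonneg _ _) hA
        have h3 : chi j v ≤ 1 := bump_le_one _ _
        exact max_eq_left (by linarith)
      · simp only [hAct, Finset.mem_filter, Finset.mem_range, not_and, not_not] at hA
        by_cases hc : d i j < 2 * s j + 8 * s i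
        · obtain ⟨i', h1, h2, h3⟩ := hA hij hc
          refine ih (j - i') (by omega) i' rfl h2 ?_
          have := dist_triangle (z v) (z (x i)) (z (x i'))
          simp only [hd] at h3
          linarith
        · push Not at hc
          refine hgchi j v (bump_eq_zero (hs j hj) ?_)
          have := dist_triangle_left (z (x i)) (z (x j)) (z v)
          simp only [hd] at hc
          linarith
  have hdisj : ∀ i j, i < j → j < J → ∀ v, g i v = 0 ∨ g j v = 0 := by
    intro i j hij hj v
    have hsi := hs i (hij.trans hj)
    by_cases h : dist (z v) (z (x i)) ≤ 4 * s i
    · exact Or.inr (hvan j hj v _ i rfl hij h)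
    · exact Or.inl (hgchi i v (bump_eq_zero hsi (by linarith)))
  have hmass : ∀ j < J, m ≤ (W.filter fun v => g j v = 1).card := by
    intro j hj
    obtain ⟨h1, h2, h3, h4⟩ := hU j hj
    refine h3.trans (Finset.card_le_card ?_)
    intro v hv
    rw [Finset.mem_filter] at hv ⊢
    refine ⟨h1 hv.1, ?_⟩
    have e1 : chi j v = 1 := bump_eq_one h2 hv.2
    have e2 : ∑ i ∈ Act j, eta i v = 0 := by
      refine Finset.sum_eq_zero fun i hi => ?_
      have hij : i < j := Finset.mem_range.1 (Finset.mem_filter.1 hi).1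
      have := hsep i j hij hj v hv.1
      have := hs i (hij.trans hj)
      exact bump_eq_zero (by positivity) (by linarith)
    simp only [hg, e1, e2]
    norm_num
  have henergy : ∀ j < J, (Act j).card ≤ 3364 → dirichlet G (g j) ≤ 3365 ^ 2 * (100 * M) := by
    intro j hj hc
    have hcR : ((Act j).card : ℝ) ≤ 3364 := by exact_mod_cast hc
    have hsumE : dirichlet G (chi j) + ∑ i ∈ Act j, dirichlet G (eta i) ≤ 3365 * (100 * M) := by
      have h1 : dirichlet G (chi j) ≤ 100 * M := bump_energy G M hM z rad hp _ _ (hs j hj)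
      have h2 : ∑ i ∈ Act j, dirichlet G (eta i) ≤ (Act j).card • (100 * (M:ℝ)) := by
        refine Finset.sum_le_card_nsmul _ _ _ fun i hi => ?_
        have hij : i < j := Finset.mem_range.1 (Finset.mem_filter.1 hi).1
        have := hs i (hij.trans hj)
        exact bump_energy G M hM z rad hp _ _ (by positivity)
      rw [nsmul_eq_mul] at h2
      have : ((Act j).card : ℝ) * (100 * M) ≤ 3364 * (100 * M) := by gcongr
      linarith
    have hE : dirichlet G (g j) ≤
        3365 * (dirichlet G (chi j) + ∑ i ∈ Act j, dirichlet G (eta i)) := by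
      simp only [dirichlet_eq]
      rw [Finset.sum_comm, ← Finset.sum_add_distrib, Finset.mul_sum]
      refine Finset.sum_le_sum fun e _ => ?_
      have habs : |edgeDiff e (g j)| ≤ |edgeDiff e (chi j)| + ∑ i ∈ Act j, |edgeDiff e (eta i)| := by
        unfold edgeDiff
        simp only [hg]
        refine (abs_max_sub_max_le_max _ _ _ _).trans ?_
        rw [sub_self, abs_zero]
        refine max_le (by positivity) ?_
        rw [sub_sub_sub_comm, ← Finset.sum_sub_distrib]
        exact (abs_sub _ _).trans (add_le_add le_rfl (Finset.abs_sum_le_sum_abs _ _))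
      have hcs := sq_sum_le_card_mul_sum_sq (s := Act j) (f := fun i => |edgeDiff e (eta i)|)
      simp only [sq_abs] at hcs
      set S := ∑ i ∈ Act j, |edgeDiff e (eta i)|
      set Q := ∑ i ∈ Act j, (edgeDiff e (eta i)) ^ 2
      have hQ : 0 ≤ Q := by positivity
      have hS : 0 ≤ S := by positivity
      set a := |edgeDiff e (chi j)|
      have ha : 0 ≤ a := abs_nonneg _
      have haa : (edgeDiff e (chi j)) ^ 2 = a ^ 2 := (sq_abs _).symm
      rw [haa]
      have h1 : (edgeDiff e (g j)) ^ 2 ≤ (a + S) ^ 2 := by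
        rw [← sq_abs]; gcongr
      have h2 : S ^ 2 ≤ 3364 * Q := le_trans hcs (mul_le_mul_of_nonneg_right hcR hQ)
      exact h1.trans (cs_aux a S Q h2)
    calc _ ≤ _ := hE
      _ ≤ 3365 * (3365 * (100 * M)) := by gcongr
      _ = _ := by ring
  -- counting the holes
  have hA1 : ∀ j < J, ((Act j).filter fun i => s j ≤ 8 * s i).card ≤ 1681 := by
    intro j hj
    have := grid_count ((Act j).filter fun i => s j ≤ 8 * s i) (fun i => z (x i)) (z (x j)) (s j)
      (hs j hj) 10 1 (by
        intro i hi
        obtain ⟨hi1, hi2⟩ := Finset.mem_filter.1 hi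
        obtain ⟨hi3, hi4, -⟩ := Finset.mem_filter.1 hi1
        have := hmono i j (Finset.mem_range.1 hi3) hj
        simp only [hd] at hi4
        push_cast
        linarith) (by
        intro T hT hTd
        rw [Finset.card_le_one]
        have key : ∀ a ∈ T, ∀ b ∈ T, ¬ a < b := by
          intro a ha b hb hab
          obtain ⟨hi1, hi2⟩ := Finset.mem_filter.1 (hT ha)
          have hb1 := Finset.mem_range.1 (Finset.mem_filter.1 (Finset.mem_filter.1 (hT hb)).1).1
          have h1 := hsep a b hab (hb1.trans hj) (x b) (hU b (hb1.trans hj)).2.2.2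
          have h2 := hTd b hb a ha
          linarith
        intro a ha b hb
        have := key a ha b hb
        have := key b hb a ha
        omega)
    simpa using this
  have hA2 : ∑ j ∈ Finset.range J, ((Act j).filter fun i => ¬ s j ≤ 8 * s i).card ≤ J := by
    have e1 : ∀ j ∈ Finset.range J, ((Act j).filter fun i => ¬ s j ≤ 8 * s i) =
        Finset.bipartiteBelow (fun i j => i ∈ Act j ∧ ¬ s j ≤ 8 * s i) (Finset.range J) j := by
      intro j hj
      ext i
      simp only [Finset.bipartiteBelow, Finset.mem_filter, Finset.mem_range]
      refine ⟨fun h => ⟨?_, h⟩, fun h => h.2⟩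
      exact (Finset.mem_range.1 (Finset.mem_filter.1 h.1).1).trans (Finset.mem_range.1 hj)
    rw [Finset.sum_congr rfl fun j hj => by rw [e1 j hj],
      ← Finset.sum_card_bipartiteAbove_eq_sum_card_bipartiteBelow]
    calc _ ≤ ∑ i ∈ Finset.range J, 1 := by
          refine Finset.sum_le_sum fun i hi => ?_
          rw [Finset.card_le_one]
          have key : ∀ a ∈ Finset.bipartiteAbove (fun i j => i ∈ Act j ∧ ¬ s j ≤ 8 * s i)
              (Finset.range J) i, ∀ b ∈ Finset.bipartiteAbove
              (fun i j => i ∈ Act j ∧ ¬ s j ≤ 8 * s i) (Finset.range J) i, ¬ a < b := by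
            intro a ha b hb hab
            simp only [Finset.bipartiteAbove, Finset.mem_filter, hAct, Finset.mem_range] at ha hb
            obtain ⟨_, ⟨ha1, ha2, _⟩, ha3⟩ := ha
            obtain ⟨_, ⟨hb1, _, hb2⟩, hb3⟩ := hb
            exact hb2 ⟨a, ha1, hab, by linarith⟩
          intro a ha b hb
          have := key a ha b hb
          have := key b hb a ha
          omega
      _ = J := by simp
  have hAtot : ∑ j ∈ Finset.range J, (Act j).card ≤ 1682 * J := by
    have : ∀ j ∈ Finset.range J, (Act j).card ≤
        1681 + ((Act j).filter fun i => ¬ s j ≤ 8 * s i).card := by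
      intro j hj
      rw [← Finset.card_filter_add_card_filter_not (s := Act j) (fun i => s j ≤ 8 * s i)]
      have := hA1 j (Finset.mem_range.1 hj)
      omega
    have h2 := Finset.sum_le_sum this
    rw [Finset.sum_add_distrib, Finset.sum_const, Finset.card_range, smul_eq_mul] at h2
    omega
  have hgood : k ≤ ((Finset.range J).filter fun j => (Act j).card ≤ 3364).card := by
    have h1 := Finset.card_filter_add_card_filter_not (s := Finset.range J)
      (fun j => (Act j).card ≤ 3364)
    rw [Finset.card_range] at h1
    have h2 : ((Finset.range J).filter fun j => ¬ (Act j).card ≤ 3364).card • 3365 ≤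
        ∑ j ∈ (Finset.range J).filter (fun j => ¬ (Act j).card ≤ 3364), (Act j).card := by
      refine Finset.card_nsmul_le_sum _ _ _ fun j hj => ?_
      have := (Finset.mem_filter.1 hj).2
      omega
    have h3 : ∑ j ∈ (Finset.range J).filter (fun j => ¬ (Act j).card ≤ 3364), (Act j).card ≤
        ∑ j ∈ Finset.range J, (Act j).card :=
      Finset.sum_le_sum_of_subset (Finset.filter_subset _ _)
    rw [smul_eq_mul] at h2
    omega
  obtain ⟨T, hT, hTk⟩ := Finset.exists_subset_card_eq hgood
  set o := T.orderEmbOfFin hTk with ho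
  have hoT : ∀ i, o i < J ∧ (Act (o i)).card ≤ 3364 := by
    intro i
    have := hT (Finset.orderEmbOfFin_mem T hTk i)
    rw [Finset.mem_filter, Finset.mem_range] at this
    exact this
  refine ⟨fun i => g (o i), ?_, fun i => henergy _ (hoT i).1 (hoT i).2, fun i => hmass _ (hoT i).1⟩
  intro i j hij v
  rcases lt_trichotomy (o i) (o j) with h | h | h
  · exact hdisj _ _ h (hoT j).1 v
  · exact absurd (o.injective h) hij
  · exact (hdisj _ _ h (hoT i).1 v).symm

section combo
variable {V : Type*} [Fintype V] [DecidableEq V] (G : SimpleGraph V) [DecidableRel G.Adj]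

lemma dform_comm (f g : V → ℝ) : dform G f g = dform G g f :=
  Finset.sum_congr rfl fun e _ => mul_comm _ _

lemma dform_sum_left {ι : Type*} (s : Finset ι) (a : ι → ℝ) (g : ι → V → ℝ) (h : V → ℝ) :
    dform G (fun v => ∑ i ∈ s, a i * g i v) h = ∑ i ∈ s, a i * dform G (g i) h := by
  unfold dform
  simp only [edgeDiff_sum, Finset.sum_mul, Finset.mul_sum]
  rw [Finset.sum_comm]
  exact Finset.sum_congr rfl fun i _ => Finset.sum_congr rfl fun e _ => by ring

lemma dform_smul_left (c : ℝ) (f h : V → ℝ) :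
    dform G (fun v => c * f v) h = c * dform G f h := by
  unfold dform edgeDiff
  rw [Finset.mul_sum]
  exact Finset.sum_congr rfl fun e _ => by ring

lemma combo_energy {k : ℕ} (g : Fin k → V → ℝ) (hd : ∀ i j, i ≠ j → ∀ v, g i v = 0 ∨ g j v = 0)
    (C : ℝ) (hC : ∀ i, dirichlet G (g i) ≤ C) (a : Fin k → ℝ) :
    dirichlet G (fun v => ∑ i, a i * g i v) ≤ 2 * C * ∑ i, a i ^ 2 := by
  have h1 : dirichlet G (fun v => ∑ i, a i * g i v) ≤ 2 * ∑ i, a i ^ 2 * dirichlet G (g i) := by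
    simp only [dirichlet_eq, Finset.mul_sum]
    rw [Finset.sum_comm]
    refine Finset.sum_le_sum fun e _ => ?_
    rw [edgeDiff_sum]
    set S : V → Finset (Fin k) := fun v => Finset.univ.filter fun i => g i v ≠ 0 with hS
    have hS1 : ∀ v, (S v).card ≤ 1 := by
      intro v
      rw [Finset.card_le_one]
      intro i hi j hj
      by_contra hij
      rcases hd i j hij v with h | h
      · exact (Finset.mem_filter.1 hi).2 h
      · exact (Finset.mem_filter.1 hj).2 h
    set T := S e.out.1 ∪ S e.out.2 with hT
    have hT2 : (T.card : ℝ) ≤ 2 := by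
      have := Finset.card_union_le (S e.out.1) (S e.out.2)
      have := hS1 e.out.1
      have := hS1 e.out.2
      have : T.card ≤ 2 := by rw [hT]; omega
      exact_mod_cast this
    have hz : ∀ i ∉ T, edgeDiff e (g i) = 0 := by
      intro i hi
      simp only [hT, hS, Finset.mem_union, Finset.mem_filter, Finset.mem_univ, true_and, not_or,
        not_not] at hi
      unfold edgeDiff
      rw [hi.1, hi.2, sub_zero]
    have e1 : ∑ i, a i * edgeDiff e (g i) = ∑ i ∈ T, a i * edgeDiff e (g i) :=
      (Finset.sum_subset (Finset.subset_univ T) fun i _ hi => by rw [hz i hi, mul_zero]).symm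
    rw [e1]
    have hcs := sq_sum_le_card_mul_sum_sq (s := T) (f := fun i => a i * edgeDiff e (g i))
    refine hcs.trans ?_
    have h3 : ∑ i ∈ T, (a i * edgeDiff e (g i)) ^ 2 ≤ ∑ i, (a i * edgeDiff e (g i)) ^ 2 :=
      Finset.sum_le_sum_of_subset_of_nonneg (Finset.subset_univ _) fun i _ _ => sq_nonneg _
    have h4 : 0 ≤ ∑ i ∈ T, (a i * edgeDiff e (g i)) ^ 2 := Finset.sum_nonneg fun i _ => sq_nonneg _
    calc _ ≤ 2 * ∑ i ∈ T, (a i * edgeDiff e (g i)) ^ 2 := mul_le_mul_of_nonneg_right hT2 h4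
      _ ≤ 2 * ∑ i, (a i * edgeDiff e (g i)) ^ 2 := by linarith
      _ = _ := by
        rw [Finset.mul_sum]
        exact Finset.sum_congr rfl fun i _ => by ring
  refine h1.trans ?_
  rw [mul_assoc, Finset.mul_sum (a := C)]
  refine mul_le_mul_of_nonneg_left (Finset.sum_le_sum fun i _ => ?_) (by norm_num)
  rw [mul_comm C]
  exact mul_le_mul_of_nonneg_left (hC i) (sq_nonneg _)

lemma combo_mass {k : ℕ} (g : Fin k → V → ℝ) (hd : ∀ i j, i ≠ j → ∀ v, g i v = 0 ∨ g j v = 0)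
    (W : Finset V) (m : ℕ) (hm : ∀ i, m ≤ (W.filter fun v => g i v = 1).card) (a : Fin k → ℝ) :
    m * ∑ i, a i ^ 2 ≤ ∑ w ∈ W, (∑ i, a i * g i w) ^ 2 := by
  have h1 : ∀ w, (∑ i, a i * g i w) ^ 2 = ∑ i, a i ^ 2 * g i w ^ 2 := by
    intro w
    rw [sq, Finset.sum_mul_sum]
    refine Finset.sum_congr rfl fun i _ => ?_
    rw [Finset.sum_eq_single i]
    · ring
    · intro j _ hj
      rcases hd i j hj.symm w with h | h <;> rw [h] <;> ring
    · simp
  simp only [h1]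
  rw [Finset.sum_comm, Finset.mul_sum]
  refine Finset.sum_le_sum fun i _ => ?_
  rw [← Finset.mul_sum, mul_comm]
  refine mul_le_mul_of_nonneg_left ?_ (sq_nonneg _)
  calc (m : ℝ) ≤ ((W.filter fun v => g i v = 1).card : ℝ) := by exact_mod_cast hm i
    _ = ∑ w ∈ W.filter (fun v => g i v = 1), g i w ^ 2 := by
      rw [Finset.sum_congr rfl (g := fun _ => (1:ℝ))]
      · simp
      · intro w hw; rw [(Finset.mem_filter.1 hw).2]; norm_num
    _ ≤ _ := Finset.sum_le_sum_of_subset_of_nonneg (Finset.filter_subset _ _)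
      fun i _ _ => sq_nonneg _

lemma ortho_system [Nonempty V] (M : ℕ) (hM1 : 1 ≤ M) (hM : ∀ v, G.degree v ≤ M)
    (z : V → E2) (rad : V → ℝ)
    (hp : IsCirclePacking G z rad) (W : Finset V) (v0 : V) (ρ : ℝ)
    (hρ : ∀ w ∈ W, ∀ f : V → ℝ, (f w - f v0) ^ 2 ≤ ρ * dirichlet G f)
    (K : ℕ) (hK : 4356 * (K + 1) ≤ W.card) :
    ∃ F : ℕ → V → ℝ, ∀ l < K, F l v0 = 0 ∧ dform G (F l) (F l) = 1 ∧
      (∀ l' < l, dform G (F l) (F l') = 0) ∧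
      (W.card : ℝ) / (8712 * (3365 ^ 2 * (100 * M)) * (l + 2)) ≤ ∑ w ∈ W, F l w ^ 2 := by
  induction K with
  | zero => exact ⟨fun _ _ => 0, by simp⟩
  | succ K ih =>
    obtain ⟨F, hF⟩ := ih (by omega)
    set k := K + 2 with hk
    set n := W.card with hn
    set m := n / (2178 * k) with hm
    set C : ℝ := 3365 ^ 2 * (100 * M) with hC
    have hM0 : (0:ℝ) < M := by exact_mod_cast hM1
    have hC0 : 0 < C := by positivity
    have hm2 : 2 ≤ m := by
      rw [hm, Nat.le_div_iff_mul_le (by positivity)]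
      clear_value m C
      have e : 2 * (2178 * k) = 4356 * (K + 1 + 1) := by rw [hk]; ring
      rw [e]; exact hK
    have hmn : 2 * k * (m * 1089) ≤ n := by
      have := Nat.div_mul_le_self n (2178 * k)
      rw [← hm] at this
      calc _ = m * (2178 * k) := by ring
        _ ≤ n := this
    have hmn' : (n : ℝ) ≤ 4356 * k * m := by
      have h1 : n < 2178 * k * (m + 1) := Nat.lt_mul_div_succ n (by positivity)
      have h2 : 2178 * k * (m + 1) ≤ 2178 * k * (2 * m) := Nat.mul_le_mul_left _ (by omega)
      have h3 : n ≤ 4356 * k * m := by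
        calc n ≤ 2178 * k * (2 * m) := by omega
          _ = _ := by ring
      exact_mod_cast h3
    obtain ⟨g, hg1, hg2, hg3⟩ := annuli G M hM z rad hp W k m hm2 hmn
    have hdep : ¬ LinearIndependent ℝ
        (fun i : Fin k => ((fun l : Fin K => dform G (g i) (F l), g i v0) : (Fin K → ℝ) × ℝ)) := by
      intro h
      have := h.fintype_card_le_finrank
      simp [hk] at this
    rw [Fintype.not_linearIndependent_iff] at hdep
    obtain ⟨a, ha, i0, hi0⟩ := hdep
    set f : V → ℝ := fun v => ∑ i, a i * g i v with hf
    have hfF : ∀ l < K, dform G f (F l) = 0 := by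
      intro l hl
      have := congrFun (congrArg Prod.fst ha) ⟨l, hl⟩
      rw [hf, dform_sum_left]
      simpa [Prod.fst_sum, Finset.sum_apply] using this
    have hf0 : f v0 = 0 := by
      have := congrArg Prod.snd ha
      simpa [Prod.snd_sum] using this
    have hA : 0 < ∑ i, a i ^ 2 :=
      Finset.sum_pos' (fun i _ => sq_nonneg _) ⟨i0, Finset.mem_univ _, by positivity⟩
    have hE := combo_energy G g hg1 C hg2 a
    have hMs := combo_mass g hg1 W m hg3 a
    have hD : 0 < dirichlet G f := by
      refine lt_of_le_of_ne (dirichlet_nonneg G f) fun h0 => ?_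
      have : ∑ w ∈ W, f w ^ 2 ≤ 0 := by
        refine Finset.sum_nonpos fun w hw => ?_
        have := hρ w hw f
        rw [← h0, hf0] at this
        simpa using this
      have hm0 : (0:ℝ) < m := by positivity
      have : 0 < m * ∑ i, a i ^ 2 := by positivity
      linarith
    set D := dirichlet G f with hDdef
    set c := (Real.sqrt D)⁻¹ with hc
    have hcD : c ^ 2 * D = 1 := by
      rw [hc, inv_pow, Real.sq_sqrt hD.le, inv_mul_cancel₀ hD.ne']
    refine ⟨Function.update F K fun v => c * f v, ?_⟩
    intro l hl
    rcases Nat.lt_succ_iff_lt_or_eq.1 hl with hl | rfl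
    · obtain ⟨h1, h2, h3, h4⟩ := hF l hl
      rw [Function.update_of_ne (by omega)]
      refine ⟨h1, h2, ?_, h4⟩
      intro l' hl'
      rw [Function.update_of_ne (by omega)]
      exact h3 l' hl'
    · rw [Function.update_self]
      refine ⟨by rw [hf0, mul_zero], ?_, ?_, ?_⟩
      · rw [dform_smul_left, dform_comm, dform_smul_left, ← dirichlet_eq_dform, ← mul_assoc, ← sq]
        exact hcD
      · intro l' hl'
        rw [Function.update_of_ne (by omega), dform_smul_left, hfF l' hl', mul_zero]
      · have e1 : ∑ w ∈ W, (c * f w) ^ 2 = c ^ 2 * ∑ w ∈ W, f w ^ 2 := by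
          rw [Finset.mul_sum]
          exact Finset.sum_congr rfl fun w _ => by ring
        rw [e1]
        have hkR : ((l:ℝ) + 2) = (k : ℝ) := by rw [hk]; push_cast; ring
        rw [hkR]
        have hk0 : (0:ℝ) < k := by rw [← hkR]; positivity
        rw [div_le_iff₀ (by positivity)]
        have h1 : D ≤ 2 * C * ∑ i, a i ^ 2 := hE
        have h2 : c ^ 2 * (m * ∑ i, a i ^ 2) ≤ c ^ 2 * ∑ w ∈ W, f w ^ 2 :=
          mul_le_mul_of_nonneg_left hMs (sq_nonneg c)
        have h3 : 1 ≤ c ^ 2 * (2 * C * ∑ i, a i ^ 2) := by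
          rw [← hcD]; exact mul_le_mul_of_nonneg_left h1 (sq_nonneg c)
        calc (n:ℝ) ≤ 4356 * k * m * 1 := by linarith
          _ ≤ 4356 * k * m * (c ^ 2 * (2 * C * ∑ i, a i ^ 2)) := by gcongr
          _ = c ^ 2 * (m * ∑ i, a i ^ 2) * (8712 * C * k) := by ring
          _ ≤ _ := by gcongr

lemma res_growth [Nonempty V] (M : ℕ) (hM1 : 1 ≤ M) (hM : ∀ v, G.degree v ≤ M)
    (z : V → E2) (rad : V → ℝ)
    (hp : IsCirclePacking G z rad) (W : Finset V) (v0 : V) (ρ : ℝ) (hρ0 : 0 ≤ ρ)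
    (hρ : ∀ w ∈ W, ∀ f : V → ℝ, (f w - f v0) ^ 2 ≤ ρ * dirichlet G f)
    (K : ℕ) (hK : 4356 * (K + 1) ≤ W.card) :
    1 / (8712 * (3365 ^ 2 * (100 * M))) * ∑ l ∈ Finset.range K, 1 / ((l:ℝ) + 2) ≤ ρ := by
  obtain ⟨F, hF⟩ := ortho_system G M hM1 hM z rad hp W v0 ρ hρ K hK
  have hn : (0:ℝ) < W.card := by
    have : 0 < W.card := by omega
    exact_mod_cast this
  have horth : ∀ l < K, ∀ l' < K, dform G (F l) (F l') = if l = l' then 1 else 0 := by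
    intro l hl l' hl'
    rcases lt_trichotomy l l' with h | h | h
    · rw [if_neg h.ne, dform_comm]; exact (hF l' hl').2.2.1 l h
    · subst h; rw [if_pos rfl]; exact (hF l hl).2.1
    · rw [if_neg h.ne']; exact (hF l hl).2.2.1 l' h
  have hbes : ∀ w ∈ W, ∑ l ∈ Finset.range K, F l w ^ 2 ≤ ρ := by
    intro w hw
    set S := ∑ l ∈ Finset.range K, F l w ^ 2 with hS
    have hS0 : 0 ≤ S := Finset.sum_nonneg fun i _ => sq_nonneg _
    have h1 := hρ w hw (fun v => ∑ l ∈ Finset.range K, F l w * F l v)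
    have e1 : ∑ l ∈ Finset.range K, F l w * F l w = S :=
      Finset.sum_congr rfl fun l _ => by ring
    have e2 : ∑ l ∈ Finset.range K, F l w * F l v0 = 0 :=
      Finset.sum_eq_zero fun l hl => by rw [(hF l (Finset.mem_range.1 hl)).1, mul_zero]
    have e3 : dirichlet G (fun v => ∑ l ∈ Finset.range K, F l w * F l v) = S := by
      rw [dirichlet_eq_dform, dform_sum_left]
      refine Finset.sum_congr rfl fun l hl => ?_
      rw [dform_comm, dform_sum_left, Finset.sum_eq_single l]
      · rw [horth l (Finset.mem_range.1 hl) l (Finset.mem_range.1 hl), if_pos rfl]; ring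
      · intro l' hl' hne
        rw [horth l' (Finset.mem_range.1 hl') l (Finset.mem_range.1 hl), if_neg hne, mul_zero]
      · intro h; exact absurd hl h
    simp only [e1, e2, e3] at h1
    rw [sub_zero] at h1
    rcases hS0.eq_or_lt with h | h
    · rw [← h]; exact hρ0
    · rw [sq] at h1
      exact le_of_mul_le_mul_right h1 h
  have h1 : ∑ w ∈ W, ∑ l ∈ Finset.range K, F l w ^ 2 ≤ W.card * ρ := by
    have := Finset.sum_le_card_nsmul W _ ρ hbes
    simpa [nsmul_eq_mul] using this
  rw [Finset.sum_comm] at h1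
  have h2 : ∑ l ∈ Finset.range K, (W.card : ℝ) / (8712 * (3365 ^ 2 * (100 * M)) * (l + 2)) ≤
      ∑ l ∈ Finset.range K, ∑ w ∈ W, F l w ^ 2 :=
    Finset.sum_le_sum fun l hl => (hF l (Finset.mem_range.1 hl)).2.2.2
  have h3 : ∑ l ∈ Finset.range K, (W.card : ℝ) / (8712 * (3365 ^ 2 * (100 * M)) * (l + 2)) =
      W.card * (1 / (8712 * (3365 ^ 2 * (100 * M))) * ∑ l ∈ Finset.range K, 1 / ((l:ℝ) + 2)) := by
    rw [Finset.mul_sum, Finset.mul_sum]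
    refine Finset.sum_congr rfl fun l _ => ?_
    rw [div_mul_div_comm, one_mul, mul_one_div]
  rw [h3] at h2
  exact le_of_mul_le_mul_left (h2.trans h1) hn

end combo

lemma harmonic_lower (K : ℕ) :
    Real.log (((K:ℝ) + 2) / 2) ≤ ∑ l ∈ Finset.range K, 1 / ((l:ℝ) + 2) := by
  induction K with
  | zero => simp
  | succ K ih =>
    rw [Finset.sum_range_succ]
    have e : (((K + 1 : ℕ) : ℝ) + 2) / 2 = (((K:ℝ) + 2) / 2) * (1 + 1 / ((K:ℝ) + 2)) := by
      push_cast; field_simp; ring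
    rw [e, Real.log_mul (by positivity) (by positivity)]
    have := Real.log_le_sub_one_of_pos (show (0:ℝ) < 1 + 1 / ((K:ℝ) + 2) by positivity)
    linarith

/-- growth constant -/
noncomputable def gconst (M : ℕ) : ℝ := 1 / (8712 * (3365 ^ 2 * (100 * M))) / 2

lemma res_growth_log {V : Type*} [Fintype V] [DecidableEq V] (G : SimpleGraph V)
    [DecidableRel G.Adj] (M : ℕ) (hM1 : 1 ≤ M) (hM : ∀ v, G.degree v ≤ M)
    (z : V → E2) (rad : V → ℝ)
    (hp : IsCirclePacking G z rad) (W : Finset V) (hW : 2 ≤ W.card) (v0 : V) (ρ : ℝ) (hρ0 : 0 ≤ ρ)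
    (hρ : ∀ w ∈ W, ∀ f : V → ℝ, (f w - f v0) ^ 2 ≤ ρ * dirichlet G f) :
    gconst M * Real.log W.card ≤ ρ := by
  haveI : Nonempty V := ⟨v0⟩
  have hM0 : (0:ℝ) < M := by exact_mod_cast hM1
  have hn : (0:ℝ) < W.card := by positivity
  by_cases hbig : 8712 ^ 2 ≤ W.card
  · set K := W.card / 4356 - 1 with hK
    have h1 := res_growth G M hM1 hM z rad hp W v0 ρ hρ0 hρ K (by omega)
    have h2 := harmonic_lower K
    have h3 : (W.card : ℝ) / 8712 ≤ ((K:ℝ) + 2) / 2 := by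
      have : W.card ≤ 4356 * (K + 2) := by omega
      have : (W.card : ℝ) ≤ 4356 * (K + 2) := by exact_mod_cast this
      linarith
    have h4 : Real.log ((W.card : ℝ) / 8712) ≤ Real.log (((K:ℝ) + 2) / 2) :=
      Real.log_le_log (by positivity) h3
    have h5 : Real.log W.card / 2 ≤ Real.log ((W.card : ℝ) / 8712) := by
      rw [Real.log_div hn.ne' (by norm_num)]
      have : Real.log ((8712:ℝ) ^ 2) ≤ Real.log W.card :=
        Real.log_le_log (by norm_num) (by exact_mod_cast hbig)
      rw [Real.log_pow] at this
      push_cast at this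
      linarith
    refine le_trans ?_ h1
    unfold gconst
    calc _ = 1 / (8712 * (3365 ^ 2 * (100 * (M:ℝ)))) * (Real.log W.card / 2) := by ring
      _ ≤ _ := by
        refine mul_le_mul_of_nonneg_left (by linarith) (by positivity)
  · push Not at hbig
    obtain ⟨w, hw, hwv⟩ : ∃ w ∈ W, w ≠ v0 := by
      by_contra h
      push Not at h
      have : W ⊆ {v0} := fun w hw => Finset.mem_singleton.2 (h w hw)
      have := Finset.card_le_card this
      simp at this
      omega
    have h1 := hρ w hw (fun v => if v = w then 1 else 0)
    simp only [if_true, if_neg hwv.symm] at h1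
    have h2 : dirichlet G (fun v => if v = w then (1:ℝ) else 0) ≤
        M * ∑ v, if v = w then (1:ℝ) else 0 := by
      refine dirichlet_le_charge G M hM _ _ (fun v => by split_ifs <;> norm_num) ?_
      intro a b _
      split_ifs <;> norm_num
    simp only [Finset.sum_ite_eq', Finset.mem_univ, if_true, mul_one] at h2
    have h3 : 1 ≤ ρ * M := by
      have := mul_le_mul_of_nonneg_left h2 hρ0
      norm_num at h1
      linarith
    have h4 : Real.log W.card ≤ 8712 ^ 2 := by
      have := Real.log_le_sub_one_of_pos hn
      have h : (W.card : ℝ) < 8712 ^ 2 := by exact_mod_cast hbig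
      linarith
    have h5 : (1:ℝ) / M ≤ ρ := by rw [div_le_iff₀ hM0]; exact h3
    refine le_trans ?_ h5
    unfold gconst
    calc _ ≤ 1 / (8712 * (3365 ^ 2 * (100 * (M:ℝ)))) / 2 * 8712 ^ 2 := by gcongr
      _ = (8712 / (3365 ^ 2 * 100 * 2)) * (1 / M) := by field_simp
      _ ≤ 1 * (1 / M) := by gcongr; norm_num
      _ = _ := one_mul _

lemma effRes_comm {V : Type*} [Fintype V] [DecidableEq V] (G : SimpleGraph V)
    [DecidableRel G.Adj] (u v : V) : effRes G u v = effRes G v u := by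
  unfold effRes
  refine iSup_congr fun f => iSup_congr fun _ => ?_
  rw [← neg_sub, neg_sq]

lemma of_effRes_lt {V : Type*} [Fintype V] [DecidableEq V] (G : SimpleGraph V)
    [DecidableRel G.Adj] (hG : G.Connected) (u v : V) (ρ : ℝ) (hρ : 0 ≤ ρ)
    (h : effRes G u v ≤ ENNReal.ofReal ρ) (f : V → ℝ) :
    (f v - f u) ^ 2 ≤ ρ * dirichlet G f := by
  rcases (dirichlet_nonneg G f).eq_or_lt with h0 | h0
  · have hadj : ∀ a b, G.Adj a b → f a = f b := by
      intro a b hab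
      unfold dirichlet at h0
      have h1 := (Finset.sum_eq_zero_iff_of_nonneg (fun e _ => by
        induction e using Sym2.ind with
        | _ a b => exact sq_nonneg (f a - f b))).1 h0.symm s(a, b) (by
          rw [SimpleGraph.mem_edgeFinset]; exact hab)
      have h2 : (f a - f b) ^ 2 = 0 := h1
      have := pow_eq_zero_iff (two_ne_zero) |>.1 h2
      linarith
    have : f u = f v := by
      obtain ⟨p⟩ := hG.preconnected u v
      clear h
      induction p with
      | nil => rfl
      | cons hab _ ih => exact (hadj _ _ hab).trans ih
    rw [this, ← h0]; simp
  · have h1 : ENNReal.ofReal ((f v - f u) ^ 2 / dirichlet G f) ≤ ENNReal.ofReal ρ :=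
      le_trans (le_iSup₂_of_le f h0 le_rfl) h
    rw [ENNReal.ofReal_le_ofReal_iff hρ, div_le_iff₀ h0] at h1
    exact h1

/-- For every `M ≥ 1` there exist positive constants `c = c(M)` and
`r = r(M)` such that: for every finite connected simple graph `G` with maximal degree at
most `M` admitting a circle packing (i.e. planar), and every `W ⊆ V` with `|W| ≥ 2`,
there is `V' ⊆ W` with `|V'| ≥ |W|^c` such that `R(u,v) ≥ r · log |W|` for all distinct
`u, v ∈ V'`. -/
theorem resistance_separated_subset_planar :
    ∀ M : ℕ, 1 ≤ M → ∃ c r : ℝ, 0 < c ∧ 0 < r ∧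
      ∀ (V : Type) (_ : Fintype V) (_ : DecidableEq V) (G : SimpleGraph V)
        (_ : DecidableRel G.Adj),
        G.Connected → (∀ v : V, G.degree v ≤ M) → HasCirclePacking G →
        ∀ W : Finset V, 2 ≤ W.card →
        ∃ V' ⊆ W, (W.card : ℝ) ^ c ≤ (V'.card : ℝ) ∧
          ∀ u ∈ V', ∀ v ∈ V', u ≠ v →
            ENNReal.ofReal (r * Real.log (W.card : ℝ)) ≤ effRes G u v := by
  intro M hM1
  have hM0 : (0:ℝ) < M := by exact_mod_cast hM1
  have hg0 : 0 < gconst M := by unfold gconst; positivity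
  refine ⟨1 / 2, gconst M / 4, by norm_num, by positivity, ?_⟩
  intro V _ _ G _ hG hdeg hpack W hW
  classical
  obtain ⟨z, rad, hp⟩ := hpack
  set n := W.card with hn
  have hn2 : (2:ℝ) ≤ n := by exact_mod_cast hW
  have hlog : 0 < Real.log n := Real.log_pos (by linarith)
  set ρ := gconst M / 4 * Real.log n with hρ
  have hρ0 : 0 < ρ := by positivity
  set S : Finset (Finset V) := W.powerset.filter fun T =>
    ∀ u ∈ T, ∀ v ∈ T, u ≠ v → ENNReal.ofReal ρ ≤ effRes G u v with hS
  have hSne : S.Nonempty := ⟨∅, by simp [hS]⟩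
  obtain ⟨T, hT, hmax⟩ := Finset.exists_max_image S Finset.card hSne
  rw [hS, Finset.mem_filter, Finset.mem_powerset] at hT
  obtain ⟨hTW, hTsep⟩ := hT
  refine ⟨T, hTW, ?_, hTsep⟩
  by_contra hlt
  push Not at hlt
  rw [← Real.sqrt_eq_rpow] at hlt
  have hsq : 0 < Real.sqrt n := Real.sqrt_pos.2 (by linarith)
  -- every point of `W` is close to `T`
  set B : V → Finset V := fun v => W.filter fun w => effRes G v w ≤ ENNReal.ofReal ρ with hB
  have hcov : W ⊆ T.biUnion fun v => insert v (B v) := by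
    intro w hw
    by_contra hnot
    simp only [Finset.mem_biUnion, Finset.mem_insert, not_exists, not_and, not_or] at hnot
    have hwT : w ∉ T := fun h => (hnot w h).1 rfl
    have hfar : ∀ v ∈ T, ENNReal.ofReal ρ ≤ effRes G v w := by
      intro v hv
      by_contra hc
      exact (hnot v hv).2 (Finset.mem_filter.2 ⟨hw, (not_le.1 hc).le⟩)
    have hins : insert w T ∈ S := by
      rw [hS, Finset.mem_filter, Finset.mem_powerset]
      refine ⟨Finset.insert_subset hw hTW, ?_⟩
      intro u hu v hv huv
      rw [Finset.mem_insert] at hu hv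
      rcases hu with rfl | hu <;> rcases hv with rfl | hv
      · exact absurd rfl huv
      · rw [effRes_comm]; exact hfar v hv
      · exact hfar u hu
      · exact hTsep u hu v hv huv
    have := hmax _ hins
    rw [Finset.card_insert_of_notMem hwT] at this
    omega
  have hself : ∀ v ∈ T, insert v (B v) = B v := by
    intro v hv
    refine Finset.insert_eq_of_mem (Finset.mem_filter.2 ⟨hTW hv, ?_⟩)
    unfold effRes
    simp
  obtain ⟨v, hv, hBv⟩ : ∃ v ∈ T, Real.sqrt n ≤ (B v).card := by
    by_contra hno
    push Not at hno
    have h1 : (n : ℝ) ≤ ∑ v ∈ T, ((insert v (B v)).card : ℝ) := by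
      exact_mod_cast (Finset.card_le_card hcov).trans Finset.card_biUnion_le
    have h2 : ∑ v ∈ T, ((insert v (B v)).card : ℝ) ≤ T.card • Real.sqrt n := by
      refine Finset.sum_le_card_nsmul _ _ _ fun v hv => ?_
      rw [hself v hv]
      exact (hno v hv).le
    rw [nsmul_eq_mul] at h2
    have h3 : (T.card : ℝ) * Real.sqrt n < Real.sqrt n * Real.sqrt n :=
      mul_lt_mul_of_pos_right hlt hsq
    rw [Real.mul_self_sqrt (by linarith)] at h3
    linarith
  have hB2 : 2 ≤ (B v).card := by
    have h1 : (1:ℝ) < Real.sqrt n := by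
      rw [Real.lt_sqrt (by norm_num)]; linarith
    have : (1:ℝ) < (B v).card := lt_of_lt_of_le h1 hBv
    exact_mod_cast this
  have hfin := res_growth_log G M hM1 hdeg z rad hp (B v) hB2 v ρ hρ0.le (by
    intro w hw f
    exact of_effRes_lt G hG v w ρ hρ0.le (Finset.mem_filter.1 hw).2 f)
  have hl : Real.log n / 2 ≤ Real.log (B v).card := by
    rw [← Real.log_sqrt (by linarith)]
    exact Real.log_le_log hsq hBv
  have : gconst M * (Real.log n / 2) ≤ ρ := (mul_le_mul_of_nonneg_left hl hg0.le).trans hfin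
  have : 0 < gconst M * Real.log n := by positivity
  rw [hρ] at *
  linarith
end
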